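/- arXiv:2412.14267 — 12 statements merged into one kernel-verified Lean document; each statement's English description precedes it below -/
import Mathlib

section
/- As x → ∞, uniformly on D, b(g(x,y)) = a∞·x^β + o(x^{(3β−1)/2}) and b′(g(x,y)) = a∞·β·x^{β−1} + o(x^{(3β−3)/2}). -/
open Filter Topology

/-- `F(x,y) = o(x^a)` as `x → ∞`, uniformly over `{y : ‖y‖ ≤ b x}` (the slice of the
domain `D`). -/
def UnifLittleO {d : ℕ} (b : ℝ → ℝ) (F : ℝ → EuclideanSpace ℝ (Fin d) → ℝ) (a : ℝ) :
    Prop :=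
  ∀ ε : ℝ, 0 < ε → ∃ X : ℝ, ∀ x ≥ X, ∀ y : EuclideanSpace ℝ (Fin d), ‖y‖ ≤ b x →
    |F x y| ≤ ε * x ^ a

theorem aux_rpow_le (p x t : ℝ) (hx : 0 < x) (h1 : x ≤ t) (h2 : t ≤ 2 * x) :
    t ^ p ≤ 2 ^ |p| * x ^ p := by
  have ht : 0 < t := lt_of_lt_of_le hx h1
  rcases le_total 0 p with hp | hp
  · rw [abs_of_nonneg hp, ← Real.mul_rpow (by norm_num) hx.le]
    exact Real.rpow_le_rpow ht.le h2 hp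
  · have h3 : t ^ p ≤ x ^ p := Real.rpow_le_rpow_of_nonpos hx h1 hp
    have h4 : (1 : ℝ) ≤ 2 ^ |p| := Real.one_le_rpow (by norm_num) (abs_nonneg p)
    have h5 : 0 < x ^ p := Real.rpow_pos_of_pos hx p
    nlinarith

theorem aux_rpow_sub (p x t : ℝ) (hx : 0 < x) (h1 : x ≤ t) (h2 : t ≤ 2 * x) :
    |t ^ p - x ^ p| ≤ |p| * (2 ^ |p - 1| * x ^ (p - 1)) * (t - x) := by
  have := (convex_Icc x t).norm_image_sub_le_of_norm_hasDerivWithin_le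
    (f := fun u : ℝ => u ^ p) (f' := fun u => p * u ^ (p - 1))
    (C := |p| * (2 ^ |p - 1| * x ^ (p - 1)))
    (fun u hu => (Real.hasDerivAt_rpow_const
      (Or.inl (lt_of_lt_of_le hx hu.1).ne')).hasDerivWithinAt)
    (fun u hu => by
      have hu0 : 0 < u := lt_of_lt_of_le hx hu.1
      rw [Real.norm_eq_abs, abs_mul, abs_of_pos (Real.rpow_pos_of_pos hu0 _)]
      exact mul_le_mul_of_nonneg_left (aux_rpow_le _ x u hx hu.1 (hu.2.trans h2)) (abs_nonneg p))
    (Set.left_mem_Icc.2 h1) (Set.right_mem_Icc.2 h1)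
  simpa [Real.norm_eq_abs, abs_of_nonneg (sub_nonneg.2 h1)] using this

theorem aux_small (r C ε : ℝ) (hr : r < 0) (hε : 0 < ε) :
    ∀ᶠ x : ℝ in atTop, C * x ^ r ≤ ε := by
  have h := (tendsto_rpow_neg_atTop (neg_pos.2 hr)).const_mul C
  simp only [neg_neg, mul_zero] at h
  exact (h.eventually (gt_mem_nhds hε)).mono fun x hx => hx.le

theorem aux_main (c p q β K : ℝ) (F : ℝ → ℝ) (hβ1 : β < 1) (hpq : p - 1 + β < q)
    (hF : Tendsto (fun x : ℝ => F x / x ^ q) atTop (𝓝 0)) (ε : ℝ) (hε : 0 < ε) :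
    ∀ᶠ x : ℝ in atTop, ∀ t, x ≤ t → t ≤ x + K * x ^ β →
      |c * t ^ p + F t - c * x ^ p| ≤ ε * x ^ q := by
  have hδ : 0 < ε / 2 / 2 ^ |q| := by positivity
  have hF1 : ∀ᶠ x : ℝ in atTop, |F x / x ^ q| < ε / 2 / 2 ^ |q| := by
    have := hF.abs
    rw [abs_zero] at this
    exact this.eventually (gt_mem_nhds hδ)
  obtain ⟨X, hX⟩ := eventually_atTop.1 hF1
  filter_upwards [eventually_ge_atTop X, eventually_gt_atTop 0,
    aux_small (β - 1) K 1 (by linarith) one_pos,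
    aux_small (p - 1 + β - q) (|c| * |p| * 2 ^ |p - 1| * K) (ε / 2) (by linarith) (by linarith)]
    with x hxX hx hs1 hs2 t h1 h2
  have ht : 0 < t := lt_of_lt_of_le hx h1
  have e1 : x ^ β = x ^ (β - 1) * x := by
    rw [← Real.rpow_add_one hx.ne']; congr 1; ring
  have h3 : t ≤ 2 * x := by
    rw [e1] at h2; nlinarith
  have hFt : |F t| ≤ ε / 2 * x ^ q := by
    have h4 := hX t (hxX.trans h1)
    have h5 := aux_rpow_le q x t hx h1 h3
    have h6 : 0 < t ^ q := Real.rpow_pos_of_pos ht q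
    rw [abs_div, abs_of_pos h6, div_lt_iff₀ h6] at h4
    calc |F t| ≤ ε / 2 / 2 ^ |q| * t ^ q := h4.le
      _ ≤ ε / 2 / 2 ^ |q| * (2 ^ |q| * x ^ q) := by gcongr
      _ = ε / 2 * x ^ q := by field_simp
  have hP : |c * t ^ p - c * x ^ p| ≤ ε / 2 * x ^ q := by
    rw [← mul_sub, abs_mul]
    have e2 : x ^ (p - 1) * x ^ β = x ^ (p - 1 + β - q) * x ^ q := by
      rw [← Real.rpow_add hx, ← Real.rpow_add hx]; congr 1; ring
    have hq : 0 < x ^ q := Real.rpow_pos_of_pos hx q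
    calc |c| * |t ^ p - x ^ p|
        ≤ |c| * (|p| * (2 ^ |p - 1| * x ^ (p - 1)) * (t - x)) := by
          gcongr; exact aux_rpow_sub p x t hx h1 h3
      _ ≤ |c| * (|p| * (2 ^ |p - 1| * x ^ (p - 1)) * (K * x ^ β)) := by
          gcongr; linarith
      _ = |c| * |p| * 2 ^ |p - 1| * K * (x ^ (p - 1) * x ^ β) := by ring
      _ = |c| * |p| * 2 ^ |p - 1| * K * x ^ (p - 1 + β - q) * x ^ q := by rw [e2]; ring
      _ ≤ ε / 2 * x ^ q := by gcongr
  have := abs_add_le (c * t ^ p - c * x ^ p) (F t)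
  have e3 : c * t ^ p + F t - c * x ^ p = c * t ^ p - c * x ^ p + F t := by ring
  rw [e3]; linarith

/-- Under assumption (D₂⁺), with `g(x,y) = x + (s₀/(2c₀))·|y|²/b(x)`,
one has, uniformly on `D` as `x → ∞`,
`b(g(x,y)) = a∞·x^β + o(x^{(3β-1)/2})` and `b′(g(x,y)) = a∞·β·x^{β-1} + o(x^{(3β-3)/2})`. -/
theorem stmt_2 (d : ℕ) (hd : 1 ≤ d) (β ainf s₀ c₀ : ℝ)
    (hβ : -1 < β) (hβ1 : β < 1) (ha : 0 < ainf) (hs₀ : 0 < s₀) (hc₀ : 0 < c₀)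
    (b b' f f' f'' : ℝ → ℝ)
    (hbpos : ∀ x : ℝ, 0 < x → 0 < b x)
    (hbnonneg : ∀ x : ℝ, 0 ≤ x → 0 ≤ b x)
    (hbC2 : ContDiffOn ℝ 2 b (Set.Ioi 0))
    (hb' : ∀ x : ℝ, 0 < x → HasDerivAt b (b' x) x)
    (hbf : ∀ x : ℝ, 0 < x → b x = ainf * x ^ β + f x)
    (hf' : ∀ x : ℝ, 0 < x → HasDerivAt f (f' x) x)
    (hf'' : ∀ x : ℝ, 0 < x → HasDerivAt f' (f'' x) x)
    (hfo : Tendsto (fun x : ℝ => f x / x ^ ((3 * β - 1) / 2)) atTop (𝓝 0))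
    (hf'o : Tendsto (fun x : ℝ => f' x / x ^ ((3 * β - 3) / 2)) atTop (𝓝 0))
    (hf''o : Tendsto (fun x : ℝ => f'' x / x ^ ((3 * β - 5) / 2)) atTop (𝓝 0)) :
    UnifLittleO (d := d) b
      (fun x y => b (x + s₀ / (2 * c₀) * ‖y‖ ^ 2 / b x) - ainf * x ^ β)
      ((3 * β - 1) / 2) ∧
    UnifLittleO (d := d) b
      (fun x y => b' (x + s₀ / (2 * c₀) * ‖y‖ ^ 2 / b x) - ainf * β * x ^ (β - 1))
      ((3 * β - 3) / 2) := by
  have hb'' : ∀ x : ℝ, 0 < x → b' x = ainf * β * x ^ (β - 1) + f' x := by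
    intro x hx
    have h1 : HasDerivAt (fun u : ℝ => ainf * u ^ β + f u)
        (ainf * (β * x ^ (β - 1)) + f' x) x :=
      ((Real.hasDerivAt_rpow_const (Or.inl hx.ne')).const_mul ainf).add (hf' x hx)
    have h2 : b =ᶠ[𝓝 x] (fun u : ℝ => ainf * u ^ β + f u) := by
      filter_upwards [lt_mem_nhds hx] with u hu using hbf u hu
    rw [(hb' x hx).unique (h1.congr_of_eventuallyEq h2)]
    ring
  set k := s₀ / (2 * c₀) with hk
  have hk0 : 0 < k := by positivity
  have hb1 : ∀ᶠ x : ℝ in atTop, b x ≤ (ainf + 1) * x ^ β := by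
    have h0 : ∀ᶠ x : ℝ in atTop, |f x / x ^ ((3 * β - 1) / 2)| < 1 := by
      have := hfo.abs
      rw [abs_zero] at this
      exact this.eventually (gt_mem_nhds one_pos)
    filter_upwards [h0, eventually_ge_atTop 1] with x h hx
    have hx0 : 0 < x := by linarith
    have h6 : 0 < x ^ ((3 * β - 1) / 2) := Real.rpow_pos_of_pos hx0 _
    rw [abs_div, abs_of_pos h6, div_lt_iff₀ h6, one_mul] at h
    have h7 : x ^ ((3 * β - 1) / 2) ≤ x ^ β :=
      Real.rpow_le_rpow_of_exponent_le hx (by linarith)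
    rw [hbf x hx0]
    have := le_abs_self (f x)
    linarith
  have hg : ∀ x : ℝ, 0 < x → b x ≤ (ainf + 1) * x ^ β →
      ∀ y : EuclideanSpace ℝ (Fin d), ‖y‖ ≤ b x →
      x ≤ x + k * ‖y‖ ^ 2 / b x ∧
        x + k * ‖y‖ ^ 2 / b x ≤ x + (k * (ainf + 1)) * x ^ β := by
    intro x hx hbx y hy
    have hbp := hbpos x hx
    refine ⟨le_add_of_nonneg_right (by positivity), ?_⟩
    have h1 : k * ‖y‖ ^ 2 / b x ≤ k * b x := by
      rw [div_le_iff₀ hbp]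
      have : ‖y‖ ^ 2 ≤ b x ^ 2 := by gcongr
      nlinarith
    have h2 : k * b x ≤ k * ((ainf + 1) * x ^ β) := by gcongr
    linarith
  constructor
  · intro ε hε
    obtain ⟨X, hX⟩ := eventually_atTop.1 (((aux_main ainf β ((3 * β - 1) / 2) β
      (k * (ainf + 1)) f hβ1 (by linarith) hfo ε hε).and hb1).and (eventually_gt_atTop 0))
    refine ⟨X, fun x hx y hy => ?_⟩
    obtain ⟨⟨h1, h2⟩, h3⟩ := hX x hx
    obtain ⟨h4, h5⟩ := hg x h3 h2 y hy
    have := h1 _ h4 h5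
    rw [← hbf _ (lt_of_lt_of_le h3 h4)] at this
    exact this
  · intro ε hε
    obtain ⟨X, hX⟩ := eventually_atTop.1 (((aux_main (ainf * β) (β - 1) ((3 * β - 3) / 2) β
      (k * (ainf + 1)) f' hβ1 (by linarith) hf'o ε hε).and hb1).and (eventually_gt_atTop 0))
    refine ⟨X, fun x hx y hy => ?_⟩
    obtain ⟨⟨h1, h2⟩, h3⟩ := hX x hx
    obtain ⟨h4, h5⟩ := hg x h3 h2 y hy
    have := h1 _ h4 h5
    rw [← hb'' _ (lt_of_lt_of_le h3 h4)] at this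
    exact this
end

section
/- As x → ∞, uniformly on D, ⟨∇g(x,y), Σ(x,y)·∇g(x,y)⟩ = Σ^∞_{0,0} + (2s₀/(c₀·a∞))·x^{−β}·Σ_{i=1}^d Σ^∞_{0,i}·y_i + (s₀²/(c₀²·a∞²))·x^{−2β}·Σ_{i,j=1}^d Σ^∞_{i,j}·y_i·y_j + o(1). -/
open Filter Topology

/-- The gradient `∇g(x,y) = (1 - (s₀/(2c₀))|y|²b′(x)/b(x)², (s₀/c₀)y/b(x)) ∈ ℝ^{1+d}`
of `g(x,y) = x + (s₀/(2c₀))|y|²/b(x)`, with coordinate `0` the `x`-direction. -/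
noncomputable def gradg {d : ℕ} (b b' : ℝ → ℝ) (s₀ c₀ : ℝ)
    (x : ℝ) (y : EuclideanSpace ℝ (Fin d)) : Fin (d + 1) → ℝ :=
  Fin.cons (1 - s₀ / (2 * c₀) * ‖y‖ ^ 2 * b' x / (b x) ^ 2)
    (fun i => s₀ / c₀ * y i / b x)

/-- Under (D₂⁺) and (C⁺), uniformly on `D` as `x → ∞`,
`⟨∇g, Σ∇g⟩ = Σ^∞₀₀ + (2s₀/(c₀a∞))x^{-β}∑ᵢΣ^∞₀ᵢyᵢ
  + (s₀²/(c₀²a∞²))x^{-2β}∑ᵢⱼΣ^∞ᵢⱼyᵢyⱼ + o(1)`. -/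
theorem stmt_4 (d : ℕ) (hd : 1 ≤ d) (β ainf s₀ c₀ : ℝ)
    (hβ : -1 < β) (hβ1 : β < 1) (ha : 0 < ainf) (hs₀ : 0 < s₀) (hc₀ : 0 < c₀)
    (b b' f f' f'' : ℝ → ℝ)
    (hbpos : ∀ x : ℝ, 0 < x → 0 < b x)
    (hbnonneg : ∀ x : ℝ, 0 ≤ x → 0 ≤ b x)
    (hbC2 : ContDiffOn ℝ 2 b (Set.Ioi 0))
    (hb' : ∀ x : ℝ, 0 < x → HasDerivAt b (b' x) x)
    (hbf : ∀ x : ℝ, 0 < x → b x = ainf * x ^ β + f x)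
    (hf' : ∀ x : ℝ, 0 < x → HasDerivAt f (f' x) x)
    (hf'' : ∀ x : ℝ, 0 < x → HasDerivAt f' (f'' x) x)
    (hfo : Tendsto (fun x : ℝ => f x / x ^ ((3 * β - 1) / 2)) atTop (𝓝 0))
    (hf'o : Tendsto (fun x : ℝ => f' x / x ^ ((3 * β - 3) / 2)) atTop (𝓝 0))
    (hf''o : Tendsto (fun x : ℝ => f'' x / x ^ ((3 * β - 5) / 2)) atTop (𝓝 0))
    -- Assumption (C⁺): bounded, symmetric positive-definite diffusion matrix,
    -- converging (uniformly on `D`) to `Σ^∞`, with fast convergence of the trace.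
    (Smat : ℝ → EuclideanSpace ℝ (Fin d) → Matrix (Fin (d + 1)) (Fin (d + 1)) ℝ)
    (Sinf : Matrix (Fin (d + 1)) (Fin (d + 1)) ℝ)
    (hSbdd : ∃ K : ℝ, ∀ x : ℝ, ∀ y : EuclideanSpace ℝ (Fin d), ‖y‖ ≤ b x →
      ∀ i j : Fin (d + 1), |Smat x y i j| ≤ K)
    (hSpos : ∀ x : ℝ, ∀ y : EuclideanSpace ℝ (Fin d), ‖y‖ ≤ b x → (Smat x y).PosDef)
    (hSinfpos : Sinf.PosDef)
    (hSconv : ∀ ε : ℝ, 0 < ε → ∃ X : ℝ, ∀ x ≥ X,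
      ∀ y : EuclideanSpace ℝ (Fin d), ‖y‖ ≤ b x →
        ∀ i j : Fin (d + 1), |Smat x y i j - Sinf i j| ≤ ε)
    (hStrace : ∀ ε : ℝ, 0 < ε → ∃ X : ℝ, ∀ x ≥ X,
      ∀ y : EuclideanSpace ℝ (Fin d), ‖y‖ ≤ b x →
        x ^ ((1 - β) / 2) *
          |(∑ i : Fin d, Smat x y i.succ i.succ) - ∑ i : Fin d, Sinf i.succ i.succ|
          ≤ ε) :
    UnifLittleO (d := d) b
      (fun x y =>
        (∑ i : Fin (d + 1), ∑ j : Fin (d + 1),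
            gradg b b' s₀ c₀ x y i * Smat x y i j * gradg b b' s₀ c₀ x y j)
          - (Sinf 0 0
            + 2 * s₀ / (c₀ * ainf) * x ^ (-β) * ∑ i : Fin d, Sinf 0 i.succ * y i
            + s₀ ^ 2 / (c₀ ^ 2 * ainf ^ 2) * x ^ (-2 * β) *
                ∑ i : Fin d, ∑ j : Fin d, Sinf i.succ j.succ * y i * y j))
      0 := by
  classical
  have hpow : ∀ e : ℝ, e < 0 → Tendsto (fun x : ℝ => x ^ e) atTop (𝓝 0) := by
    intro e he
    have := tendsto_rpow_neg_atTop (y := -e) (by linarith)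
    simpa using this
  have hb'0 : Tendsto b' atTop (𝓝 0) := by
    have h1 : Tendsto (fun x : ℝ => ainf * (β * x ^ (β - 1))
        + f' x / x ^ ((3 * β - 3) / 2) * x ^ ((3 * β - 3) / 2)) atTop (𝓝 0) := by
      have h2 := (((hpow (β - 1) (by linarith)).const_mul β).const_mul ainf).add
        (hf'o.mul (hpow ((3 * β - 3) / 2) (by linarith)))
      simpa using h2
    refine h1.congr' ?_
    filter_upwards [eventually_gt_atTop 0] with x hx
    have hne : x ^ ((3 * β - 3) / 2) ≠ 0 := (Real.rpow_pos_of_pos hx _).ne'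
    rw [div_mul_cancel₀ _ hne]
    have h3 : HasDerivAt (fun z => ainf * z ^ β + f z) (ainf * (β * x ^ (β - 1)) + f' x) x :=
      ((Real.hasDerivAt_rpow_const (Or.inl hx.ne')).const_mul ainf).add (hf' x hx)
    have h4 : HasDerivAt b (ainf * (β * x ^ (β - 1)) + f' x) x := by
      refine h3.congr_of_eventuallyEq ?_
      filter_upwards [eventually_gt_nhds hx] with z hz using hbf z hz
    exact h4.unique (hb' x hx)
  have hr : Tendsto (fun x => 1 - b x * x ^ (-β) / ainf) atTop (𝓝 0) := by
    have h1 := ((hfo.mul (hpow ((β - 1) / 2) (by linarith))).const_mul (-1 / ainf))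
    simp only [mul_zero] at h1
    refine h1.congr' ?_
    filter_upwards [eventually_gt_atTop 0] with x hx
    have e1 : x ^ ((β - 1) / 2) / x ^ ((3 * β - 1) / 2) = x ^ (-β) := by
      rw [← Real.rpow_sub hx]; congr 1; ring
    have e2 : x ^ β * x ^ (-β) = 1 := by
      rw [← Real.rpow_add hx]; simp
    rw [hbf x hx, div_mul_eq_mul_div (f x), mul_div_assoc (f x), e1, add_mul, mul_assoc ainf, e2]
    field_simp
    ring
  let L : Filter (ℝ × EuclideanSpace ℝ (Fin d)) :=
    comap Prod.fst atTop ⊓ 𝓟 {p | ‖p.2‖ ≤ b p.1}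
  have hL1 : Tendsto (Prod.fst : ℝ × EuclideanSpace ℝ (Fin d) → ℝ) L atTop :=
    tendsto_comap.mono_left inf_le_left
  have hL2 : ∀ᶠ p in L, ‖p.2‖ ≤ b p.1 := mem_inf_of_right (mem_principal_self _)
  have hLpos : ∀ᶠ p in L, 0 < p.1 := hL1.eventually (eventually_gt_atTop 0)
  let H : ℝ × EuclideanSpace ℝ (Fin d) → Fin (d + 1) → ℝ := fun p =>
    Fin.cons 1 (fun i => s₀ / c₀ * (p.1 ^ (-β) / ainf) * p.2 i)
  let G : ℝ × EuclideanSpace ℝ (Fin d) → Fin (d + 1) → ℝ := fun p =>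
    gradg b b' s₀ c₀ p.1 p.2
  have hS0 : ∀ i j, (fun p : ℝ × EuclideanSpace ℝ (Fin d) => Smat p.1 p.2 i j - Sinf i j)
      =o[L] (fun _ => (1 : ℝ)) := by
    intro i j
    rw [Asymptotics.isLittleO_iff]
    intro ε hε
    obtain ⟨X, hX⟩ := hSconv ε hε
    filter_upwards [hL2, hL1.eventually (eventually_ge_atTop X)] with p h1 h2
    simpa using hX p.1 h2 p.2 h1 i j
  have hGH : ∀ i, (fun p => G p i - H p i) =o[L] (fun _ => (1 : ℝ)) := by
    intro i
    refine Fin.cases ?_ (fun i => ?_) i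
    · have h1 : (fun p : ℝ × EuclideanSpace ℝ (Fin d) => (‖p.2‖ / b p.1) ^ 2)
          =O[L] (fun _ => (1 : ℝ)) := by
        refine Asymptotics.IsBigO.of_bound 1 ?_
        filter_upwards [hL2, hLpos] with p h1 h2
        have hb := hbpos _ h2
        have h3 : ‖p.2‖ / b p.1 ≤ 1 := (div_le_one hb).2 h1
        have h4 : 0 ≤ ‖p.2‖ / b p.1 := by positivity
        rw [Real.norm_of_nonneg (by positivity)]
        simp only [norm_one, mul_one]
        exact pow_le_one₀ h4 h3
      have h2 : (fun p : ℝ × EuclideanSpace ℝ (Fin d) => b' p.1) =o[L] (fun _ => (1 : ℝ)) :=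
        (Asymptotics.isLittleO_one_iff ℝ).2 (hb'0.comp hL1)
      have h3 := (h1.mul_isLittleO h2).const_mul_left (-(s₀ / (2 * c₀)))
      simp only [mul_one] at h3
      refine h3.congr_left ?_
      intro p
      simp only [G, H, gradg, Fin.cons_zero, div_pow]
      ring
    · have h1 : (fun p : ℝ × EuclideanSpace ℝ (Fin d) => p.2 i / b p.1)
          =O[L] (fun _ => (1 : ℝ)) := by
        refine Asymptotics.IsBigO.of_bound 1 ?_
        filter_upwards [hL2, hLpos] with p h1 h2
        have hb := hbpos _ h2
        rw [norm_div, Real.norm_of_nonneg hb.le, norm_one, mul_one, div_le_one hb]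
        exact (PiLp.norm_apply_le p.2 i).trans h1
      have h2 : (fun p : ℝ × EuclideanSpace ℝ (Fin d) => 1 - b p.1 * p.1 ^ (-β) / ainf)
          =o[L] (fun _ => (1 : ℝ)) :=
        (Asymptotics.isLittleO_one_iff ℝ).2 (hr.comp hL1)
      have h3 := (h1.mul_isLittleO h2).const_mul_left (s₀ / c₀)
      simp only [mul_one] at h3
      refine h3.congr' ?_ EventuallyEq.rfl
      filter_upwards [hLpos] with p hp
      have hb := (hbpos _ hp).ne'
      simp only [G, H, gradg, Fin.cons_succ]
      field_simp
  have hGO : ∀ i, (fun p => G p i) =O[L] (fun _ => (1 : ℝ)) := by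
    intro i
    refine Fin.cases ?_ (fun i => ?_) i
    · have h1 := (hGH 0).isBigO.add (Asymptotics.isBigO_refl (fun _ => (1 : ℝ)) L)
      refine h1.congr_left ?_
      intro p
      simp [H]
    · refine Asymptotics.IsBigO.of_bound (s₀ / c₀) ?_
      filter_upwards [hL2, hLpos] with p h1 h2
      have hb := hbpos _ h2
      have h3 : ‖p.2 i‖ / b p.1 ≤ 1 := (div_le_one hb).2 ((PiLp.norm_apply_le p.2 i).trans h1)
      have hsc : 0 < s₀ / c₀ := by positivity
      simp only [G, gradg, Fin.cons_succ]
      rw [mul_div_assoc, norm_mul, Real.norm_of_nonneg hsc.le, norm_div,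
        Real.norm_of_nonneg hb.le, norm_one]
      exact mul_le_mul_of_nonneg_left h3 hsc.le
  have hHO : ∀ i, (fun p => H p i) =O[L] (fun _ => (1 : ℝ)) := by
    intro i
    refine ((hGO i).sub (hGH i).isBigO).congr_left ?_
    intro p; ring
  have hmain : (fun p => ∑ i, ∑ j,
      (G p i * Smat p.1 p.2 i j * G p j - H p i * Sinf i j * H p j))
      =o[L] (fun _ => (1 : ℝ)) := by
    refine Asymptotics.IsLittleO.fun_sum fun i _ => Asymptotics.IsLittleO.fun_sum fun j _ => ?_
    have h1 := ((hGO i).mul_isLittleO (hS0 i j)).mul_isBigO (hGO j)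
    have h2 := ((hGH i).mul_isBigO (hGO j)).const_mul_left (Sinf i j)
    have h3 := ((hHO i).mul_isLittleO (hGH j)).const_mul_left (Sinf i j)
    simp only [mul_one] at h1 h2 h3
    refine ((h1.add h2).add h3).congr_left ?_
    intro p; ring
  have hsym : ∀ i j, Sinf i j = Sinf j i := by
    intro i j
    have := hSinfpos.isHermitian.apply i j
    simpa using this.symm
  have hHsum : ∀ p : ℝ × EuclideanSpace ℝ (Fin d), 0 < p.1 →
      ∑ i, ∑ j, H p i * Sinf i j * H p j = Sinf 0 0
            + 2 * s₀ / (c₀ * ainf) * p.1 ^ (-β) * ∑ i : Fin d, Sinf 0 i.succ * p.2 i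
            + s₀ ^ 2 / (c₀ ^ 2 * ainf ^ 2) * p.1 ^ (-2 * β) *
                ∑ i : Fin d, ∑ j : Fin d, Sinf i.succ j.succ * p.2 i * p.2 j := by
    intro p hp
    have e1 : p.1 ^ (-2 * β) = p.1 ^ (-β) * p.1 ^ (-β) := by
      rw [← Real.rpow_add hp]; congr 1; ring
    rw [Fin.sum_univ_succ, Fin.sum_univ_succ]
    simp only [Fin.sum_univ_succ (n := d), H, Fin.cons_zero, Fin.cons_succ]
    rw [Finset.sum_add_distrib, e1]
    simp only [hsym (Fin.succ _) 0, Finset.mul_sum, one_mul, mul_one]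
    rw [add_assoc, add_assoc]
    congr 1
    rw [← add_assoc, ← Finset.sum_add_distrib]
    congr 1
    · refine Finset.sum_congr rfl fun i _ => ?_
      field_simp
      ring
    · refine Finset.sum_congr rfl fun i _ => Finset.sum_congr rfl fun j _ => ?_
      field_simp
  intro ε hε
  have hev := (Asymptotics.isLittleO_iff.1 hmain) hε
  have hev2 := hev.and hLpos
  rw [eventually_inf_principal, eventually_comap] at hev2
  obtain ⟨X, hX⟩ := eventually_atTop.1 hev2
  refine ⟨X, fun x hx y hy => ?_⟩
  obtain ⟨h1, h2⟩ := hX x hx (x, y) rfl hy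
  rw [Real.rpow_zero]
  have h3 := hHsum (x, y) h2
  simp only [Finset.sum_sub_distrib] at h1
  rw [h3] at h1
  simpa [G] using h1
end

section
/- As x → ∞, uniformly on D, Δ_Σ g(x,y) = (s₀·σ̄²/(c₀·a∞))·x^{−β} + o(x^{−(1+β)/2}). -/
open Filter Topology

/-- The Hessian matrix `(∂ᵢ∂ⱼ g)_{i,j=0,…,d}` of `g(x,y) = x + (s₀/(2c₀))|y|²/b(x)`
(`∂₀ = ∂ₓ`, `∂ᵢ = ∂_{yᵢ}` for `i ≥ 1`):
`∂ₓ∂ₓg = (s₀/(2c₀))|y|²(2b′(x)²/b(x)³ - b″(x)/b(x)²)`,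
`∂ₓ∂_{yᵢ}g = -(s₀/c₀)yᵢb′(x)/b(x)²`, `∂_{yᵢ}∂_{yⱼ}g = (s₀/c₀)δᵢⱼ/b(x)`. -/
noncomputable def hessg {d : ℕ} (b b' b'' : ℝ → ℝ) (s₀ c₀ : ℝ)
    (x : ℝ) (y : EuclideanSpace ℝ (Fin d)) : Fin (d + 1) → Fin (d + 1) → ℝ :=
  Fin.cons
    (Fin.cons
      (s₀ / (2 * c₀) * ‖y‖ ^ 2 * (2 * (b' x) ^ 2 / (b x) ^ 3 - b'' x / (b x) ^ 2))
      (fun j => -(s₀ / c₀) * y j * b' x / (b x) ^ 2))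
    (fun i => Fin.cons (-(s₀ / c₀) * y i * b' x / (b x) ^ 2)
      (fun j => if i = j then s₀ / c₀ / b x else 0))

lemma aux_rpow (β x : ℝ) (hx : 0 < x) :
    x ^ (β - 1) = (x ^ ((β - 1) / 2)) ^ 2 ∧
    x ^ (β - 2) = (x ^ ((β - 1) / 2)) ^ 4 / x ^ β ∧
    x ^ (-(1 + β) / 2) = x ^ ((β - 1) / 2) / x ^ β ∧
    x ^ ((3 * β - 1) / 2) = x ^ β * x ^ ((β - 1) / 2) ∧
    x ^ ((3 * β - 3) / 2) = (x ^ ((β - 1) / 2)) ^ 3 ∧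
    x ^ ((3 * β - 5) / 2) = (x ^ ((β - 1) / 2)) ^ 5 / x ^ β ∧
    x ^ ((1 - β) / 2) = 1 / x ^ ((β - 1) / 2) ∧
    x ^ (-β) = 1 / x ^ β := by
  have e : ∀ n : ℕ, (x ^ ((β - 1) / 2)) ^ n = x ^ ((β - 1) / 2 * n) := fun n => by
    rw [Real.rpow_mul hx.le, Real.rpow_natCast]
  refine ⟨?_, ?_, ?_, ?_, ?_, ?_, ?_, ?_⟩
  · rw [e]; congr 1; push_cast; ring
  · rw [e, ← Real.rpow_sub hx]; congr 1; push_cast; ring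
  · rw [← Real.rpow_sub hx]; congr 1; ring
  · rw [← Real.rpow_add hx]; congr 1; ring
  · rw [e]; congr 1; push_cast; ring
  · rw [e, ← Real.rpow_sub hx]; congr 1; push_cast; ring
  · rw [one_div, ← Real.rpow_neg hx.le]; congr 1; ring
  · rw [one_div, ← Real.rpow_neg hx.le]

lemma aux_sum {d : ℕ} (b b' b'' : ℝ → ℝ) (s₀ c₀ x : ℝ) (y : EuclideanSpace ℝ (Fin d))
    (S : Matrix (Fin (d + 1)) (Fin (d + 1)) ℝ) :
    (∑ i : Fin (d + 1), ∑ j : Fin (d + 1), S i j * hessg b b' b'' s₀ c₀ x y i j) =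
    S 0 0 * (s₀ / (2 * c₀) * ‖y‖ ^ 2 * (2 * (b' x) ^ 2 / (b x) ^ 3 - b'' x / (b x) ^ 2))
    + ∑ j : Fin d, (S 0 j.succ + S j.succ 0) * (-(s₀ / c₀) * y j * b' x / (b x) ^ 2)
    + (s₀ / c₀ / b x) * ∑ i : Fin d, S i.succ i.succ := by
  simp only [Fin.sum_univ_succ, hessg, Fin.cons_zero, Fin.cons_succ, mul_ite, mul_zero,
    Finset.sum_ite_eq, Finset.mem_univ, if_true, Finset.sum_add_distrib, add_mul, Finset.mul_sum]
  simp only [mul_comm (s₀ / c₀ / b x)]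
  ring

/-- pointwise bound in normalized variables -/
lemma aux_point {d : ℕ} (b b' b'' : ℝ → ℝ) (s₀ c₀ a x K σ P p u0 u1 u2 v δ : ℝ)
    (y : EuclideanSpace ℝ (Fin d))
    (S : Matrix (Fin (d + 1)) (Fin (d + 1)) ℝ)
    (hs : 0 < s₀) (hc : 0 < c₀) (ha : 0 < a) (hP : 0 < P) (hp : 0 < p) (hu0 : 0 < u0)
    (hb : b x = P * u0) (hb' : b' x = p ^ 2 * u1) (hb'' : b'' x = p ^ 4 / P * u2)
    (hv : u0 = a + p * v)
    (hy : ‖y‖ ≤ b x) (hS : ∀ i j, |S i j| ≤ K)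
    (htr : 1 / p * |(∑ i : Fin d, S i.succ i.succ) - σ| ≤ δ) :
    |(∑ i : Fin (d + 1), ∑ j : Fin (d + 1), S i j * hessg b b' b'' s₀ c₀ x y i j)
        - s₀ * σ / (c₀ * a) * (1 / P)| ≤
      (K * (s₀ / (2 * c₀)) * (p ^ 3 * (2 * u1 ^ 2 / u0 + |u2|))
        + d * (2 * K * (s₀ / c₀)) * (p * (|u1| / u0))
        + s₀ / c₀ * (|σ| * (|v| / (a * u0))) + s₀ / c₀ / u0 * δ) * (p / P) := by
  have hb0 : 0 < b x := by rw [hb]; positivity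
  have hK : 0 ≤ K := (abs_nonneg _).trans (hS 0 0)
  rw [aux_sum]
  have h1 : |S 0 0 * (s₀ / (2 * c₀) * ‖y‖ ^ 2 *
      (2 * (b' x) ^ 2 / (b x) ^ 3 - b'' x / (b x) ^ 2))| ≤
      K * (s₀ / (2 * c₀)) * (p ^ 3 * (2 * u1 ^ 2 / u0 + |u2|)) * (p / P) := by
    have hin : |2 * (b' x) ^ 2 / (b x) ^ 3 - b'' x / (b x) ^ 2| ≤
        2 * (b' x) ^ 2 / (b x) ^ 3 + |b'' x| / (b x) ^ 2 := by
      refine (abs_sub _ _).trans (le_of_eq ?_)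
      rw [abs_of_nonneg (by positivity : 0 ≤ 2 * (b' x) ^ 2 / (b x) ^ 3), abs_div,
        abs_of_pos (by positivity : 0 < b x ^ 2)]
    rw [abs_mul, abs_mul, abs_of_nonneg (by positivity : 0 ≤ s₀ / (2 * c₀) * ‖y‖ ^ 2)]
    calc _ ≤ K * (s₀ / (2 * c₀) * (b x) ^ 2 *
          (2 * (b' x) ^ 2 / (b x) ^ 3 + |b'' x| / (b x) ^ 2)) := by
          gcongr
          exact hS 0 0
      _ = _ := by
          rw [hb, hb', hb'', abs_mul, abs_of_pos (by positivity : 0 < p ^ 4 / P)]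
          field_simp
  have h2 : |∑ j : Fin d, (S 0 j.succ + S j.succ 0) * (-(s₀ / c₀) * y j * b' x / (b x) ^ 2)| ≤
      d * (2 * K * (s₀ / c₀)) * (p * (|u1| / u0)) * (p / P) := by
    refine (Finset.abs_sum_le_sum_abs _ _).trans ?_
    have : ∀ j ∈ (Finset.univ : Finset (Fin d)),
        |(S 0 j.succ + S j.succ 0) * (-(s₀ / c₀) * y j * b' x / (b x) ^ 2)| ≤
        (2 * K * (s₀ / c₀)) * (p * (|u1| / u0)) * (p / P) := by
      intro j _
      have hyj : |y j| ≤ b x := by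
        have := PiLp.norm_apply_le y j
        rw [Real.norm_eq_abs] at this
        exact this.trans hy
      have hSS : |S 0 j.succ + S j.succ 0| ≤ 2 * K := by
        have := abs_add_le (S 0 j.succ) (S j.succ 0)
        linarith [hS 0 j.succ, hS j.succ 0]
      rw [abs_mul, abs_div, abs_mul, abs_mul, abs_neg, abs_of_pos (by positivity : 0 < s₀ / c₀),
        abs_of_pos (by positivity : 0 < b x ^ 2)]
      calc _ ≤ 2 * K * (s₀ / c₀ * b x * |b' x| / (b x) ^ 2) := by gcongr
        _ = _ := by
          rw [hb, hb', abs_mul, abs_of_pos (by positivity : 0 < p ^ 2)]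
          field_simp
    refine (Finset.sum_le_sum this).trans (le_of_eq ?_)
    simp
    ring
  have h3 : |(s₀ / c₀ / b x) * (∑ i : Fin d, S i.succ i.succ) - s₀ * σ / (c₀ * a) * (1 / P)| ≤
      (s₀ / c₀ * (|σ| * (|v| / (a * u0))) + s₀ / c₀ / u0 * δ) * (p / P) := by
    set T := ∑ i : Fin d, S i.succ i.succ
    have hT : |T - σ| ≤ δ * p := by
      have := mul_le_mul_of_nonneg_right htr hp.le
      calc |T - σ| = 1 / p * |T - σ| * p := by field_simp
        _ ≤ _ := this
    have e : (s₀ / c₀ / b x) * T - s₀ * σ / (c₀ * a) * (1 / P) =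
        s₀ / c₀ / (P * u0) * (T - σ) + -(s₀ / c₀ * (σ * (v / (a * u0))) * (p / P)) := by
      rw [hb]
      have : v = (u0 - a) / p := by rw [hv]; field_simp; ring
      rw [this]
      field_simp
      ring
    rw [e]
    refine (abs_add_le _ _).trans ?_
    rw [abs_neg, abs_mul, abs_mul, abs_mul, abs_mul, abs_div v,
      abs_of_pos (by positivity : 0 < s₀ / c₀ / (P * u0)),
      abs_of_pos (by positivity : 0 < s₀ / c₀), abs_of_pos (by positivity : 0 < a * u0),
      abs_of_pos (by positivity : 0 < p / P)]
    have : s₀ / c₀ / (P * u0) * |T - σ| ≤ s₀ / c₀ / (P * u0) * (δ * p) := by gcongr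
    have e2 : s₀ / c₀ / (P * u0) * (δ * p) = s₀ / c₀ / u0 * δ * (p / P) := by field_simp
    linarith
  rw [add_sub_assoc]
  refine (abs_add_le _ _).trans ?_
  have := abs_add_le (S 0 0 * (s₀ / (2 * c₀) * ‖y‖ ^ 2 *
      (2 * (b' x) ^ 2 / (b x) ^ 3 - b'' x / (b x) ^ 2)))
      (∑ j : Fin d, (S 0 j.succ + S j.succ 0) * (-(s₀ / c₀) * y j * b' x / (b x) ^ 2))
  linarith

/-- Under (D₂⁺) and (C⁺), uniformly on `D` as `x → ∞`,
`Δ_Σ g(x,y) := ∑_{i,j=0}^d Σᵢⱼ(x,y)·∂ᵢ∂ⱼg(x,y)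
  = (s₀σ̄²/(c₀a∞))x^{-β} + o(x^{-(1+β)/2})`, where `σ̄² = ∑_{i=1}^d Σ^∞ᵢᵢ`. -/
theorem stmt_5 (d : ℕ) (hd : 1 ≤ d) (β ainf s₀ c₀ : ℝ)
    (hβ : -1 < β) (hβ1 : β < 1) (ha : 0 < ainf) (hs₀ : 0 < s₀) (hc₀ : 0 < c₀)
    (b b' b'' f f' f'' : ℝ → ℝ)
    (hbpos : ∀ x : ℝ, 0 < x → 0 < b x)
    (hbnonneg : ∀ x : ℝ, 0 ≤ x → 0 ≤ b x)
    (hbC2 : ContDiffOn ℝ 2 b (Set.Ioi 0))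
    (hb' : ∀ x : ℝ, 0 < x → HasDerivAt b (b' x) x)
    (hb'' : ∀ x : ℝ, 0 < x → HasDerivAt b' (b'' x) x)
    (hbf : ∀ x : ℝ, 0 < x → b x = ainf * x ^ β + f x)
    (hf' : ∀ x : ℝ, 0 < x → HasDerivAt f (f' x) x)
    (hf'' : ∀ x : ℝ, 0 < x → HasDerivAt f' (f'' x) x)
    (hfo : Tendsto (fun x : ℝ => f x / x ^ ((3 * β - 1) / 2)) atTop (𝓝 0))
    (hf'o : Tendsto (fun x : ℝ => f' x / x ^ ((3 * β - 3) / 2)) atTop (𝓝 0))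
    (hf''o : Tendsto (fun x : ℝ => f'' x / x ^ ((3 * β - 5) / 2)) atTop (𝓝 0))
    (Smat : ℝ → EuclideanSpace ℝ (Fin d) → Matrix (Fin (d + 1)) (Fin (d + 1)) ℝ)
    (Sinf : Matrix (Fin (d + 1)) (Fin (d + 1)) ℝ)
    (hSbdd : ∃ K : ℝ, ∀ x : ℝ, ∀ y : EuclideanSpace ℝ (Fin d), ‖y‖ ≤ b x →
      ∀ i j : Fin (d + 1), |Smat x y i j| ≤ K)
    (hSpos : ∀ x : ℝ, ∀ y : EuclideanSpace ℝ (Fin d), ‖y‖ ≤ b x → (Smat x y).PosDef)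
    (hSinfpos : Sinf.PosDef)
    (hSconv : ∀ ε : ℝ, 0 < ε → ∃ X : ℝ, ∀ x ≥ X,
      ∀ y : EuclideanSpace ℝ (Fin d), ‖y‖ ≤ b x →
        ∀ i j : Fin (d + 1), |Smat x y i j - Sinf i j| ≤ ε)
    (hStrace : ∀ ε : ℝ, 0 < ε → ∃ X : ℝ, ∀ x ≥ X,
      ∀ y : EuclideanSpace ℝ (Fin d), ‖y‖ ≤ b x →
        x ^ ((1 - β) / 2) *
          |(∑ i : Fin d, Smat x y i.succ i.succ) - ∑ i : Fin d, Sinf i.succ i.succ|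
          ≤ ε) :
    UnifLittleO (d := d) b
      (fun x y =>
        (∑ i : Fin (d + 1), ∑ j : Fin (d + 1),
            Smat x y i j * hessg b b' b'' s₀ c₀ x y i j)
          - s₀ * (∑ i : Fin d, Sinf i.succ i.succ) / (c₀ * ainf) * x ^ (-β))
      (-(1 + β) / 2) := by
  
  obtain ⟨K, hK⟩ := hSbdd
  -- derivatives of b
  have hbd : ∀ x : ℝ, 0 < x → b' x = ainf * (β * x ^ (β - 1)) + f' x := by
    intro x hx
    have h := ((Real.hasDerivAt_rpow_const (p := β) (Or.inl hx.ne')).const_mul ainf).add (hf' x hx)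
    refine (hb' x hx).unique (h.congr_of_eventuallyEq ?_)
    filter_upwards [lt_mem_nhds hx] with z hz
    simpa using hbf z hz
  have hbdd : ∀ x : ℝ, 0 < x →
      b'' x = ainf * (β * ((β - 1) * x ^ (β - 2))) + f'' x := by
    intro x hx
    have h := (((Real.hasDerivAt_rpow_const (p := β - 1) (Or.inl hx.ne')).const_mul
      β).const_mul ainf).add (hf'' x hx)
    rw [show β - 1 - 1 = β - 2 by ring] at h
    refine (hb'' x hx).unique (h.congr_of_eventuallyEq ?_)
    filter_upwards [lt_mem_nhds hx] with z hz
    simpa using hbd z hz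
  have hp : Tendsto (fun x : ℝ => x ^ ((β - 1) / 2)) atTop (𝓝 0) := by
    have := tendsto_rpow_neg_atTop (y := (1 - β) / 2) (by linarith)
    refine this.congr fun x => ?_
    congr 1; ring
  set v := fun x : ℝ => f x / x ^ ((3 * β - 1) / 2) with hv
  set v1 := fun x : ℝ => f' x / x ^ ((3 * β - 3) / 2) with hv1
  set v2 := fun x : ℝ => f'' x / x ^ ((3 * β - 5) / 2) with hv2
  set p := fun x : ℝ => x ^ ((β - 1) / 2) with hpd
  set u0 := fun x : ℝ => ainf + p x * v x with hu0
  set u1 := fun x : ℝ => ainf * β + p x * v1 x with hu1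
  set u2 := fun x : ℝ => ainf * (β * (β - 1)) + p x * v2 x with hu2
  have tu0 : Tendsto u0 atTop (𝓝 ainf) := by
    simpa using (hp.mul hfo).const_add ainf
  have tu1 : Tendsto u1 atTop (𝓝 (ainf * β)) := by
    simpa using (hp.mul hf'o).const_add (ainf * β)
  have tu2 : Tendsto u2 atTop (𝓝 (ainf * (β * (β - 1)))) := by
    simpa using (hp.mul hf''o).const_add (ainf * (β * (β - 1)))
  intro ε hε
  set σ := ∑ i : Fin d, Sinf i.succ i.succ with hσ
  set δ := ε / 2 * (c₀ / s₀ * (ainf / 2)) with hδ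
  have hδpos : 0 < δ := by positivity
  set Φ := fun x : ℝ => K * (s₀ / (2 * c₀)) * (p x ^ 3 * (2 * u1 x ^ 2 / u0 x + |u2 x|))
        + d * (2 * K * (s₀ / c₀)) * (p x * (|u1 x| / u0 x))
        + s₀ / c₀ * (|σ| * (|v x| / (ainf * u0 x))) with hΦ
  have tΦ : Tendsto Φ atTop (𝓝 0) := by
    have hane := ha.ne'
    have t1 := ((hp.pow 3).mul ((((tu1.pow 2).const_mul 2).div tu0 hane).add
      tu2.abs)).const_mul (K * (s₀ / (2 * c₀)))
    have t2 := (hp.mul (tu1.abs.div tu0 hane)).const_mul (d * (2 * K * (s₀ / c₀)))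
    have t3 := ((hfo.abs.div (tu0.const_mul ainf) (by positivity)).const_mul |σ|).const_mul (s₀ / c₀)
    have := (t1.add t2).add t3
    simpa using this
  obtain ⟨X1, hX1⟩ := hStrace δ hδpos
  have ev : ∀ᶠ x in atTop, 0 < x ∧ X1 ≤ x ∧ Φ x < ε / 2 ∧ ainf / 2 < u0 x :=
    (eventually_gt_atTop 0).and ((eventually_ge_atTop X1).and
      ((tΦ.eventually_lt_const (by positivity)).and
        (tu0.eventually_const_lt (by linarith))))
  obtain ⟨X, hX⟩ := eventually_atTop.1 ev
  refine ⟨X, fun x hx y hy => ?_⟩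
  obtain ⟨hx0, hxX1, hΦx, hux⟩ := hX x hx
  obtain ⟨r1, r2, r3, r4, r5, r6, r7, r8⟩ := aux_rpow β x hx0
  have hP : 0 < x ^ β := Real.rpow_pos_of_pos hx0 _
  have hpx : 0 < x ^ ((β - 1) / 2) := Real.rpow_pos_of_pos hx0 _
  have htr := hX1 x hxX1 y hy
  rw [r7] at htr
  have hu0x : 0 < u0 x := by linarith [half_pos ha]
  have key := aux_point b b' b'' s₀ c₀ ainf x K σ (x ^ β) (p x) (u0 x) (u1 x) (u2 x) (v x) δ y
    (Smat x y) hs₀ hc₀ ha hP hpx hu0x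
    (by
      rw [hbf x hx0]; simp only [hu0, hv, hpd]; rw [r4]
      field_simp)
    (by
      rw [hbd x hx0]; simp only [hu1, hv1, hpd]; rw [r5, r1]
      field_simp)
    (by
      rw [hbdd x hx0]; simp only [hu2, hv2, hpd]; rw [r6, r2]
      field_simp)
    rfl hy (hK x y hy) htr
  show |(∑ i : Fin (d + 1), ∑ j : Fin (d + 1), Smat x y i j * hessg b b' b'' s₀ c₀ x y i j)
        - s₀ * σ / (c₀ * ainf) * x ^ (-β)| ≤ ε * x ^ (-(1 + β) / 2)
  rw [r8, r3]
  refine key.trans ?_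
  have hlast : s₀ / c₀ / u0 x * δ ≤ ε / 2 := by
    calc s₀ / c₀ / u0 x * δ ≤ s₀ / c₀ / (ainf / 2) * δ := by gcongr
      _ = ε / 2 := by rw [hδ]; field_simp
  have : 0 < p x / x ^ β := div_pos hpx hP
  refine mul_le_mul_of_nonneg_right ?_ this.le
  have : Φ x + s₀ / c₀ / u0 x * δ ≤ ε := by linarith
  exact this
end

section
/- Define μ(x,y) := (1/2)·( b₀(g(x,y))·Δ_Σ g(x,y) + b₀′(g(x,y))·⟨∇g(x,y), Σ(x,y)·∇g(x,y)⟩ ). Then, as x → ∞, uniformly on D, μ(x,y) = s₀·σ̄²/(2c₀) + o(x^{(β−1)/2}). -/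
open Filter Topology

lemma aux_evb (h : ℝ → ℝ) (p q : ℝ) (hpq : p ≤ q)
    (hh : Tendsto (fun x : ℝ => h x / x ^ p) atTop (𝓝 0)) :
    ∀ᶠ x : ℝ in atTop, |h x| ≤ x ^ q := by
  have h1 : ∀ᶠ x : ℝ in atTop, |h x / x ^ p| < 1 := by
    have := hh.abs
    rw [abs_zero] at this
    exact this.eventually_lt_const one_pos
  filter_upwards [h1, eventually_ge_atTop (1:ℝ)] with x hx hx1
  have hp : 0 < x ^ p := Real.rpow_pos_of_pos (by linarith) p
  rw [abs_div, abs_of_pos hp, div_lt_one hp] at hx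
  exact hx.le.trans (Real.rpow_le_rpow_of_exponent_le hx1 hpq)

lemma aux_asym (β ainf : ℝ) (hβ1 : β < 1) (ha : 0 < ainf)
    (b b' b'' f f' f'' : ℝ → ℝ)
    (hb' : ∀ x : ℝ, 0 < x → HasDerivAt b (b' x) x)
    (hb'' : ∀ x : ℝ, 0 < x → HasDerivAt b' (b'' x) x)
    (hbf : ∀ x : ℝ, 0 < x → b x = ainf * x ^ β + f x)
    (hf' : ∀ x : ℝ, 0 < x → HasDerivAt f (f' x) x)
    (hf'' : ∀ x : ℝ, 0 < x → HasDerivAt f' (f'' x) x)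
    (hfo : Tendsto (fun x : ℝ => f x / x ^ ((3 * β - 1) / 2)) atTop (𝓝 0))
    (hf'o : Tendsto (fun x : ℝ => f' x / x ^ ((3 * β - 3) / 2)) atTop (𝓝 0))
    (hf''o : Tendsto (fun x : ℝ => f'' x / x ^ ((3 * β - 5) / 2)) atTop (𝓝 0)) :
    ∃ C : ℝ, 0 < C ∧ ∃ X : ℝ, 1 < X ∧ ∀ x ≥ X,
      |b x| ≤ C * x ^ β ∧ |b' x| ≤ C * x ^ (β - 1) ∧ |b'' x| ≤ C * x ^ (β - 2) := by
  have e1 : ∀ x : ℝ, 0 < x → b' x = ainf * (β * x ^ (β - 1)) + f' x := by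
    intro x hx
    have h1 : HasDerivAt (fun x : ℝ => ainf * x ^ β + f x)
        (ainf * (β * x ^ (β - 1)) + f' x) x :=
      ((Real.hasDerivAt_rpow_const (Or.inl hx.ne')).const_mul ainf).add (hf' x hx)
    have h2 : HasDerivAt b (ainf * (β * x ^ (β - 1)) + f' x) x := by
      refine h1.congr_of_eventuallyEq ?_
      filter_upwards [lt_mem_nhds hx] with z hz using hbf z hz
    exact (hb' x hx).unique h2
  have e2 : ∀ x : ℝ, 0 < x →
      b'' x = ainf * (β * ((β - 1) * x ^ (β - 1 - 1))) + f'' x := by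
    intro x hx
    have h1 : HasDerivAt (fun x : ℝ => ainf * (β * x ^ (β - 1)) + f' x)
        (ainf * (β * ((β - 1) * x ^ (β - 1 - 1))) + f'' x) x :=
      (((Real.hasDerivAt_rpow_const (Or.inl hx.ne')).const_mul β).const_mul ainf).add
        (hf'' x hx)
    have h2 : HasDerivAt b' (ainf * (β * ((β - 1) * x ^ (β - 1 - 1))) + f'' x) x := by
      refine h1.congr_of_eventuallyEq ?_
      filter_upwards [lt_mem_nhds hx] with z hz using e1 z hz
    exact (hb'' x hx).unique h2
  have a0 := aux_evb f _ β (by linarith) hfo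
  have a1 := aux_evb f' _ (β - 1) (by linarith) hf'o
  have a2 := aux_evb f'' _ (β - 2) (by linarith) hf''o
  obtain ⟨X, hX⟩ := eventually_atTop.1 (a0.and (a1.and a2))
  have p1 : 0 ≤ ainf * |β| := by positivity
  have p2 : 0 ≤ ainf * |β| * |β - 1| := by positivity
  refine ⟨ainf + ainf * |β| + ainf * |β| * |β - 1| + 1, by linarith, max X 2,
    lt_of_lt_of_le one_lt_two (le_max_right _ _), ?_⟩
  intro x hx
  obtain ⟨h0, h1, h2⟩ := hX x (le_trans (le_max_left _ _) hx)
  have hx0 : 0 < x := lt_of_lt_of_le two_pos (le_trans (le_max_right _ _) hx)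
  have q0 := Real.rpow_pos_of_pos hx0 β
  have q1 := Real.rpow_pos_of_pos hx0 (β - 1)
  have q2 := Real.rpow_pos_of_pos hx0 (β - 2)
  refine ⟨?_, ?_, ?_⟩
  · rw [hbf x hx0]
    refine (abs_add_le _ _).trans ?_
    rw [abs_mul, abs_of_pos ha, abs_of_pos q0]
    nlinarith [mul_nonneg p1 q0.le, mul_nonneg p2 q0.le]
  · rw [e1 x hx0]
    refine (abs_add_le _ _).trans ?_
    rw [abs_mul, abs_mul, abs_of_pos ha, abs_of_pos q1]
    nlinarith [mul_nonneg ha.le q1.le, mul_nonneg p2 q1.le]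
  · rw [e2 x hx0, show β - 1 - 1 = β - 2 by ring]
    refine (abs_add_le _ _).trans ?_
    rw [abs_mul, abs_mul, abs_mul, abs_of_pos ha, abs_of_pos q2]
    nlinarith [mul_nonneg ha.le q2.le, mul_nonneg p1 q2.le]

lemma aux_sum_s6 {n : ℕ} (F : Fin n → ℝ) (M : ℝ) (h : ∀ i, |F i| ≤ M) :
    |∑ i, F i| ≤ n * M := by
  refine (Finset.abs_sum_le_sum_abs _ _).trans ?_
  refine (Finset.sum_le_sum (fun i _ => h i)).trans ?_
  simp

lemma aux_coord {d : ℕ} (y : EuclideanSpace ℝ (Fin d)) (i : Fin d) : |y i| ≤ ‖y‖ := by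
  simpa using PiLp.norm_apply_le y i

/-- Pointwise bound on the gradient. -/
lemma aux_grad {d : ℕ} (b b' : ℝ → ℝ) (s₀ c₀ : ℝ) (hs₀ : 0 < s₀) (hc₀ : 0 < c₀) (x C : ℝ)
    (y : EuclideanSpace ℝ (Fin d)) (hB : 0 < b x) (hy : ‖y‖ ≤ b x) (hb' : |b' x| ≤ C)
    (i : Fin (d + 1)) :
    |gradg b b' s₀ c₀ x y i| ≤ 1 + s₀ / (2 * c₀) * C + s₀ / c₀ := by
  have hC : 0 ≤ C := (abs_nonneg _).trans hb'
  have hk : 0 < s₀ / (2 * c₀) := by positivity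
  have hk2 : 0 < s₀ / c₀ := by positivity
  have hkC : 0 ≤ s₀ / (2 * c₀) * C := by positivity
  refine Fin.cases ?_ (fun i => ?_) i
  · simp only [gradg, Fin.cons_zero]
    refine (abs_sub _ _).trans ?_
    have : |s₀ / (2 * c₀) * ‖y‖ ^ 2 * b' x / b x ^ 2| ≤ s₀ / (2 * c₀) * C := by
      rw [abs_div, abs_mul, abs_of_pos (pow_pos hB 2), div_le_iff₀ (pow_pos hB 2),
        abs_of_nonneg (by positivity)]
      have : ‖y‖ ^ 2 ≤ b x ^ 2 := by gcongr
      calc _ ≤ s₀ / (2 * c₀) * b x ^ 2 * C := by gcongr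
        _ = _ := by ring
    rw [abs_one]; linarith
  · simp only [gradg, Fin.cons_succ]
    have : |s₀ / c₀ * y i / b x| ≤ s₀ / c₀ := by
      rw [abs_div, abs_mul, abs_of_pos hB, div_le_iff₀ hB, abs_of_pos hk2]
      gcongr
      exact (aux_coord y i).trans hy
    linarith

lemma aux_quad {d : ℕ} (v : Fin (d + 1) → ℝ) (S : Matrix (Fin (d + 1)) (Fin (d + 1)) ℝ)
    (G K : ℝ) (hv : ∀ i, |v i| ≤ G) (hS : ∀ i j, |S i j| ≤ K) :
    |∑ i : Fin (d + 1), ∑ j : Fin (d + 1), v i * S i j * v j|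
      ≤ (d + 1) * ((d + 1) * (G * K * G)) := by
  have hG : 0 ≤ G := (abs_nonneg _).trans (hv 0)
  have hK : 0 ≤ K := (abs_nonneg _).trans (hS 0 0)
  have := aux_sum_s6 (fun i => ∑ j : Fin (d + 1), v i * S i j * v j)
    (((d + 1 : ℕ) : ℝ) * (G * K * G)) (fun i => aux_sum_s6 _ _ (fun j => by
      rw [abs_mul, abs_mul]
      exact mul_le_mul (mul_le_mul (hv i) (hS i j) (abs_nonneg _) hG) (hv j) (abs_nonneg _)
        (by positivity)))
  simpa using this

lemma aux_hess_sum {d : ℕ} (b b' b'' : ℝ → ℝ) (s₀ c₀ x : ℝ)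
    (y : EuclideanSpace ℝ (Fin d)) (S : Matrix (Fin (d + 1)) (Fin (d + 1)) ℝ) :
    (∑ i : Fin (d + 1), ∑ j : Fin (d + 1), S i j * hessg b b' b'' s₀ c₀ x y i j)
      = S 0 0 * (s₀ / (2 * c₀) * ‖y‖ ^ 2 * (2 * (b' x) ^ 2 / (b x) ^ 3 - b'' x / (b x) ^ 2))
        + (∑ j : Fin d, S 0 j.succ * (-(s₀ / c₀) * y j * b' x / (b x) ^ 2))
        + (∑ i : Fin d, S i.succ 0 * (-(s₀ / c₀) * y i * b' x / (b x) ^ 2))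
        + (∑ i : Fin d, S i.succ i.succ) * (s₀ / c₀ / b x) := by
  simp only [Fin.sum_univ_succ, hessg, Fin.cons_zero, Fin.cons_succ, Finset.sum_add_distrib,
    mul_ite, mul_zero, Finset.sum_ite_eq, Finset.mem_univ, if_true, Finset.sum_mul]
  ring

lemma aux_h00 (B B1 B2 κ n R C u S K : ℝ) (hB : 0 < B) (hκ : 0 < κ) (hn : 0 ≤ n) (hnB : n ≤ B)
    (hR0 : 0 ≤ R) (hu : 0 ≤ u) (hu1 : u ≤ 1) (hC : 0 < C)
    (h1 : |B1| ≤ C * u) (h2 : |B2| * B ≤ C ^ 2 * u) (hS : |S| ≤ K) :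
    |R * B * (S * (κ * n ^ 2 * (2 * B1 ^ 2 / B ^ 3 - B2 / B ^ 2)))|
      ≤ R * K * κ * (3 * C ^ 2) * u := by
  have hK : 0 ≤ K := (abs_nonneg _).trans hS
  have e : R * B * (S * (κ * n ^ 2 * (2 * B1 ^ 2 / B ^ 3 - B2 / B ^ 2)))
      = R * S * κ * (n / B) ^ 2 * (2 * B1 ^ 2 - B2 * B) := by
    field_simp
  have hq : (n / B) ^ 2 ≤ 1 := by
    apply pow_le_one₀ (by positivity)
    rwa [div_le_one hB]
  have h3 : |2 * B1 ^ 2 - B2 * B| ≤ 3 * C ^ 2 * u := by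
    refine (abs_sub _ _).trans ?_
    rw [abs_mul B2, abs_of_pos hB, abs_of_nonneg (by positivity : 0 ≤ 2 * B1 ^ 2)]
    have : B1 ^ 2 ≤ C ^ 2 * u := by
      rw [← sq_abs]
      calc |B1| ^ 2 ≤ (C * u) ^ 2 := by gcongr
        _ = C ^ 2 * (u * u) := by ring
        _ ≤ C ^ 2 * (u * 1) := by gcongr
        _ = _ := by ring
    linarith
  rw [e, abs_mul, abs_mul, abs_mul, abs_mul, abs_of_nonneg hR0, abs_of_pos hκ,
    abs_of_nonneg (by positivity : 0 ≤ (n / B) ^ 2)]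
  calc R * |S| * κ * (n / B) ^ 2 * |2 * B1 ^ 2 - B2 * B|
      ≤ R * K * κ * 1 * (3 * C ^ 2 * u) := by gcongr
    _ = _ := by ring

lemma aux_h0j (B B1 κ n R C u S K : ℝ) (hB : 0 < B) (hκ : 0 < κ) (hnB : |n| ≤ B)
    (hR0 : 0 ≤ R) (h1 : |B1| ≤ C * u) (hS : |S| ≤ K) :
    |R * B * (S * (-κ * n * B1 / B ^ 2))| ≤ R * K * κ * C * u := by
  have hK : 0 ≤ K := (abs_nonneg _).trans hS
  have e : R * B * (S * (-κ * n * B1 / B ^ 2)) = -(R * S * κ * (n / B) * B1) := by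
    field_simp
  have hq : |n / B| ≤ 1 := by
    rw [abs_div, abs_of_pos hB]
    rwa [div_le_one hB]
  rw [e, abs_neg, abs_mul, abs_mul, abs_mul, abs_mul, abs_of_nonneg hR0, abs_of_pos hκ]
  calc R * |S| * κ * |n / B| * |B1| ≤ R * K * κ * 1 * (C * u) := by gcongr
    _ = _ := by ring

/-- The pointwise estimate. -/
lemma aux_main_s6 {d : ℕ} (b b' b'' : ℝ → ℝ) (s₀ c₀ : ℝ) (hs₀ : 0 < s₀) (hc₀ : 0 < c₀)
    (x C u K T bg bg' δ : ℝ) (y : EuclideanSpace ℝ (Fin d))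
    (S : Matrix (Fin (d + 1)) (Fin (d + 1)) ℝ)
    (hB : 0 < b x) (hy : ‖y‖ ≤ b x) (hC : 0 < C) (hu : 0 ≤ u) (hu1 : u ≤ 1)
    (h1 : |b' x| ≤ C * u) (h2 : |b'' x| * b x ≤ C ^ 2 * u) (hS : ∀ i j, |S i j| ≤ K)
    (hbg0 : 0 ≤ bg) (hbg : |bg - b x| ≤ C * u * (s₀ / (2 * c₀) * b x)) (hbg' : |bg'| ≤ C * u)
    (hT : |(∑ i : Fin d, S i.succ i.succ) - T| ≤ δ) :
    |(1 / 2) * (bg * (∑ i : Fin (d + 1), ∑ j : Fin (d + 1),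
                  S i j * hessg b b' b'' s₀ c₀ x y i j)
              + bg' * (∑ i : Fin (d + 1), ∑ j : Fin (d + 1),
                  gradg b b' s₀ c₀ x y i * S i j * gradg b b' s₀ c₀ x y j))
          - s₀ * T / (2 * c₀)|
      ≤ ((1 + C * (s₀ / (2 * c₀))) * K * (s₀ / (2 * c₀)) * (3 * C ^ 2)
          + d * ((1 + C * (s₀ / (2 * c₀))) * K * (s₀ / c₀) * C)
          + d * ((1 + C * (s₀ / (2 * c₀))) * K * (s₀ / c₀) * C)
          + s₀ / c₀ * (C * (s₀ / (2 * c₀)) * (d * K))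
          + C * ((d + 1) * ((d + 1) * ((1 + s₀ / (2 * c₀) * C + s₀ / c₀) * K *
              (1 + s₀ / (2 * c₀) * C + s₀ / c₀))))) * u + s₀ / c₀ * δ := by
  have hK : 0 ≤ K := (abs_nonneg _).trans (hS 0 0)
  have hk : 0 < s₀ / (2 * c₀) := by positivity
  have hk2 : 0 < s₀ / c₀ := by positivity
  have hb'C : |b' x| ≤ C := h1.trans (by nlinarith)
  have hquad := aux_quad (gradg b b' s₀ c₀ x y) S _ K
    (aux_grad b b' s₀ c₀ hs₀ hc₀ x C y hB hy hb'C) hS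
  set Q := ∑ i : Fin (d + 1), ∑ j : Fin (d + 1),
                  gradg b b' s₀ c₀ x y i * S i j * gradg b b' s₀ c₀ x y j with hQ
  rw [aux_hess_sum]
  obtain ⟨R, hR⟩ : ∃ R, R = bg / b x := ⟨_, rfl⟩
  have hRB : bg = R * b x := by rw [hR]; field_simp
  have hR0 : 0 ≤ R := by rw [hR]; positivity
  have hR1 : |R - 1| ≤ C * (s₀ / (2 * c₀)) * u := by
    have : R - 1 = (bg - b x) / b x := by rw [hR]; field_simp
    rw [this, abs_div, abs_of_pos hB, div_le_iff₀ hB]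
    linarith
  have hR2 : R ≤ 1 + C * (s₀ / (2 * c₀)) := by
    have := (abs_le.1 hR1).2
    have : C * (s₀ / (2 * c₀)) * u ≤ C * (s₀ / (2 * c₀)) * 1 := by gcongr
    linarith
  set R' := 1 + C * (s₀ / (2 * c₀)) with hR'
  have A1 : |R * b x * (S 0 0 * (s₀ / (2 * c₀) * ‖y‖ ^ 2 *
      (2 * (b' x) ^ 2 / (b x) ^ 3 - b'' x / (b x) ^ 2)))|
      ≤ R' * K * (s₀ / (2 * c₀)) * (3 * C ^ 2) * u :=
    (aux_h00 (b x) (b' x) (b'' x) _ ‖y‖ R C u _ K hB hk (norm_nonneg _) hy hR0 hu hu1 hC h1 h2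
      (hS 0 0)).trans (by gcongr)
  have A2 : |R * b x * (∑ j : Fin d, S 0 j.succ * (-(s₀ / c₀) * y j * b' x / (b x) ^ 2))|
      ≤ d * (R' * K * (s₀ / c₀) * C * u) := by
    rw [Finset.mul_sum]
    exact aux_sum_s6 _ _ (fun j => (aux_h0j (b x) (b' x) _ (y j) R C u _ K hB hk2
      ((aux_coord y j).trans hy) hR0 h1 (hS _ _)).trans (by gcongr))
  have A3 : |R * b x * (∑ j : Fin d, S j.succ 0 * (-(s₀ / c₀) * y j * b' x / (b x) ^ 2))|
      ≤ d * (R' * K * (s₀ / c₀) * C * u) := by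
    rw [Finset.mul_sum]
    exact aux_sum_s6 _ _ (fun j => (aux_h0j (b x) (b' x) _ (y j) R C u _ K hB hk2
      ((aux_coord y j).trans hy) hR0 h1 (hS _ _)).trans (by gcongr))
  have htr : |∑ i : Fin d, S i.succ i.succ| ≤ d * K := aux_sum_s6 _ _ (fun i => hS _ _)
  set tr := ∑ i : Fin d, S i.succ i.succ
  have A4 : |s₀ / c₀ * ((R - 1) * tr)| ≤ s₀ / c₀ * (C * (s₀ / (2 * c₀)) * u * (d * K)) := by
    rw [abs_mul, abs_mul, abs_of_pos hk2]
    gcongr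
  have A5 : |s₀ / c₀ * (tr - T)| ≤ s₀ / c₀ * δ := by
    rw [abs_mul, abs_of_pos hk2]
    gcongr
  have A6 : |bg' * Q| ≤ C * u * ((d + 1) * ((d + 1) * ((1 + s₀ / (2 * c₀) * C + s₀ / c₀) * K *
              (1 + s₀ / (2 * c₀) * C + s₀ / c₀)))) := by
    rw [abs_mul]
    gcongr
  set P1 := S 0 0 * (s₀ / (2 * c₀) * ‖y‖ ^ 2 *
      (2 * (b' x) ^ 2 / (b x) ^ 3 - b'' x / (b x) ^ 2))
  set P2 := ∑ j : Fin d, S 0 j.succ * (-(s₀ / c₀) * y j * b' x / (b x) ^ 2)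
  set P3 := ∑ j : Fin d, S j.succ 0 * (-(s₀ / c₀) * y j * b' x / (b x) ^ 2)
  have e : (1 / 2) * (bg * (P1 + P2 + P3 + tr * (s₀ / c₀ / b x)) + bg' * Q) - s₀ * T / (2 * c₀)
      = (1 / 2) * (R * b x * P1 + R * b x * P2 + R * b x * P3 + s₀ / c₀ * ((R - 1) * tr)
        + s₀ / c₀ * (tr - T) + bg' * Q) := by
    rw [hRB]
    field_simp
    ring
  rw [e, abs_mul, abs_of_pos (by norm_num : (0:ℝ) < 1 / 2)]
  have tri : ∀ a b c d e f : ℝ, |a + b + c + d + e + f| ≤ |a| + |b| + |c| + |d| + |e| + |f| := by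
    intro a b c d e f
    have h1 := abs_add_le (a + b + c + d + e) f
    have h2 := abs_add_le (a + b + c + d) e
    have h3 := abs_add_le (a + b + c) d
    have h4 := abs_add_le (a + b) c
    have h5 := abs_add_le a b
    linarith
  refine (mul_le_of_le_one_left (abs_nonneg _) (by norm_num)).trans ?_
  refine (tri _ _ _ _ _ _).trans ?_
  linarith

/-- With `μ(x,y) := ½(b₀(g)·Δ_Σg + b₀′(g)·⟨∇g, Σ∇g⟩)`, under (D₂⁺) and
(C⁺), and `b₀` smooth, vanishing on `[0,1/2]` and equal to `b` on `[1,∞)`, one has,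
uniformly on `D` as `x → ∞`, `μ(x,y) = s₀σ̄²/(2c₀) + o(x^{(β-1)/2})`. -/
theorem stmt_6 (d : ℕ) (hd : 1 ≤ d) (β ainf s₀ c₀ : ℝ)
    (hβ : -1 < β) (hβ1 : β < 1) (ha : 0 < ainf) (hs₀ : 0 < s₀) (hc₀ : 0 < c₀)
    (b b' b'' f f' f'' : ℝ → ℝ)
    (hbpos : ∀ x : ℝ, 0 < x → 0 < b x)
    (hbnonneg : ∀ x : ℝ, 0 ≤ x → 0 ≤ b x)
    (hbC2 : ContDiffOn ℝ 2 b (Set.Ioi 0))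
    (hb' : ∀ x : ℝ, 0 < x → HasDerivAt b (b' x) x)
    (hb'' : ∀ x : ℝ, 0 < x → HasDerivAt b' (b'' x) x)
    (hbf : ∀ x : ℝ, 0 < x → b x = ainf * x ^ β + f x)
    (hf' : ∀ x : ℝ, 0 < x → HasDerivAt f (f' x) x)
    (hf'' : ∀ x : ℝ, 0 < x → HasDerivAt f' (f'' x) x)
    (hfo : Tendsto (fun x : ℝ => f x / x ^ ((3 * β - 1) / 2)) atTop (𝓝 0))
    (hf'o : Tendsto (fun x : ℝ => f' x / x ^ ((3 * β - 3) / 2)) atTop (𝓝 0))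
    (hf''o : Tendsto (fun x : ℝ => f'' x / x ^ ((3 * β - 5) / 2)) atTop (𝓝 0))
    (Smat : ℝ → EuclideanSpace ℝ (Fin d) → Matrix (Fin (d + 1)) (Fin (d + 1)) ℝ)
    (Sinf : Matrix (Fin (d + 1)) (Fin (d + 1)) ℝ)
    (hSbdd : ∃ K : ℝ, ∀ x : ℝ, ∀ y : EuclideanSpace ℝ (Fin d), ‖y‖ ≤ b x →
      ∀ i j : Fin (d + 1), |Smat x y i j| ≤ K)
    (hSpos : ∀ x : ℝ, ∀ y : EuclideanSpace ℝ (Fin d), ‖y‖ ≤ b x → (Smat x y).PosDef)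
    (hSinfpos : Sinf.PosDef)
    (hSconv : ∀ ε : ℝ, 0 < ε → ∃ X : ℝ, ∀ x ≥ X,
      ∀ y : EuclideanSpace ℝ (Fin d), ‖y‖ ≤ b x →
        ∀ i j : Fin (d + 1), |Smat x y i j - Sinf i j| ≤ ε)
    (hStrace : ∀ ε : ℝ, 0 < ε → ∃ X : ℝ, ∀ x ≥ X,
      ∀ y : EuclideanSpace ℝ (Fin d), ‖y‖ ≤ b x →
        x ^ ((1 - β) / 2) *
          |(∑ i : Fin d, Smat x y i.succ i.succ) - ∑ i : Fin d, Sinf i.succ i.succ|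
          ≤ ε)
    -- the truncated boundary function `b₀` and its derivative `b₀′`
    (b₀ b₀' : ℝ → ℝ)
    (hb₀smooth : ContDiffOn ℝ (⊤ : ℕ∞) b₀ (Set.Ici 0))
    (hb₀' : ∀ x : ℝ, 0 < x → HasDerivAt b₀ (b₀' x) x)
    (hb₀zero : ∀ x ∈ Set.Icc (0:ℝ) (1/2), b₀ x = 0)
    (hb₀b : ∀ x : ℝ, 1 ≤ x → b₀ x = b x)
    (hb₀nonneg : ∀ x : ℝ, 0 ≤ x → 0 ≤ b₀ x) :
    UnifLittleO (d := d) b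
      (fun x y =>
        (1 / 2) *
            (b₀ (x + s₀ / (2 * c₀) * ‖y‖ ^ 2 / b x) *
                (∑ i : Fin (d + 1), ∑ j : Fin (d + 1),
                  Smat x y i j * hessg b b' b'' s₀ c₀ x y i j)
              + b₀' (x + s₀ / (2 * c₀) * ‖y‖ ^ 2 / b x) *
                (∑ i : Fin (d + 1), ∑ j : Fin (d + 1),
                  gradg b b' s₀ c₀ x y i * Smat x y i j * gradg b b' s₀ c₀ x y j))
          - s₀ * (∑ i : Fin d, Sinf i.succ i.succ) / (2 * c₀))
      ((β - 1) / 2) := by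
  obtain ⟨K, hK⟩ := hSbdd
  obtain ⟨C, hC, X0, hX0, hasy⟩ := aux_asym β ainf hβ1 ha b b' b'' f f' f'' hb' hb'' hbf hf' hf''
    hfo hf'o hf''o
  have hk : 0 < s₀ / (2 * c₀) := by positivity
  have hk2 : 0 < s₀ / c₀ := by positivity
  intro ε hε
  obtain ⟨M, hM⟩ : ∃ M : ℝ, M = ((1 + C * (s₀ / (2 * c₀))) * K * (s₀ / (2 * c₀)) * (3 * C ^ 2)
          + d * ((1 + C * (s₀ / (2 * c₀))) * K * (s₀ / c₀) * C)
          + d * ((1 + C * (s₀ / (2 * c₀))) * K * (s₀ / c₀) * C)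
          + s₀ / c₀ * (C * (s₀ / (2 * c₀)) * (d * K))
          + C * ((d + 1) * ((d + 1) * ((1 + s₀ / (2 * c₀) * C + s₀ / c₀) * K *
              (1 + s₀ / (2 * c₀) * C + s₀ / c₀))))) := ⟨_, rfl⟩
  obtain ⟨X1, hX1⟩ := hStrace (ε / 2 / (s₀ / c₀)) (by positivity)
  have hlim : Tendsto (fun x : ℝ => M * x ^ ((β - 1) / 2)) atTop (𝓝 0) := by
    have := (tendsto_rpow_neg_atTop (y := (1 - β) / 2) (by linarith)).const_mul M
    rw [mul_zero] at this
    refine this.congr (fun x => ?_)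
    congr 2
    ring
  obtain ⟨X2, hX2⟩ := eventually_atTop.1 (hlim.eventually_lt_const (half_pos hε))
  refine ⟨max X0 (max X1 X2), fun x hx y hy => ?_⟩
  have hx0 : X0 ≤ x := (le_max_left _ _).trans hx
  have hx1 : X1 ≤ x := ((le_max_left _ _).trans (le_max_right _ _)).trans hx
  have hx2 : X2 ≤ x := ((le_max_right _ _).trans (le_max_right _ _)).trans hx
  have hxone : 1 < x := hX0.trans_le hx0
  have hxpos : 0 < x := by linarith
  have hB := hbpos x hxpos
  obtain ⟨t, ht⟩ : ∃ t : ℝ, t = x ^ ((β - 1) / 2) := ⟨_, rfl⟩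
  have htpos : 0 < t := by rw [ht]; exact Real.rpow_pos_of_pos hxpos _
  have hu : x ^ (β - 1) = t * t := by
    rw [ht, ← Real.rpow_add hxpos]; congr 1; ring
  have hu1 : x ^ (β - 1) ≤ 1 := Real.rpow_le_one_of_one_le_of_nonpos hxone.le (by linarith)
  have hu0 : 0 ≤ x ^ (β - 1) := Real.rpow_nonneg hxpos.le _
  obtain ⟨q0, q1, q2⟩ := hasy x hx0
  obtain ⟨g, hg⟩ : ∃ g : ℝ, g = x + s₀ / (2 * c₀) * ‖y‖ ^ 2 / b x := ⟨_, rfl⟩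
  have hgx : x ≤ g := by
    have : 0 ≤ s₀ / (2 * c₀) * ‖y‖ ^ 2 / b x := by positivity
    linarith
  have hgx2 : g - x ≤ s₀ / (2 * c₀) * b x := by
    have : s₀ / (2 * c₀) * ‖y‖ ^ 2 / b x ≤ s₀ / (2 * c₀) * b x := by
      rw [div_le_iff₀ hB]
      calc s₀ / (2 * c₀) * ‖y‖ ^ 2 ≤ s₀ / (2 * c₀) * b x ^ 2 := by gcongr
        _ = _ := by ring
    linarith
  have hdb : ∀ z, x ≤ z → |b' z| ≤ C * x ^ (β - 1) := by
    intro z hz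
    refine (hasy z (hx0.trans hz)).2.1.trans ?_
    exact mul_le_mul_of_nonneg_left
      (Real.rpow_le_rpow_of_nonpos hxpos hz (by linarith)) hC.le
  have hbg : |b g - b x| ≤ C * x ^ (β - 1) * (s₀ / (2 * c₀) * b x) := by
    have := (convex_Icc x g).norm_image_sub_le_of_norm_hasDerivWithin_le
      (f := b) (f' := b') (C := C * x ^ (β - 1))
      (fun z hz => (hb' z (hxpos.trans_le hz.1)).hasDerivWithinAt)
      (fun z hz => by rw [Real.norm_eq_abs]; exact hdb z hz.1)
      (Set.left_mem_Icc.2 hgx) (Set.right_mem_Icc.2 hgx)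
    rw [Real.norm_eq_abs, Real.norm_eq_abs, abs_of_nonneg (by linarith : 0 ≤ g - x)] at this
    refine this.trans ?_
    gcongr
  have hb0g : b₀ g = b g := hb₀b g (by linarith)
  have hb0g' : b₀' g = b' g := by
    have hgpos : 0 < g := by linarith
    have h2 : HasDerivAt b₀ (b' g) g := by
      refine (hb' g hgpos).congr_of_eventuallyEq ?_
      filter_upwards [lt_mem_nhds (by linarith : 1 < g)] with z hz using hb₀b z hz.le
    exact (hb₀' g hgpos).unique h2
  have h2 : |b'' x| * b x ≤ C ^ 2 * x ^ (β - 1) := by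
    rw [abs_of_pos hB] at q0
    have e : x ^ (β - 2) * x ^ β = x ^ (β - 1) * x ^ (β - 1) := by
      rw [← Real.rpow_add hxpos, ← Real.rpow_add hxpos]; congr 1; ring
    calc |b'' x| * b x ≤ (C * x ^ (β - 2)) * (C * x ^ β) :=
          mul_le_mul q2 q0 hB.le ((abs_nonneg _).trans q2)
      _ = C ^ 2 * (x ^ (β - 2) * x ^ β) := by ring
      _ = C ^ 2 * (x ^ (β - 1) * x ^ (β - 1)) := by rw [e]
      _ ≤ C ^ 2 * (x ^ (β - 1) * 1) := by gcongr
      _ = _ := by ring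
  have htr : |(∑ i : Fin d, Smat x y i.succ i.succ) - ∑ i : Fin d, Sinf i.succ i.succ|
      ≤ ε / 2 / (s₀ / c₀) * t := by
    have h := hX1 x hx1 y hy
    have e : x ^ ((1 - β) / 2) * t = 1 := by
      rw [ht, ← Real.rpow_add hxpos, show (1 - β) / 2 + (β - 1) / 2 = 0 by ring, Real.rpow_zero]
    have h3 := mul_le_mul_of_nonneg_right h htpos.le
    rwa [mul_right_comm, e, one_mul] at h3
  have main := aux_main_s6 b b' b'' s₀ c₀ hs₀ hc₀ x C (x ^ (β - 1)) K _ (b g) (b' g) _ y (Smat x y)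
    hB hy hC hu0 hu1 q1 h2 (hK x y hy) (hbpos g (by linarith)).le hbg (hdb g hgx) htr
  rw [← hM, hu] at main
  have hMt := hX2 x hx2
  rw [← ht] at hMt
  beta_reduce
  rw [← hg, hb0g, hb0g', ← ht]
  refine main.trans ?_
  have e : s₀ / c₀ * (ε / 2 / (s₀ / c₀) * t) = ε / 2 * t := by field_simp
  rw [e]
  nlinarith [mul_le_mul_of_nonneg_right hMt.le htpos.le]
end

section
/- Define f̂(x,y) := b₀(g(x,y))²·⟨∇g(x,y), Σ(x,y)·∇g(x,y)⟩ and the quadratic polynomial Q : ℝ^d → ℝ by Q(𝓎) := Σ^∞_{0,0} + (2s₀/(c₀·a∞))·Σ_{i=1}^d Σ^∞_{0,i}·𝓎_i + (s₀²/(c₀²·a∞²))·Σ_{i,j=1}^d Σ^∞_{i,j}·𝓎_i·𝓎_j. Then, as x → ∞, uniformly on D, f̂(x,y) = a∞²·x^{2β}·Q(y/x^β) + o(x^{2β}). -/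
open Filter Topology

/-- The quadratic polynomial
`Q(𝓎) = Σ^∞₀₀ + (2s₀/(c₀a∞))∑ᵢΣ^∞₀ᵢ𝓎ᵢ + (s₀²/(c₀²a∞²))∑ᵢⱼΣ^∞ᵢⱼ𝓎ᵢ𝓎ⱼ`. -/
noncomputable def Qpoly {d : ℕ} (Sinf : Matrix (Fin (d + 1)) (Fin (d + 1)) ℝ)
    (s₀ c₀ ainf : ℝ) (q : Fin d → ℝ) : ℝ :=
  Sinf 0 0 + 2 * s₀ / (c₀ * ainf) * ∑ i : Fin d, Sinf 0 i.succ * q i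
    + s₀ ^ 2 / (c₀ ^ 2 * ainf ^ 2) * ∑ i : Fin d, ∑ j : Fin d, Sinf i.succ j.succ * q i * q j

/-- `p - q → 0` along `l`, with `q` eventually bounded. -/
def CloseTo {α : Type*} (l : Filter α) (p q : α → ℝ) : Prop :=
  Tendsto (fun z => p z - q z) l (𝓝 0) ∧ ∃ K : ℝ, ∀ᶠ z in l, |q z| ≤ K

theorem tendsto_zero_mul_bdd {α : Type*} {l : Filter α} {p q : α → ℝ}
    (hp : Tendsto p l (𝓝 0)) {K : ℝ} (hq : ∀ᶠ z in l, |q z| ≤ K) :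
    Tendsto (fun z => p z * q z) l (𝓝 0) := by
  have h1 : Tendsto (fun z => |p z| * K) l (𝓝 0) := by
    simpa using hp.abs.mul_const K
  refine squeeze_zero_norm' ?_ h1
  filter_upwards [hq] with z hz
  rw [Real.norm_eq_abs, abs_mul]
  exact mul_le_mul_of_nonneg_left hz (abs_nonneg _)

theorem CloseTo.mul {α : Type*} {l : Filter α} {p q p' q' : α → ℝ}
    (h : CloseTo l p q) (h' : CloseTo l p' q') :
    CloseTo l (fun z => p z * p' z) (fun z => q z * q' z) := by
  obtain ⟨h1, K, hK⟩ := h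
  obtain ⟨h2, K', hK'⟩ := h'
  refine ⟨?_, K * K', ?_⟩
  · have e := ((h1.mul h2).add (tendsto_zero_mul_bdd h1 hK')).add (tendsto_zero_mul_bdd h2 hK)
    simp only [mul_zero, add_zero] at e
    refine e.congr fun z => ?_
    ring
  · filter_upwards [hK, hK'] with z a b
    rw [abs_mul]
    exact mul_le_mul a b (abs_nonneg _) ((abs_nonneg _).trans a)

theorem CloseTo.of_tendsto {α : Type*} {l : Filter α} {p : α → ℝ} {c : ℝ}
    (h : Tendsto p l (𝓝 c)) : CloseTo l p (fun _ => c) :=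
  ⟨by simpa using h.sub_const c, |c|, Eventually.of_forall fun _ => le_rfl⟩

theorem Qpoly_eq {d : ℕ} (S : Matrix (Fin (d + 1)) (Fin (d + 1)) ℝ)
    (hS : ∀ i j, S i j = S j i) (s c a : ℝ) (q : Fin d → ℝ) (T : Fin (d + 1) → ℝ)
    (hT0 : T 0 = 1) (hT : ∀ i : Fin d, T i.succ = s / (c * a) * q i) :
    Qpoly S s c a q = ∑ i, ∑ j, T i * S i j * T j := by
  unfold Qpoly
  simp only [Fin.sum_univ_succ, hT0, hT, Finset.sum_add_distrib, Finset.mul_sum]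
  have e1 : ∀ i : Fin d, s / (c * a) * q i * S i.succ 0 * 1
      = s / (c * a) * (S 0 i.succ * q i) := fun i => by rw [hS i.succ 0]; ring
  have e2 : ∀ i : Fin d, 1 * S 0 i.succ * (s / (c * a) * q i)
      = s / (c * a) * (S 0 i.succ * q i) := fun i => by ring
  have e3 : ∀ i : Fin d, 2 * s / (c * a) * (S 0 i.succ * q i)
      = s / (c * a) * (S 0 i.succ * q i) + s / (c * a) * (S 0 i.succ * q i) := fun i => by ring
  have e4 : ∀ i j : Fin d, s ^ 2 / (c ^ 2 * a ^ 2) * (S i.succ j.succ * q i * q j)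
      = s / (c * a) * q i * S i.succ j.succ * (s / (c * a) * q j) := fun i j => by
    rw [← mul_pow, ← div_pow]; ring
  simp only [e1, e2, e3, e4, Finset.sum_add_distrib]
  ring

/-- With `f̂(x,y) := b₀(g(x,y))²·⟨∇g(x,y), Σ(x,y)∇g(x,y)⟩`, under (D₂⁺)
and (C⁺), uniformly on `D` as `x → ∞`,
`f̂(x,y) = a∞²·x^{2β}·Q(y/x^β) + o(x^{2β})`. -/
theorem stmt_8 (d : ℕ) (hd : 1 ≤ d) (β ainf s₀ c₀ : ℝ)
    (hβ : -1 < β) (hβ1 : β < 1) (ha : 0 < ainf) (hs₀ : 0 < s₀) (hc₀ : 0 < c₀)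
    (b b' f f' f'' : ℝ → ℝ)
    (hbpos : ∀ x : ℝ, 0 < x → 0 < b x)
    (hbnonneg : ∀ x : ℝ, 0 ≤ x → 0 ≤ b x)
    (hbC2 : ContDiffOn ℝ 2 b (Set.Ioi 0))
    (hb' : ∀ x : ℝ, 0 < x → HasDerivAt b (b' x) x)
    (hbf : ∀ x : ℝ, 0 < x → b x = ainf * x ^ β + f x)
    (hf' : ∀ x : ℝ, 0 < x → HasDerivAt f (f' x) x)
    (hf'' : ∀ x : ℝ, 0 < x → HasDerivAt f' (f'' x) x)
    (hfo : Tendsto (fun x : ℝ => f x / x ^ ((3 * β - 1) / 2)) atTop (𝓝 0))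
    (hf'o : Tendsto (fun x : ℝ => f' x / x ^ ((3 * β - 3) / 2)) atTop (𝓝 0))
    (hf''o : Tendsto (fun x : ℝ => f'' x / x ^ ((3 * β - 5) / 2)) atTop (𝓝 0))
    (Smat : ℝ → EuclideanSpace ℝ (Fin d) → Matrix (Fin (d + 1)) (Fin (d + 1)) ℝ)
    (Sinf : Matrix (Fin (d + 1)) (Fin (d + 1)) ℝ)
    (hSbdd : ∃ K : ℝ, ∀ x : ℝ, ∀ y : EuclideanSpace ℝ (Fin d), ‖y‖ ≤ b x →
      ∀ i j : Fin (d + 1), |Smat x y i j| ≤ K)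
    (hSpos : ∀ x : ℝ, ∀ y : EuclideanSpace ℝ (Fin d), ‖y‖ ≤ b x → (Smat x y).PosDef)
    (hSinfpos : Sinf.PosDef)
    (hSconv : ∀ ε : ℝ, 0 < ε → ∃ X : ℝ, ∀ x ≥ X,
      ∀ y : EuclideanSpace ℝ (Fin d), ‖y‖ ≤ b x →
        ∀ i j : Fin (d + 1), |Smat x y i j - Sinf i j| ≤ ε)
    (hStrace : ∀ ε : ℝ, 0 < ε → ∃ X : ℝ, ∀ x ≥ X,
      ∀ y : EuclideanSpace ℝ (Fin d), ‖y‖ ≤ b x →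
        x ^ ((1 - β) / 2) *
          |(∑ i : Fin d, Smat x y i.succ i.succ) - ∑ i : Fin d, Sinf i.succ i.succ|
          ≤ ε)
    (b₀ : ℝ → ℝ)
    (hb₀smooth : ContDiffOn ℝ (⊤ : ℕ∞) b₀ (Set.Ici 0))
    (hb₀zero : ∀ x ∈ Set.Icc (0:ℝ) (1/2), b₀ x = 0)
    (hb₀b : ∀ x : ℝ, 1 ≤ x → b₀ x = b x)
    (hb₀nonneg : ∀ x : ℝ, 0 ≤ x → 0 ≤ b₀ x) :
    UnifLittleO (d := d) b
      (fun x y =>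
        (b₀ (x + s₀ / (2 * c₀) * ‖y‖ ^ 2 / b x)) ^ 2 *
            (∑ i : Fin (d + 1), ∑ j : Fin (d + 1),
              gradg b b' s₀ c₀ x y i * Smat x y i j * gradg b b' s₀ c₀ x y j)
          - ainf ^ 2 * x ^ (2 * β) *
              Qpoly Sinf s₀ c₀ ainf (fun i => y i / x ^ β))
      (2 * β) := by
  classical
  obtain ⟨l, hl⟩ : ∃ l : Filter (ℝ × EuclideanSpace ℝ (Fin d)),
      l = comap Prod.fst atTop ⊓ 𝓟 {p | ‖p.2‖ ≤ b p.1} := ⟨_, rfl⟩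
  have hfst : Tendsto Prod.fst l atTop := by
    rw [hl]; exact tendsto_comap.mono_left inf_le_left
  have hmem : ∀ᶠ p in l, ‖p.2‖ ≤ b p.1 := by
    rw [hl]; exact mem_inf_of_right (mem_principal_self _)
  have hev : ∀ P : ℝ × EuclideanSpace ℝ (Fin d) → Prop, (∀ᶠ p in l, P p) ↔
      ∃ X : ℝ, ∀ x ≥ X, ∀ y, ‖y‖ ≤ b x → P (x, y) := by
    intro P
    rw [hl, eventually_inf_principal, eventually_comap, eventually_atTop]
    constructor
    · rintro ⟨X, h⟩
      exact ⟨X, fun x hx y hy => h x hx (x, y) rfl hy⟩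
    · rintro ⟨X, h⟩
      refine ⟨X, ?_⟩
      rintro x hx ⟨xx, y⟩ rfl hy
      exact h xx hx y hy
  -- asymptotics of b
  have hr : Tendsto (fun x : ℝ => b x / x ^ β) atTop (𝓝 ainf) := by
    have h1 : Tendsto (fun x : ℝ => x ^ (-((1 - β) / 2))) atTop (𝓝 0) :=
      tendsto_rpow_neg_atTop (by linarith)
    have h2 := (hfo.mul h1).const_add ainf
    simp only [mul_zero, add_zero] at h2
    refine h2.congr' ?_
    filter_upwards [eventually_gt_atTop 0] with x hx
    have hp := (Real.rpow_pos_of_pos hx β).ne'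
    have hp2 := (Real.rpow_pos_of_pos hx ((3 * β - 1) / 2)).ne'
    have e : x ^ (-((1 - β) / 2)) = x ^ ((3 * β - 1) / 2) / x ^ β := by
      rw [← Real.rpow_sub hx]; congr 1; ring
    rw [hbf x hx, e]
    field_simp
  have hbx : Tendsto (fun x : ℝ => b x / x) atTop (𝓝 0) := by
    have h1 : Tendsto (fun x : ℝ => x ^ (-(1 - β))) atTop (𝓝 0) :=
      tendsto_rpow_neg_atTop (by linarith)
    have h2 := hr.mul h1
    simp only [mul_zero] at h2
    refine h2.congr' ?_
    filter_upwards [eventually_gt_atTop 0] with x hx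
    have hp := (Real.rpow_pos_of_pos hx β).ne'
    have e : x ^ (-(1 - β)) = x ^ β / x := by
      rw [neg_sub, Real.rpow_sub hx, Real.rpow_one]
    rw [e]
    field_simp
  have hb'0 : Tendsto b' atTop (𝓝 0) := by
    have h1 : Tendsto (fun x : ℝ => x ^ (-(1 - β))) atTop (𝓝 0) :=
      tendsto_rpow_neg_atTop (by linarith)
    have h3 : Tendsto (fun x : ℝ => x ^ (-((3 - 3 * β) / 2))) atTop (𝓝 0) :=
      tendsto_rpow_neg_atTop (by linarith)
    have h2 := (h1.const_mul (ainf * β)).add (hf'o.mul h3)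
    simp only [mul_zero, add_zero] at h2
    refine h2.congr' ?_
    filter_upwards [eventually_gt_atTop 0] with x hx
    have hd1 : HasDerivAt b (ainf * (β * x ^ (β - 1)) + f' x) x := by
      have := ((Real.hasDerivAt_rpow_const (p := β) (Or.inl hx.ne')).const_mul ainf).add
        (hf' x hx)
      refine this.congr_of_eventuallyEq ?_
      filter_upwards [eventually_gt_nhds hx] with z hz
      exact hbf z hz
    rw [(hb' x hx).unique hd1]
    have hp2 := (Real.rpow_pos_of_pos hx ((3 * β - 3) / 2)).ne'
    have e : x ^ (-((3 - 3 * β) / 2)) = x ^ ((3 * β - 3) / 2) := by congr 1; ring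
    rw [e, div_mul_cancel₀ _ hp2, neg_sub]
    ring
  have hxpos : ∀ᶠ p in l, 0 < p.1 := hfst.eventually (eventually_gt_atTop 0)
  -- asymptotics of g
  have hratio : Tendsto (fun p : ℝ × EuclideanSpace ℝ (Fin d) =>
      (p.1 + s₀ / (2 * c₀) * ‖p.2‖ ^ 2 / b p.1) / p.1) l (𝓝 1) := by
    have h0 : Tendsto (fun p : ℝ × EuclideanSpace ℝ (Fin d) =>
        ‖p.2‖ ^ 2 / b p.1 / p.1) l (𝓝 0) := by
      refine squeeze_zero' ?_ ?_ (hbx.comp hfst)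
      · filter_upwards [hxpos] with p hp
        have := hbpos _ hp
        positivity
      · filter_upwards [hxpos, hmem] with p hp hm
        have hb := hbpos _ hp
        simp only [Function.comp]
        refine div_le_div_of_nonneg_right ?_ hp.le
        rw [div_le_iff₀ hb]
        nlinarith [norm_nonneg p.2]
    have h1 := (h0.const_mul (s₀ / (2 * c₀))).const_add 1
    simp only [mul_zero, add_zero] at h1
    refine h1.congr' ?_
    filter_upwards [hxpos] with p hp
    have := (hbpos _ hp).ne'
    field_simp
  have hgx : ∀ᶠ p in l, p.1 ≤ p.1 + s₀ / (2 * c₀) * ‖p.2‖ ^ 2 / b p.1 := by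
    filter_upwards [hxpos] with p hp
    have := hbpos _ hp
    have : 0 ≤ s₀ / (2 * c₀) * ‖p.2‖ ^ 2 / b p.1 := by positivity
    linarith
  have hgtop : Tendsto (fun p : ℝ × EuclideanSpace ℝ (Fin d) =>
      p.1 + s₀ / (2 * c₀) * ‖p.2‖ ^ 2 / b p.1) l atTop := tendsto_atTop_mono' l hgx hfst
  have hB : Tendsto (fun p : ℝ × EuclideanSpace ℝ (Fin d) =>
      b₀ (p.1 + s₀ / (2 * c₀) * ‖p.2‖ ^ 2 / b p.1) / p.1 ^ β) l (𝓝 ainf) := by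
    have h1 := (hr.comp hgtop).mul (hratio.rpow_const (p := β) (Or.inl one_ne_zero))
    rw [Real.one_rpow, mul_one] at h1
    refine h1.congr' ?_
    filter_upwards [hxpos, hgx, hgtop.eventually (eventually_ge_atTop 1)] with p hp hg hg1
    simp only [Function.comp]
    rw [hb₀b _ hg1, Real.div_rpow (by linarith) hp.le]
    have := (Real.rpow_pos_of_pos (by linarith :
      0 < p.1 + s₀ / (2 * c₀) * ‖p.2‖ ^ 2 / b p.1) β).ne'
    rw [div_mul_div_cancel₀ this]
  -- the gradient
  obtain ⟨T, hT⟩ : ∃ T : Fin (d + 1) → ℝ × EuclideanSpace ℝ (Fin d) → ℝ,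
      T = Fin.cons (fun _ => 1) (fun i p => s₀ / (c₀ * ainf) * (p.2 i / p.1 ^ β)) := ⟨_, rfl⟩
  have hT0 : ∀ p, T 0 p = 1 := fun p => by rw [hT]; rfl
  have hTs : ∀ (i : Fin d) p, T i.succ p = s₀ / (c₀ * ainf) * (p.2 i / p.1 ^ β) :=
    fun i p => by rw [hT]; rfl
  have hu : ∀ i : Fin d, ∀ᶠ p in l, |p.2 i / b p.1| ≤ 1 := by
    intro i
    filter_upwards [hxpos, hmem] with p hp hm
    have hb := hbpos _ hp
    rw [abs_div, abs_of_pos hb, div_le_one hb]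
    exact (PiLp.norm_apply_le p.2 i).trans hm
  have hG : ∀ i, CloseTo l (fun p => gradg b b' s₀ c₀ p.1 p.2 i) (T i) := by
    intro i
    refine Fin.cases ?_ (fun i => ?_) i
    · have hn : ∀ᶠ p in l, |‖p.2‖ ^ 2 / b p.1 ^ 2| ≤ 1 := by
        filter_upwards [hxpos, hmem] with p hp hm
        have hb := hbpos _ hp
        rw [abs_of_nonneg (by positivity), div_le_one (by positivity)]
        exact pow_le_pow_left₀ (norm_nonneg _) hm 2
      have h1 := tendsto_zero_mul_bdd (hb'0.comp hfst) hn
      have h2 := (h1.const_mul (s₀ / (2 * c₀))).const_sub 1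
      simp only [mul_zero, sub_zero] at h2
      have h3 := CloseTo.of_tendsto h2
      have e : T 0 = fun _ => 1 := funext hT0
      rw [e]
      convert h3 using 2 with p
      simp only [gradg, Fin.cons_zero, Function.comp]
      ring
    · have hrl := hr.comp hfst
      have h0 : Tendsto (fun p : ℝ × EuclideanSpace ℝ (Fin d) =>
          s₀ / c₀ * (1 - b p.1 / p.1 ^ β / ainf)) l (𝓝 0) := by
        have := ((hrl.div_const ainf).const_sub 1).const_mul (s₀ / c₀)
        simpa [ha.ne'] using this
      have h1 := tendsto_zero_mul_bdd h0 (hu i)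
      constructor
      · refine h1.congr' ?_
        filter_upwards [hxpos] with p hp
        have := (hbpos _ hp).ne'
        have h3 := (Real.rpow_pos_of_pos hp β).ne'
        rw [hTs]
        simp only [gradg, Fin.cons_succ]
        field_simp
      · refine ⟨s₀ / (c₀ * ainf) * (ainf + 1), ?_⟩
        filter_upwards [hxpos, hu i, hrl.eventually (eventually_lt_nhds (lt_add_one ainf))]
          with p hp hui hlt
        simp only [Function.comp] at hlt
        have hb := hbpos _ hp
        have h3 := Real.rpow_pos_of_pos hp β
        rw [hTs, abs_mul, abs_of_pos (by positivity : 0 < s₀ / (c₀ * ainf))]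
        refine mul_le_mul_of_nonneg_left ?_ (by positivity)
        have e : p.2 i / p.1 ^ β = p.2 i / b p.1 * (b p.1 / p.1 ^ β) := by
          field_simp
        rw [e, abs_mul, abs_of_pos (by positivity : 0 < b p.1 / p.1 ^ β)]
        have : 0 < b p.1 / p.1 ^ β := by positivity
        nlinarith
  have hS : ∀ i j, CloseTo l (fun p => Smat p.1 p.2 i j) (fun _ => Sinf i j) := by
    intro i j
    apply CloseTo.of_tendsto
    rw [Metric.tendsto_nhds]
    intro ε hε
    rw [hev]
    obtain ⟨X, hX⟩ := hSconv (ε / 2) (by positivity)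
    refine ⟨X, fun x hx y hy => ?_⟩
    rw [Real.dist_eq]
    have := hX x hx y hy i j
    simp only
    linarith
  have hB2 := (CloseTo.of_tendsto hB).mul (CloseTo.of_tendsto hB)
  have hterm : ∀ i j, CloseTo l _ _ := fun i j => hB2.mul (((hG i).mul (hS i j)).mul (hG j))
  have hsum := tendsto_finsetSum (Finset.univ : Finset (Fin (d + 1))) (fun i _ =>
    tendsto_finsetSum (Finset.univ : Finset (Fin (d + 1))) (fun j _ => (hterm i j).1))
  simp only [Finset.sum_const_zero] at hsum
  intro ε hε
  refine (hev (fun p => |(b₀ (p.1 + s₀ / (2 * c₀) * ‖p.2‖ ^ 2 / b p.1)) ^ 2 *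
            (∑ i : Fin (d + 1), ∑ j : Fin (d + 1),
              gradg b b' s₀ c₀ p.1 p.2 i * Smat p.1 p.2 i j * gradg b b' s₀ c₀ p.1 p.2 j)
          - ainf ^ 2 * p.1 ^ (2 * β) *
              Qpoly Sinf s₀ c₀ ainf (fun i => p.2 i / p.1 ^ β)| ≤ ε * p.1 ^ (2 * β))).1 ?_
  filter_upwards [hxpos, (Metric.tendsto_nhds.1 hsum) ε hε] with p hp hlt
  rw [Real.dist_eq, sub_zero] at hlt
  have hsymm : ∀ i j, Sinf i j = Sinf j i := fun i j => by
    have := hSinfpos.isHermitian.apply j i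
    simpa using this
  rw [Qpoly_eq Sinf hsymm s₀ c₀ ainf _ (fun i => T i p) (hT0 p) (fun i => hTs i p)]
  have hx2 : p.1 ^ (2 * β) = p.1 ^ β * p.1 ^ β := by
    rw [← Real.rpow_add hp]; congr 1; ring
  have h3 := Real.rpow_pos_of_pos hp β
  simp only [Finset.sum_sub_distrib, ← Finset.mul_sum] at hlt
  rw [hx2]
  rw [← div_le_iff₀ (by positivity), ← abs_of_pos (by positivity : 0 < p.1 ^ β * p.1 ^ β),
    ← abs_div, abs_of_pos (by positivity : 0 < p.1 ^ β * p.1 ^ β)]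
  refine le_of_eq_of_le ?_ hlt.le
  congr 1
  field_simp
end

section
/- Under the stated hypotheses, Σ_{k=1}^n (T_{k+1} − T_k)·|T_k^α − T_{k+1}^α| = o(T_n^{1+α}) as n → ∞. -/
open Filter Topology

/-- With `β ∈ (-1/3,1)`, `α = 2β/(1+β)`, `C > 0`, `𝔰₄ : (0,∞) → [1,∞)`
with `𝔰₄(T) → ∞` and `𝔰₄(T) = O(log T)`, and the sequence `T₁ = 1`,
`T_{n+1} = T_n + C²·T_n^α·𝔰₄(T_n)`, one has
`∑_{k=1}^n (T_{k+1} - T_k)·|T_k^α - T_{k+1}^α| = o(T_n^{1+α})` as `n → ∞`. -/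
theorem stmt_10 (β C α : ℝ) (hβ : -(1/3 : ℝ) < β) (hβ1 : β < 1)
    (hα : α = 2 * β / (1 + β)) (hC : 0 < C)
    (s4 : ℝ → ℝ) (hs4_ge : ∀ T : ℝ, 0 < T → 1 ≤ s4 T)
    (hs4_top : Tendsto s4 atTop atTop)
    (hs4_log : ∃ K X : ℝ, ∀ T ≥ X, s4 T ≤ K * Real.log T)
    (T : ℕ → ℝ) (hT1 : T 1 = 1)
    (hTrec : ∀ n : ℕ, 1 ≤ n → T (n + 1) = T n + C ^ 2 * T n ^ α * s4 (T n)) :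
    Tendsto (fun n : ℕ =>
        (∑ k ∈ Finset.Icc 1 n, (T (k + 1) - T k) * |T k ^ α - T (k + 1) ^ α|)
          / T n ^ (1 + α)) atTop (𝓝 0) := by
  have hb : 0 < 1 + β := by linarith
  have hα1 : α < 1 := by
    rw [hα, div_lt_one hb]; linarith
  have hp : 0 < 1 + α := by
    have : 1 + α = (1 + 3 * β) / (1 + β) := by rw [hα]; field_simp; ring
    rw [this]; apply div_pos <;> linarith
  obtain ⟨K, X, hK⟩ := hs4_log
  have hC2 : 0 < C ^ 2 := by positivity
  -- shifted sequence
  obtain ⟨S, hS⟩ : ∃ S : ℕ → ℝ, ∀ n, S n = T (n + 1) := ⟨fun n => T (n + 1), fun n => rfl⟩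
  have hS0 : S 0 = 1 := by rw [hS]; exact hT1
  have hSrec : ∀ n, S (n + 1) = S n + C ^ 2 * S n ^ α * s4 (S n) := by
    intro n; rw [hS, hS]; exact hTrec (n + 1) (by omega)
  have hinc : ∀ n, 1 ≤ S n → S n + C ^ 2 * S n ^ α ≤ S (n + 1) := by
    intro n hn
    rw [hSrec]
    have h1 : 0 < S n ^ α := Real.rpow_pos_of_pos (by linarith) _
    have h2 := hs4_ge (S n) (by linarith)
    have h3 : 0 < C ^ 2 * S n ^ α := by positivity
    nlinarith
  have hge : ∀ n, 1 ≤ S n := by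
    intro n
    induction n with
    | zero => exact hS0.ge
    | succ n ih =>
      have h1 : 0 < S n ^ α := Real.rpow_pos_of_pos (by linarith) _
      have h3 : 0 < C ^ 2 * S n ^ α := by positivity
      linarith [hinc n ih]
  have hpos : ∀ n, 0 < S n := fun n => by linarith [hge n]
  have hlt : ∀ n, S n < S (n + 1) := fun n => by
    have h1 : 0 < S n ^ α := Real.rpow_pos_of_pos (hpos n) _
    have h3 : 0 < C ^ 2 * S n ^ α := by positivity
    linarith [hinc n (hge n)]
  have hmono : Monotone S := monotone_nat_of_le_succ fun n => (hlt n).le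
  have hStop : Tendsto S atTop atTop := by
    rcases tendsto_atTop_of_monotone hmono with h | ⟨l, hl⟩
    · exact h
    · exfalso
      have hl1 : 1 ≤ l := ge_of_tendsto' hl hge
      have hl0 : 0 < l := by linarith
      have h1 : Tendsto (fun n => S n + C ^ 2 * S n ^ α) atTop (𝓝 (l + C ^ 2 * l ^ α)) :=
        hl.add ((hl.rpow_const (Or.inl hl0.ne')).const_mul _)
      have h2 : Tendsto (fun n => S (n + 1)) atTop (𝓝 l) := hl.comp (tendsto_add_atTop_nat 1)
      have h3 := le_of_tendsto_of_tendsto' h1 h2 fun n => hinc n (hge n)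
      have h4 : 0 < l ^ α := Real.rpow_pos_of_pos hl0 _
      have : 0 < C ^ 2 * l ^ α := by positivity
      linarith
  -- relative increments
  obtain ⟨u, hu⟩ : ∃ u : ℕ → ℝ, ∀ n, u n = (S (n + 1) - S n) / S n :=
    ⟨fun n => (S (n + 1) - S n) / S n, fun n => rfl⟩
  have hupos : ∀ n, 0 < u n := fun n => by
    rw [hu]; exact div_pos (by linarith [hlt n]) (hpos n)
  have hSu : ∀ n, S (n + 1) = S n * (1 + u n) := fun n => by
    rw [hu]; have := (hpos n).ne'; field_simp; ring
  have hu0 : Tendsto u atTop (𝓝 0) := by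
    have hlog : Tendsto (fun x : ℝ => C ^ 2 * K * (Real.log x / x ^ (1 - α))) atTop (𝓝 0) := by
      have := (isLittleO_log_rpow_atTop (r := 1 - α) (by linarith)).tendsto_div_nhds_zero
      simpa using this.const_mul (C ^ 2 * K)
    refine squeeze_zero' (Eventually.of_forall fun n => (hupos n).le) ?_ (hlog.comp hStop)
    filter_upwards [hStop.eventually_ge_atTop X] with n hn
    have h1 := hK (S n) hn
    have h2 : 0 < S n ^ α := Real.rpow_pos_of_pos (hpos n) _
    have h3 : S n ^ (1 - α) = S n / S n ^ α := by
      rw [Real.rpow_sub (hpos n), Real.rpow_one]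
    have h4 := hpos n
    simp only [Function.comp]
    rw [hu, hSrec, h3]
    have e1 : (S n + C ^ 2 * S n ^ α * s4 (S n) - S n) / S n
        = C ^ 2 * S n ^ α / S n * s4 (S n) := by field_simp; ring
    have e2 : C ^ 2 * K * (Real.log (S n) / (S n / S n ^ α))
        = C ^ 2 * S n ^ α / S n * (K * Real.log (S n)) := by field_simp
    rw [e1, e2]
    exact mul_le_mul_of_nonneg_left h1 (by positivity)
  -- lower bound on (1+u)^p - 1
  have hlow : ∀ᶠ n in atTop, (1 + α) / 2 * u n ≤ (1 + u n) ^ (1 + α) - 1 := by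
    have hd : HasDerivAt (fun x : ℝ => x ^ (1 + α)) (1 + α) 1 := by
      have := Real.hasDerivAt_rpow_const (x := 1) (p := 1 + α) (Or.inl one_ne_zero)
      simpa using this
    have hs := hd.tendsto_slope_zero
    have hu0' : Tendsto u atTop (𝓝[≠] 0) :=
      tendsto_nhdsWithin_iff.2 ⟨hu0, Eventually.of_forall fun n => (hupos n).ne'⟩
    have := (hs.comp hu0').eventually (lt_mem_nhds (show (1 + α) / 2 < 1 + α by linarith))
    filter_upwards [this] with n hn
    simp only [Function.comp, Real.one_rpow, smul_eq_mul] at hn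
    have h := hupos n
    rw [inv_mul_eq_div, lt_div_iff₀ h] at hn
    exact hn.le
  have hα0 : Tendsto (fun n => |1 - (1 + u n) ^ α|) atTop (𝓝 0) := by
    have h1 : Tendsto (fun n => (1 + u n) ^ α) atTop (𝓝 ((1 + 0) ^ α)) :=
      (hu0.const_add 1).rpow_const (Or.inl (by norm_num))
    have h2 := (h1.const_sub 1).abs
    simpa using h2
  have hlittle : (fun n => (S (n + 1) - S n) * |S n ^ α - S (n + 1) ^ α|) =o[atTop]
      (fun n => S (n + 1) ^ (1 + α) - S n ^ (1 + α)) := by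
    rw [Asymptotics.isLittleO_iff]
    intro ε hε
    filter_upwards [hlow, hα0.eventually (gt_mem_nhds (show 0 < ε * ((1 + α) / 2) by positivity))]
      with n h1 h2
    have hsn := hpos n
    have hun := hupos n
    have h3 : 0 < S n ^ α := Real.rpow_pos_of_pos hsn _
    have h4 : S n ^ (1 + α) = S n * S n ^ α := by rw [Real.rpow_add hsn, Real.rpow_one]
    have e1 : (S (n + 1) - S n) * |S n ^ α - S (n + 1) ^ α|
        = (S n * S n ^ α) * (u n * |1 - (1 + u n) ^ α|) := by
      rw [hSu, Real.mul_rpow hsn.le (by linarith)]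
      have : S n ^ α - S n ^ α * (1 + u n) ^ α = S n ^ α * (1 - (1 + u n) ^ α) := by ring
      rw [this, abs_mul, abs_of_pos h3]; ring
    have e2 : S (n + 1) ^ (1 + α) - S n ^ (1 + α)
        = (S n * S n ^ α) * ((1 + u n) ^ (1 + α) - 1) := by
      rw [hSu, Real.mul_rpow hsn.le (by linarith), h4]; ring
    have h5 : 0 ≤ (1 + u n) ^ (1 + α) - 1 := le_trans (by positivity) h1
    rw [e1, e2, Real.norm_of_nonneg (by positivity), Real.norm_of_nonneg (by positivity)]
    have h6 : u n * |1 - (1 + u n) ^ α| ≤ u n * (ε * ((1 + α) / 2)) :=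
      mul_le_mul_of_nonneg_left h2.le hun.le
    have h7 : ε * ((1 + α) / 2 * u n) ≤ ε * ((1 + u n) ^ (1 + α) - 1) :=
      mul_le_mul_of_nonneg_left h1 hε.le
    have h8 : u n * |1 - (1 + u n) ^ α| ≤ ε * ((1 + u n) ^ (1 + α) - 1) := by linarith
    calc _ ≤ (S n * S n ^ α) * (ε * ((1 + u n) ^ (1 + α) - 1)) :=
          mul_le_mul_of_nonneg_left h8 (by positivity)
      _ = _ := by ring
  have htel : ∀ n, ∑ k ∈ Finset.range n, (S (k + 1) ^ (1 + α) - S k ^ (1 + α))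
      = S n ^ (1 + α) - 1 := by
    intro n
    rw [Finset.sum_range_sub (fun k => S k ^ (1 + α)), hS0, Real.one_rpow]
  have hSp : Tendsto (fun n => S n ^ (1 + α)) atTop atTop :=
    (tendsto_rpow_atTop hp).comp hStop
  have hsum := hlittle.sum_range
    (fun n => sub_nonneg.2 (Real.rpow_le_rpow (hpos n).le (hlt n).le hp.le))
    (by
      simp only [htel]
      exact tendsto_atTop_add_const_right _ (-1) hSp)
  simp only [htel] at hsum
  have hsum1 := hsum.comp_tendsto (tendsto_add_atTop_nat 1)
  have hO : ((fun n => S n ^ (1 + α) - 1) ∘ fun n => n + 1) =O[atTop]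
      (fun n => S n ^ (1 + α)) := by
    refine Asymptotics.IsBigO.of_bound ((2 : ℝ) ^ (1 + α)) ?_
    filter_upwards [hu0.eventually (gt_mem_nhds zero_lt_one)] with n hn
    have hsn := hpos n
    have h1 : 1 ≤ S (n + 1) ^ (1 + α) := Real.one_le_rpow (hge _) hp.le
    have h2 : S (n + 1) ≤ 2 * S n := by rw [hSu]; nlinarith
    have h3 := Real.rpow_le_rpow (hpos (n + 1)).le h2 hp.le
    rw [Real.mul_rpow (by norm_num) hsn.le] at h3
    simp only [Function.comp]
    rw [Real.norm_of_nonneg (by linarith), Real.norm_of_nonneg (by positivity)]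
    linarith
  have hfin := (hsum1.trans_isBigO hO).tendsto_div_nhds_zero
  rw [← tendsto_add_atTop_iff_nat 1]
  refine hfin.congr fun n => ?_
  simp only [Function.comp, hS]
  congr 1
  rw [Finset.range_eq_Ico, Finset.sum_Ico_add'
    (fun k => (T (k + 1) - T k) * |T k ^ α - T (k + 1) ^ α|) 0 (n + 1) 1]
  rfl
end

section
/- Under the stated hypotheses, Σ_{k=1}^n (T_{k+1} − T_k)·T_k^α = (T_n^{1+α}/(1+α))·(1 + o(1)) as n → ∞. -/
open Filter Topology

/-- With `β ∈ (-1/3,1)`, `α = 2β/(1+β)`, `C > 0`, `𝔰₄ : (0,∞) → [1,∞)`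
with `𝔰₄(T) → ∞` and `𝔰₄(T) = O(log T)`, and the sequence `T₁ = 1`,
`T_{n+1} = T_n + C²·T_n^α·𝔰₄(T_n)`, one has
`∑_{k=1}^n (T_{k+1} - T_k)·T_k^α = (T_n^{1+α}/(1+α))·(1 + o(1))` as `n → ∞`, i.e. the
ratio of the sum to `T_n^{1+α}/(1+α)` tends to `1`. -/
theorem stmt_11 (β C α : ℝ) (hβ : -(1/3 : ℝ) < β) (hβ1 : β < 1)
    (hα : α = 2 * β / (1 + β)) (hC : 0 < C)
    (s4 : ℝ → ℝ) (hs4_ge : ∀ T : ℝ, 0 < T → 1 ≤ s4 T)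
    (hs4_top : Tendsto s4 atTop atTop)
    (hs4_log : ∃ K X : ℝ, ∀ T ≥ X, s4 T ≤ K * Real.log T)
    (T : ℕ → ℝ) (hT1 : T 1 = 1)
    (hTrec : ∀ n : ℕ, 1 ≤ n → T (n + 1) = T n + C ^ 2 * T n ^ α * s4 (T n)) :
    Tendsto (fun n : ℕ =>
        (∑ k ∈ Finset.Icc 1 n, (T (k + 1) - T k) * T k ^ α)
          / (T n ^ (1 + α) / (1 + α))) atTop (𝓝 1) := by
  have hb : 0 < 1 + β := by linarith
  have hp : 0 < 1 + α := by
    rw [hα]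
    have : 1 + 2 * β / (1 + β) = (1 + 3 * β) / (1 + β) := by field_simp; ring
    rw [this]; apply div_pos <;> linarith
  have hα1 : 0 < 1 - α := by
    rw [hα]
    have : 1 - 2 * β / (1 + β) = (1 - β) / (1 + β) := by field_simp; ring
    rw [this]; apply div_pos <;> linarith
  have hC2 : 0 < C ^ 2 := by positivity
  have hlow : ∀ n : ℕ, 1 ≤ T (n + 1) ∧ 1 + 2 * C ^ 2 * n ≤ T (n + 1) ^ 2 := by
    intro n
    induction n with
    | zero => simp [hT1]
    | succ n ih =>
      obtain ⟨h1, h2⟩ := ih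
      have hpos : 0 < T (n + 1) := by linarith
      have hs := hs4_ge _ hpos
      have ha : (T (n + 1))⁻¹ ≤ T (n + 1) ^ α := by
        rw [← Real.rpow_neg_one]
        exact Real.rpow_le_rpow_of_exponent_le h1 (by linarith)
      have ha0 : 0 < T (n + 1) ^ α := Real.rpow_pos_of_pos hpos _
      have hinc : C ^ 2 * (T (n + 1))⁻¹ ≤ C ^ 2 * T (n + 1) ^ α * s4 (T (n + 1)) := by
        calc C ^ 2 * (T (n + 1))⁻¹ ≤ C ^ 2 * T (n + 1) ^ α := by gcongr
          _ ≤ _ := le_mul_of_one_le_right (by positivity) hs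
      have hi0 : 0 < C ^ 2 * (T (n + 1))⁻¹ := by positivity
      have hrec := hTrec (n + 1) (by omega)
      have hge : T (n + 1) + C ^ 2 * (T (n + 1))⁻¹ ≤ T (n + 1 + 1) := by linarith
      refine ⟨by linarith, ?_⟩
      have hm : T (n + 1) * (C ^ 2 * (T (n + 1))⁻¹) = C ^ 2 := by field_simp
      push_cast
      have : (T (n + 1) + C ^ 2 * (T (n + 1))⁻¹) ^ 2 ≤ T (n + 1 + 1) ^ 2 := by gcongr
      nlinarith [sq_nonneg (C ^ 2 * (T (n + 1))⁻¹)]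
  have hpos : ∀ n : ℕ, 0 < T (n + 1) := fun n => by linarith [(hlow n).1]
  have htop : Tendsto (fun n : ℕ => T (n + 1)) atTop atTop := by
    have h1 : Tendsto (fun n : ℕ => 1 + 2 * C ^ 2 * (n : ℝ)) atTop atTop :=
      tendsto_atTop_add_const_left _ _
        (tendsto_natCast_atTop_atTop.const_mul_atTop (by positivity))
    have h2 : Tendsto (fun n : ℕ => T (n + 1) ^ 2) atTop atTop :=
      tendsto_atTop_mono (fun n => (hlow n).2) h1
    have h3 := Real.tendsto_sqrt_atTop.comp h2
    refine h3.congr fun n => ?_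
    simp [Real.sqrt_sq (hpos n).le]
  set r : ℕ → ℝ := fun n => T (n + 1 + 1) / T (n + 1) with hr
  have hreq : ∀ n, r n = 1 + C ^ 2 * (T (n + 1) ^ (α - 1) * s4 (T (n + 1))) := by
    intro n
    have := hpos n
    simp only [hr]
    rw [hTrec (n + 1) (by omega), Real.rpow_sub_one this.ne']
    field_simp
  have hr1 : ∀ n, 1 < r n := by
    intro n
    rw [hreq]
    have h1 := Real.rpow_pos_of_pos (hpos n) (α - 1)
    have h2 := hs4_ge _ (hpos n)
    have : 0 < C ^ 2 * (T (n + 1) ^ (α - 1) * s4 (T (n + 1))) := by positivity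
    linarith
  have hg : Tendsto (fun x : ℝ => x ^ (α - 1) * s4 x) atTop (𝓝 0) := by
    obtain ⟨K, X, hK⟩ := hs4_log
    have h1 : Tendsto (fun x : ℝ => K * (Real.log x / x ^ (1 - α))) atTop (𝓝 0) := by
      simpa using (isLittleO_log_rpow_atTop hα1).tendsto_div_nhds_zero.const_mul K
    refine tendsto_of_tendsto_of_tendsto_of_le_of_le' tendsto_const_nhds h1 ?_ ?_
    · filter_upwards [eventually_gt_atTop 0] with x hx
      have h1 := Real.rpow_pos_of_pos hx (α - 1)
      have h2 := hs4_ge _ hx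
      positivity
    · filter_upwards [eventually_gt_atTop 0, eventually_ge_atTop X] with x hx hX
      have h1 := Real.rpow_pos_of_pos hx (α - 1)
      have h2 : x ^ (α - 1) = (x ^ (1 - α))⁻¹ := by
        rw [← Real.rpow_neg hx.le]; congr 1; ring
      calc x ^ (α - 1) * s4 x ≤ x ^ (α - 1) * (K * Real.log x) := by
            gcongr; exact hK x hX
        _ = _ := by rw [h2]; ring
  have hrt : Tendsto r atTop (𝓝 1) := by
    have h := ((hg.comp htop).const_mul (C ^ 2)).const_add 1
    simp only [mul_zero, add_zero] at h
    exact h.congr fun n => (hreq n).symm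
  set p := 1 + α with hpdef
  set a : ℕ → ℝ := fun k => (T (k + 1 + 1) - T (k + 1)) * T (k + 1) ^ α with ha
  set b : ℕ → ℝ := fun k => (T (k + 1 + 1) ^ p - T (k + 1) ^ p) / p with hbdef
  have hTr : ∀ n, T (n + 1 + 1) = T (n + 1) * r n := by
    intro n
    have := (hpos n).ne'
    simp only [hr]; field_simp
  have hrp : ∀ n, 1 < r n ^ p := fun n => Real.one_lt_rpow (hr1 n) hp
  have hbeq : ∀ n, b n = T (n + 1) ^ p * (r n ^ p - 1) / p := by
    intro n
    simp only [hbdef]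
    rw [hTr n, Real.mul_rpow (hpos n).le (by linarith [hr1 n])]
    ring
  have haeq : ∀ n, a n = T (n + 1) ^ p * (r n - 1) := by
    intro n
    simp only [ha]
    rw [hTr n, hpdef, Real.rpow_add (hpos n), Real.rpow_one]
    ring
  have hbpos : ∀ n, 0 < b n := by
    intro n
    rw [hbeq]
    have := Real.rpow_pos_of_pos (hpos n) p
    have := sub_pos.2 (hrp n)
    positivity
  have hab : Tendsto (fun n => b n / a n) atTop (𝓝 1) := by
    have hd : HasDerivAt (fun x : ℝ => x ^ p) p 1 := by
      simpa using Real.hasDerivAt_rpow_const (x := 1) (p := p) (Or.inl one_ne_zero)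
    have hs := hasDerivAt_iff_tendsto_slope.1 hd
    have hrn : Tendsto r atTop (𝓝[≠] 1) :=
      tendsto_nhdsWithin_iff.2 ⟨hrt, Eventually.of_forall fun n => (hr1 n).ne'⟩
    have h := (hs.comp hrn).div_const p
    rw [div_self hp.ne'] at h
    refine h.congr fun n => ?_
    have h1 := (Real.rpow_pos_of_pos (hpos n) p).ne'
    have h2 := (sub_pos.2 (hr1 n)).ne'
    rw [hbeq, haeq]
    simp only [Function.comp, slope_def_field, Real.one_rpow]
    field_simp
  have hab' : Tendsto (fun n => (a n - b n) / b n) atTop (𝓝 0) := by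
    have h := (hab.inv₀ one_ne_zero).sub_const 1
    simp only [inv_one, sub_self] at h
    refine h.congr fun n => ?_
    have := (hbpos n).ne'
    rw [inv_div]; field_simp
  have hlo : (fun n => a n - b n) =o[atTop] b :=
    (Asymptotics.isLittleO_iff_tendsto fun n h => absurd h (hbpos n).ne').2 hab'
  have hBeq : ∀ n, ∑ i ∈ Finset.range n, b i = (T (n + 1) ^ p - 1) / p := by
    intro n
    simp only [hbdef]
    rw [← Finset.sum_div, Finset.sum_range_sub (fun i => T (i + 1) ^ p)]
    simp [hT1]
  have hTp : Tendsto (fun n : ℕ => T (n + 1) ^ p) atTop atTop :=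
    (tendsto_rpow_atTop hp).comp htop
  have hBtop : Tendsto (fun n => ∑ i ∈ Finset.range n, b i) atTop atTop := by
    simp only [hBeq]
    exact (tendsto_atTop_add_const_right _ (-1) hTp).atTop_div_const hp
  have hsum := (hlo.sum_range (fun n => (hbpos n).le) hBtop).tendsto_div_nhds_zero
  have hsum' := (tendsto_add_atTop_iff_nat 1).2 hsum
  have hQ : Tendsto (fun n => r n ^ p - (T (n + 1) ^ p)⁻¹) atTop (𝓝 1) := by
    have h1 := (hrt.rpow_const (p := p) (Or.inl one_ne_zero)).sub
      (tendsto_inv_atTop_zero.comp hTp)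
    simpa using h1
  have hfin := (hsum'.mul hQ).add hQ
  rw [← tendsto_add_atTop_iff_nat 1]
  simp only [zero_mul, zero_add] at hfin
  refine hfin.congr fun n => ?_
  have hS : ∑ k ∈ Finset.Icc 1 (n + 1), (T (k + 1) - T k) * T k ^ α
      = ∑ i ∈ Finset.range (n + 1), a i := by
    rw [Finset.range_eq_Ico, Finset.sum_Ico_add' (fun k => (T (k + 1) - T k) * T k ^ α) 0 (n + 1) 1]
    rfl
  rw [hS, Finset.sum_sub_distrib]
  have hBpos : 0 < ∑ i ∈ Finset.range (n + 1), b i :=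
    Finset.sum_pos (fun i _ => hbpos i) (by simp)
  have hTpos := Real.rpow_pos_of_pos (hpos n) p
  have hQe : r n ^ p - (T (n + 1) ^ p)⁻¹
      = (∑ i ∈ Finset.range (n + 1), b i) / (T (n + 1) ^ p / p) := by
    rw [hBeq, hTr n, Real.mul_rpow (hpos n).le (by linarith [hr1 n])]
    field_simp
  rw [hQe]
  field_simp
  ring
end

section
/- Fix β ∈ (−1,1) and C > 0. For every function 𝔰₁ : (0,∞) → (0,∞) with lim_{T→∞} 𝔰₁(T) = ∞, there exist functions 𝔰₂ : (0,∞) → (0,∞) and S : (0,∞) → (0,∞) such that: 4·𝔰₂(T) ≤ 𝔰₁(T) for all T > 0; 𝔰₂(T) → ∞ and |S(T) − T| = O(T^{2β/(1+β)}·log T) as T → ∞; and for every function θ : (0,∞) → (0,∞) satisfying θ(T) ~ C·T^{2β/(1+β)} as T → ∞, there exists T₀ > 0 such that for all T > T₀, setting q(T) := θ(T)·𝔰₂(T), the interval inclusion [T, T + q(T)/4] ⊆ [S(T) + q(S(T))/2, S(T) + q(S(T))] holds. (In particular 𝔰₂ and S depend on 𝔰₁, β, C but not otherwise on θ; only T₀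 depends on θ.) -/
open Filter Topology

/-- Lipschitz regularisation (inf-convolution) of a nonnegative function tending to infinity. -/
lemma exists_lipschitz_minorant (f : ℝ → ℝ) (hf0 : ∀ x, 0 ≤ f x) (hf : Tendsto f atTop atTop) :
    ∃ G : ℝ → ℝ, (∀ x, 0 ≤ G x) ∧ (∀ x, G x ≤ f x) ∧ (∀ x y, |G x - G y| ≤ |x - y|) ∧
      Tendsto G atTop atTop := by
  have hbdd : ∀ x, BddBelow (Set.range (fun u => f u + |u - x|)) := by
    intro x
    refine ⟨0, ?_⟩
    rintro _ ⟨u, rfl⟩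
    exact add_nonneg (hf0 u) (abs_nonneg _)
  have hlip : ∀ x y, (⨅ u, (f u + |u - x|)) ≤ (⨅ u, (f u + |u - y|)) + |x - y| := by
    intro x y
    rw [← sub_le_iff_le_add]
    apply le_ciInf
    intro u
    have h1 := ciInf_le (hbdd x) u
    have h2 : |u - x| ≤ |u - y| + |x - y| := by
      have := abs_sub_le u y x
      rwa [abs_sub_comm y x] at this
    linarith
  refine ⟨fun x => ⨅ u, (f u + |u - x|), ?_, ?_, ?_, ?_⟩
  · intro x
    exact le_ciInf (fun u => add_nonneg (hf0 u) (abs_nonneg _))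
  · intro x
    have h1 := ciInf_le (hbdd x) x
    simpa using h1
  · intro x y
    rw [abs_le]
    have h1 := hlip x y
    have h2 := hlip y x
    rw [abs_sub_comm y x] at h2
    constructor <;> linarith
  · rw [tendsto_atTop]
    intro M
    obtain ⟨A, hA⟩ := (tendsto_atTop_atTop.1 hf) M
    filter_upwards [eventually_ge_atTop (A + M)] with x hx
    apply le_ciInf
    intro u
    by_cases hu : A ≤ u
    · have := hA u hu
      have := abs_nonneg (u - x)
      linarith
    · have h1 := neg_abs_le (u - x)
      have := hf0 u
      push Not at hu
      linarith

/-- (Coupling windows.) Given `β ∈ (-1,1)`, `C > 0` and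
`𝔰₁ : (0,∞) → (0,∞)` with `𝔰₁(T) → ∞`, there exist `𝔰₂, S : (0,∞) → (0,∞)` with
`4·𝔰₂ ≤ 𝔰₁`, `𝔰₂(T) → ∞`, `|S(T) - T| = O(T^{2β/(1+β)}·log T)`, such that for every
`θ : (0,∞) → (0,∞)` with `θ(T) ~ C·T^{2β/(1+β)}` there is `T₀ > 0` such that for all
`T > T₀`, with `q := θ·𝔰₂`, `[T, T + q(T)/4] ⊆ [S(T) + q(S(T))/2, S(T) + q(S(T))]`. -/
theorem stmt_13 (β C : ℝ) (hβ : -1 < β) (hβ1 : β < 1) (hC : 0 < C)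
    (s1 : ℝ → ℝ) (hs1pos : ∀ T : ℝ, 0 < T → 0 < s1 T)
    (hs1 : Tendsto s1 atTop atTop) :
    ∃ s2 S : ℝ → ℝ,
      (∀ T : ℝ, 0 < T → 0 < s2 T ∧ 0 < S T) ∧
      (∀ T : ℝ, 0 < T → 4 * s2 T ≤ s1 T) ∧
      Tendsto s2 atTop atTop ∧
      (∃ K X : ℝ, ∀ T ≥ X, |S T - T| ≤ K * (T ^ (2 * β / (1 + β)) * Real.log T)) ∧
      (∀ θ : ℝ → ℝ, (∀ T : ℝ, 0 < T → 0 < θ T) →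
        Tendsto (fun T : ℝ => θ T / T ^ (2 * β / (1 + β))) atTop (𝓝 C) →
        ∃ T₀ : ℝ, 0 < T₀ ∧ ∀ T > T₀,
          Set.Icc T (T + θ T * s2 T / 4) ⊆
            Set.Icc (S T + θ (S T) * s2 (S T) / 2) (S T + θ (S T) * s2 (S T))) := by
  set α : ℝ := 2 * β / (1 + β) with hα
  have hα1 : α < 1 := by
    rw [hα, div_lt_one (by linarith)]
    linarith
  obtain ⟨G, hG0, hGf, hGl, hGt⟩ := exists_lipschitz_minorant
    (fun x => min (s1 (Real.exp x) / 4) |x|)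
    (fun x => le_min (by have := hs1pos _ (Real.exp_pos x); linarith) (abs_nonneg x))
    (by
      have ha : Tendsto (fun x => s1 (Real.exp x) / 4) atTop atTop :=
        (hs1.comp Real.tendsto_exp_atTop).atTop_div_const (by norm_num)
      rw [tendsto_atTop]
      intro M
      filter_upwards [ha.eventually_ge_atTop M,
        tendsto_abs_atTop_atTop.eventually_ge_atTop M] with x h1 h2
      exact le_min h1 h2)
  set s2 : ℝ → ℝ := fun T => if 0 < G (Real.log T) then G (Real.log T) else s1 T / 4 with hs2
  set S : ℝ → ℝ := fun T => if 0 < T - 5 / 8 * C * (T ^ α * s2 T) then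
    T - 5 / 8 * C * (T ^ α * s2 T) else T with hS
  have hGlog : Tendsto (fun T => G (Real.log T)) atTop atTop := hGt.comp Real.tendsto_log_atTop
  have hs2eq : ∀ᶠ T in atTop, s2 T = G (Real.log T) := by
    filter_upwards [hGlog.eventually_gt_atTop 0] with T hT
    simp only [hs2, if_pos hT]
  have hs2t : Tendsto s2 atTop atTop := hGlog.congr' (hs2eq.mono fun _ h => h.symm)
  have hs2log : ∀ᶠ T in atTop, s2 T ≤ Real.log T := by
    filter_upwards [hs2eq, eventually_ge_atTop (1 : ℝ)] with T hT h1
    rw [hT]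
    refine (hGf _).trans ((min_le_right _ _).trans ?_)
    rw [abs_of_nonneg (Real.log_nonneg h1)]
  -- the relative displacement tends to zero
  have hlogsmall : Tendsto (fun T : ℝ => Real.log T / T ^ (1 - α)) atTop (𝓝 0) :=
    (isLittleO_log_rpow_atTop (by linarith : 0 < 1 - α)).tendsto_div_nhds_zero
  have hdisp : Tendsto (fun T : ℝ => s2 T / T ^ (1 - α)) atTop (𝓝 0) := by
    refine squeeze_zero' ?_ ?_ hlogsmall
    · filter_upwards [hs2t.eventually_gt_atTop 0, eventually_gt_atTop 0] with T h1 h2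
      positivity
    · filter_upwards [hs2log, eventually_gt_atTop 0] with T h1 h2
      gcongr
  have hratio0 : Tendsto (fun T : ℝ => 1 - 5 / 8 * C * (s2 T / T ^ (1 - α))) atTop (𝓝 1) := by
    have := (hdisp.const_mul (5 / 8 * C)).const_sub 1
    simpa using this
  have hident : ∀ T : ℝ, 0 < T → T - 5 / 8 * C * (T ^ α * s2 T) =
      T * (1 - 5 / 8 * C * (s2 T / T ^ (1 - α))) := by
    intro T hT
    have h1 : T ^ α * T ^ (1 - α) = T := by
      rw [← Real.rpow_add hT]; simp
    have h2 : 0 < T ^ (1 - α) := Real.rpow_pos_of_pos hT _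
    have h3 : T / T ^ (1 - α) = T ^ α := by
      rw [div_eq_iff h2.ne', h1]
    rw [← h3]
    field_simp
  have hSeq : ∀ᶠ T in atTop, S T = T - 5 / 8 * C * (T ^ α * s2 T) := by
    filter_upwards [hratio0.eventually_const_lt (zero_lt_one), eventually_gt_atTop 0] with T h1 h2
    have : 0 < T - 5 / 8 * C * (T ^ α * s2 T) := by
      rw [hident T h2]; positivity
    simp only [hS, if_pos this]
  have hSpos : ∀ T : ℝ, 0 < T → 0 < S T := by
    intro T hT
    simp only [hS]
    split_ifs with h
    · exact h
    · exact hT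
  have hratio : Tendsto (fun T : ℝ => S T / T) atTop (𝓝 1) := by
    refine hratio0.congr' ?_
    filter_upwards [hSeq, eventually_gt_atTop 0] with T h1 h2
    rw [h1, hident T h2]
    field_simp
  have hSt : Tendsto S atTop atTop := by
    have h := hratio.pos_mul_atTop zero_lt_one tendsto_id
    refine h.congr' ?_
    filter_upwards [eventually_gt_atTop 0] with T hT
    simp only [id]
    field_simp
  refine ⟨s2, S, ?_, ?_, hs2t, ?_, ?_⟩
  · intro T hT
    refine ⟨?_, hSpos T hT⟩
    simp only [hs2]
    split_ifs with h
    · exact h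
    · have := hs1pos T hT; linarith
  · intro T hT
    simp only [hs2]
    split_ifs with h
    · have h1 := (hGf (Real.log T)).trans (min_le_left _ _)
      rw [Real.exp_log hT] at h1
      linarith
    · linarith
  · obtain ⟨X, hX⟩ := eventually_atTop.1 (hSeq.and (hs2log.and
      ((hs2t.eventually_gt_atTop 0).and (eventually_gt_atTop (0 : ℝ)))))
    refine ⟨5 / 8 * C, X, fun T hT => ?_⟩
    obtain ⟨h1, h2, h3, h4⟩ := hX T hT
    have h5 : 0 < T ^ α := Real.rpow_pos_of_pos h4 _
    rw [h1, show T - 5 / 8 * C * (T ^ α * s2 T) - T = -(5 / 8 * C * (T ^ α * s2 T)) by ring,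
      abs_neg, abs_of_pos (by positivity)]
    gcongr
  · intro θ hθ hθt
    have hG1 : Tendsto (fun T => s2 (S T) / s2 T) atTop (𝓝 1) := by
      have hl : Tendsto (fun T => |Real.log (S T / T)|) atTop (𝓝 0) := by
        have := ((Real.continuousAt_log one_ne_zero).tendsto.comp hratio).abs
        simpa using this
      have hd : Tendsto (fun T => s2 (S T) - s2 T) atTop (𝓝 0) := by
        refine squeeze_zero_norm' ?_ hl
        filter_upwards [hs2eq, hSt.eventually hs2eq, eventually_gt_atTop 0] with T h1 h2 h3
        rw [h1, h2, Real.norm_eq_abs, Real.log_div (hSpos T h3).ne' h3.ne']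
        exact hGl _ _
      have hq := (hd.div_atTop hs2t).const_add 1
      rw [add_zero] at hq
      refine hq.congr' ?_
      filter_upwards [hs2t.eventually_gt_atTop 0] with T h1
      field_simp
      ring
    have hp : Tendsto (fun T => (S T / T) ^ α) atTop (𝓝 1) := by
      have := hratio.rpow_const (p := α) (Or.inl one_ne_zero)
      simpa using this
    have ha : Tendsto (fun T => θ (S T) / (S T) ^ α * (S T / T) ^ α * (s2 (S T) / s2 T))
        atTop (𝓝 C) := by
      have := ((hθt.comp hSt).mul hp).mul hG1
      simpa using this
    have hb : Tendsto (fun T => θ (S T) / (S T) ^ α * (S T / T) ^ α * (s2 (S T) / s2 T)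
        - θ T / T ^ α / 4) atTop (𝓝 (C - C / 4)) := ha.sub (hθt.div_const 4)
    have e1 := ha.eventually_lt_const (show C < 5 / 4 * C by linarith)
    have e2 := hb.eventually_const_lt (show 5 / 8 * C < C - C / 4 by linarith)
    obtain ⟨X, hX⟩ := eventually_atTop.1 (e1.and (e2.and (hSeq.and
      ((hs2t.eventually_gt_atTop 0).and (eventually_gt_atTop (0 : ℝ))))))
    refine ⟨max X 1, by positivity, fun T hT => ?_⟩
    obtain ⟨h1, h2, h3, h4, h5⟩ := hX T ((le_max_left _ _).trans hT.le)
    have hTp : 0 < T ^ α := Real.rpow_pos_of_pos h5 _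
    have hSp : 0 < (S T) ^ α := Real.rpow_pos_of_pos (hSpos T h5) _
    have hR : 0 < T ^ α * s2 T := by positivity
    have hqS : θ (S T) * s2 (S T) = (θ (S T) / (S T) ^ α * (S T / T) ^ α * (s2 (S T) / s2 T)) *
        (T ^ α * s2 T) := by
      rw [Real.div_rpow (hSpos T h5).le h5.le]
      field_simp
    have hqT : θ T * s2 T = (θ T / T ^ α) * (T ^ α * s2 T) := by
      field_simp
    rw [hqS, hqT]
    generalize θ (S T) / (S T) ^ α * (S T / T) ^ α * (s2 (S T) / s2 T) = a at h1 h2 ⊢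
    generalize θ T / T ^ α = b at h2 ⊢
    rw [h3]
    generalize T ^ α * s2 T = R at hR ⊢
    apply Set.Icc_subset_Icc
    · nlinarith
    · nlinarith
end

section
/- Let (E, 𝓔) be a measurable space and (P_t)_{t≥0} a family of Markov (probability) kernels on E which forms a semigroup in the sense that (ν P_s) P_t = ν P_{s+t} for all probability measures ν on E and all s, t ≥ 0, and ν P_0 = ν, where ν P_t(A) := ∫_E P_t(x, A) dν(x). Suppose that for every t > 0 there exist a probability measure μ_t on E and a constant λ_t ∈ (0,1) such that μ_t P_{nt} = μ_t for all n ∈ ℕ and d_TV(ν P_{nt}, μ_t) ≤ 2·λ_t^n for every probability measure ν on E and every n ∈ ℕ. Then: all the measures μ_t (t > 0) coincide, equal to a single probability measure μ; μ P_t = μ for all t ≥ 0; and, with C₀ := 2/λ₁, d_TV(ν P_t, μ) ≤ C₀·λ₁^t for every probability measure ν on E and every t ≥ 0. -/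
open Filter Topology MeasureTheory

/-- Let `(P_t)_{t ≥ 0}` be a semigroup of Markov kernels on a measurable
space `E` (acting on probability measures by `ν P_t = ν.bind (κ t)`). Suppose for every
`t > 0` there are a probability measure `μ_t` with `μ_t P_{nt} = μ_t` for all `n ∈ ℕ` and a
constant `λ_t ∈ (0,1)` with `d_TV(ν P_{nt}, μ_t) ≤ 2 λ_t^n` for all probability measures
`ν` and all `n`. Then all the `μ_t` coincide, the common measure `μ = μ₁` is invariant
(`μ P_t = μ` for all `t ≥ 0`), and with `C₀ := 2/λ₁` one has
`d_TV(ν P_t, μ) ≤ C₀·λ₁^t` for all probability measures `ν` and all `t ≥ 0`.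
(The total variation distance bound is expressed by bounding `|ν P_t (A) - μ (A)|`
over all measurable sets `A`.) -/
theorem stmt_15 {E : Type*} [MeasurableSpace E]
    (κ : ℝ → ProbabilityTheory.Kernel E E)
    (hκ : ∀ t : ℝ, ProbabilityTheory.IsMarkovKernel (κ t))
    (hsemi : ∀ ν : Measure E, IsProbabilityMeasure ν → ∀ s t : ℝ, 0 ≤ s → 0 ≤ t →
      (ν.bind ⇑(κ s)).bind ⇑(κ t) = ν.bind ⇑(κ (s + t)))
    (hid : ∀ ν : Measure E, IsProbabilityMeasure ν → ν.bind ⇑(κ 0) = ν)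
    (μt : ℝ → Measure E) (lam : ℝ → ℝ)
    (hμt : ∀ t : ℝ, 0 < t → IsProbabilityMeasure (μt t))
    (hlam : ∀ t : ℝ, 0 < t → lam t ∈ Set.Ioo (0:ℝ) 1)
    (hinv : ∀ t : ℝ, 0 < t → ∀ n : ℕ, (μt t).bind ⇑(κ (n * t)) = μt t)
    (hTV : ∀ t : ℝ, 0 < t → ∀ ν : Measure E, IsProbabilityMeasure ν → ∀ n : ℕ,
      ∀ A : Set E, MeasurableSet A →
        |(ν.bind ⇑(κ (n * t)) A).toReal - (μt t A).toReal| ≤ 2 * lam t ^ n) :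
    (∀ s : ℝ, 0 < s → ∀ t : ℝ, 0 < t → μt s = μt t) ∧
    (∀ t : ℝ, 0 ≤ t → (μt 1).bind ⇑(κ t) = μt 1) ∧
    (∀ ν : Measure E, IsProbabilityMeasure ν → ∀ t : ℝ, 0 ≤ t →
      ∀ A : Set E, MeasurableSet A →
        |(ν.bind ⇑(κ t) A).toReal - (μt 1 A).toReal| ≤ (2 / lam 1) * lam 1 ^ t) := by
  have hprob : ∀ ν : Measure E, IsProbabilityMeasure ν → ∀ t : ℝ,
      IsProbabilityMeasure (ν.bind ⇑(κ t)) := by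
    intro ν hν t
    have := hκ t
    infer_instance
  have huniq : ∀ s : ℝ, 0 < s → ∀ ν : Measure E, IsProbabilityMeasure ν →
      ν.bind ⇑(κ s) = ν → ν = μt s := by
    intro s hs ν hν h
    have hn : ∀ n : ℕ, ν.bind ⇑(κ (n * s)) = ν := by
      intro n
      induction n with
      | zero => simpa using hid ν hν
      | succ k ih =>
        have h1 := hsemi ν hν (k * s) s (by positivity) hs.le
        rw [ih, h] at h1
        rw [show ((k + 1 : ℕ) : ℝ) * s = k * s + s by push_cast; ring]
        exact h1.symm
    have := hμt s hs
    obtain ⟨l0, l1⟩ := hlam s hs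
    ext A hA
    have hlim : Tendsto (fun n : ℕ => 2 * lam s ^ n) atTop (𝓝 0) := by
      simpa using (tendsto_pow_atTop_nhds_zero_of_lt_one l0.le l1).const_mul 2
    have hle : |(ν A).toReal - (μt s A).toReal| ≤ 0 := by
      refine ge_of_tendsto' hlim fun n => ?_
      have := hTV s hs ν hν n A hA
      rwa [hn n] at this
    have h0 := sub_eq_zero.mp (abs_nonpos_iff.mp hle)
    exact (ENNReal.toReal_eq_toReal_iff' (measure_ne_top _ _) (measure_ne_top _ _)).mp h0
  have hinvall : ∀ s : ℝ, 0 < s → ∀ t : ℝ, 0 < t → (μt t).bind ⇑(κ s) = μt t := by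
    intro s hs t ht
    have hp := hμt t ht
    refine huniq t ht _ (hprob _ hp s) ?_
    have h1 := hinv t ht 1
    rw [Nat.cast_one, one_mul] at h1
    rw [hsemi _ hp s t hs.le ht.le, add_comm, ← hsemi _ hp t s ht.le hs.le, h1]
  refine ⟨?_, ?_, ?_⟩
  · intro s hs t ht
    exact (huniq s hs _ (hμt t ht) (hinvall s hs t ht)).symm
  · intro t ht
    rcases ht.eq_or_lt with rfl | h
    · exact hid _ (hμt 1 one_pos)
    · exact hinvall t h 1 one_pos
  · intro ν hν t ht A hA
    obtain ⟨l0, l1⟩ := hlam 1 one_pos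
    have hfl := Nat.floor_le ht
    have hlt := Nat.lt_floor_add_one t
    have h1 := hTV 1 one_pos _ (hprob ν hν (t - ⌊t⌋₊)) ⌊t⌋₊ A hA
    rw [mul_one, hsemi ν hν _ _ (by linarith) (by positivity), sub_add_cancel] at h1
    refine h1.trans ?_
    have h2 : lam 1 ^ ⌊t⌋₊ ≤ lam 1 ^ (t - 1) := by
      rw [← Real.rpow_natCast]
      exact Real.rpow_le_rpow_of_exponent_ge l0 l1.le (by linarith)
    rw [Real.rpow_sub_one l0.ne'] at h2
    calc 2 * lam 1 ^ ⌊t⌋₊ ≤ 2 * (lam 1 ^ t / lam 1) := by gcongr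
      _ = _ := by ring
end

section
/- Assume (D₂⁺) and fix γ ≥ 2/(1−β). For h > 0 set x_h := −h^{−γ}/b(h^{−γ}) and, for x > x_h, define F(h,x) := b(b(h^{−γ})·x + h^{−γ})/b(h^{−γ}). Then for every fixed x ∈ ℝ: (i) lim_{h→0⁺} ∂_x F(h,x) = 0, where ∂_x F(h,x) = b′(b(h^{−γ})·x + h^{−γ}); and (ii) lim_{h→0⁺} ∂_h F(h,x) = 0. (For each fixed x one has x > x_h for all sufficiently small h > 0, so these derivatives are eventually defined; consequently F, extended by F(h,x) := 1 for h ≤ 0, is C¹ on {(h,x) : h ≤ 0, or h > 0 and x > x_h}.) -/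
open Filter Topology

lemma aux_small_s17 (g : ℝ → ℝ) (e e' ε : ℝ) (he : e ≤ e') (hε : 0 < ε)
    (h : Tendsto (fun x : ℝ => g x / x ^ e) atTop (𝓝 0)) :
    ∀ᶠ x in atTop, |g x| ≤ ε * x ^ e' := by
  have h1 : ∀ᶠ x in atTop, |g x / x ^ e| < ε := by
    have := h.abs
    rw [abs_zero] at this
    exact this.eventually (gt_mem_nhds hε)
  filter_upwards [h1, eventually_ge_atTop 1] with x hx hx1
  have hp : 0 < x ^ e := Real.rpow_pos_of_pos (by linarith) _
  rw [abs_div, abs_of_pos hp, div_lt_iff₀ hp] at hx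
  exact hx.le.trans (mul_le_mul_of_nonneg_left (Real.rpow_le_rpow_of_exponent_le hx1 he) hε.le)

lemma aux_b (β ainf : ℝ) (hβ1 : β < 1) (ha : 0 < ainf)
    (b b' f f' f'' : ℝ → ℝ)
    (hb' : ∀ x : ℝ, 0 < x → HasDerivAt b (b' x) x)
    (hbf : ∀ x : ℝ, 0 < x → b x = ainf * x ^ β + f x)
    (hf' : ∀ x : ℝ, 0 < x → HasDerivAt f (f' x) x)
    (hf'' : ∀ x : ℝ, 0 < x → HasDerivAt f' (f'' x) x)
    (hfo : Tendsto (fun x : ℝ => f x / x ^ ((3 * β - 1) / 2)) atTop (𝓝 0))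
    (hf'o : Tendsto (fun x : ℝ => f' x / x ^ ((3 * β - 3) / 2)) atTop (𝓝 0))
    (hf''o : Tendsto (fun x : ℝ => f'' x / x ^ ((3 * β - 5) / 2)) atTop (𝓝 0)) :
    ∃ b'' : ℝ → ℝ, ∃ Y K c : ℝ, 1 ≤ Y ∧ 0 < K ∧ 0 < c ∧ ∀ t, Y ≤ t →
      HasDerivAt b' (b'' t) t ∧ |b' t| ≤ K * t ^ (β - 1) ∧ |b'' t| ≤ K * t ^ (β - 2) ∧
      c * t ^ β ≤ b t ∧ b t ≤ K * t ^ β := by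
  have hb'eq : ∀ x : ℝ, 0 < x → b' x = ainf * (β * x ^ (β - 1)) + f' x := by
    intro x hx
    have h1 : HasDerivAt (fun x => ainf * x ^ β + f x) (ainf * (β * x ^ (β - 1)) + f' x) x :=
      ((Real.hasDerivAt_rpow_const (Or.inl hx.ne')).const_mul ainf).add (hf' x hx)
    have h2 : b =ᶠ[𝓝 x] (fun x => ainf * x ^ β + f x) := by
      filter_upwards [lt_mem_nhds hx] with y hy using hbf y hy
    exact (hb' x hx).unique (h1.congr_of_eventuallyEq h2)
  have hb'' : ∀ x : ℝ, 0 < x →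
      HasDerivAt b' (ainf * (β * ((β - 1) * x ^ (β - 2))) + f'' x) x := by
    intro x hx
    have h0 := Real.hasDerivAt_rpow_const (x := x) (p := β - 1) (Or.inl hx.ne')
    rw [show β - 1 - 1 = β - 2 by ring] at h0
    have h1 := ((h0.const_mul β).const_mul ainf).add (hf'' x hx)
    refine h1.congr_of_eventuallyEq ?_
    filter_upwards [lt_mem_nhds hx] with y hy using hb'eq y hy
  have e0 := aux_small_s17 f _ β (ainf / 2) (by linarith) (by linarith) hfo
  have e1 := aux_small_s17 f' _ (β - 1) 1 (by linarith) (by linarith) hf'o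
  have e2 := aux_small_s17 f'' _ (β - 2) 1 (by linarith) (by linarith) hf''o
  obtain ⟨Y, hY⟩ := eventually_atTop.1 (e0.and (e1.and (e2.and (eventually_ge_atTop 1))))
  refine ⟨fun x => ainf * (β * ((β - 1) * x ^ (β - 2))) + f'' x, max Y 1, 2 * ainf + ainf * |β| + ainf * |β| * |β - 1| + 1, ainf / 2, le_max_right _ _,
    by positivity, by positivity, ?_⟩
  intro t ht
  obtain ⟨h0, h1, h2, h3⟩ := hY t ((le_max_left _ _).trans ht)
  have tp : 0 < t := by linarith
  have q0 : 0 < t ^ β := Real.rpow_pos_of_pos tp _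
  have q1 : 0 < t ^ (β - 1) := Real.rpow_pos_of_pos tp _
  have q2 : 0 < t ^ (β - 2) := Real.rpow_pos_of_pos tp _
  have p1 : 0 ≤ ainf * |β| := by positivity
  have p2 : 0 ≤ ainf * |β| * |β - 1| := by positivity
  refine ⟨hb'' t tp, ?_, ?_, ?_, ?_⟩
  · rw [hb'eq t tp]
    refine (abs_add_le _ _).trans ?_
    rw [abs_mul, abs_mul, abs_of_pos ha, abs_of_pos q1]
    nlinarith
  · refine (abs_add_le _ _).trans ?_
    rw [abs_mul, abs_mul, abs_mul, abs_of_pos ha, abs_of_pos q2]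
    nlinarith
  · rw [hbf t tp]
    have := (abs_le.1 h0).1
    linarith
  · rw [hbf t tp]
    have := (abs_le.1 h0).2
    nlinarith

lemma aux_y (β M : ℝ) (hβ1 : β < 1) (hM : 0 < M) (b b' b'' : ℝ → ℝ) (Y K c : ℝ)
    (hY : 1 ≤ Y) (hK : 0 < K) (hc : 0 < c)
    (hb' : ∀ x : ℝ, 0 < x → HasDerivAt b (b' x) x)
    (H : ∀ t, Y ≤ t →
      HasDerivAt b' (b'' t) t ∧ |b' t| ≤ K * t ^ (β - 1) ∧ |b'' t| ≤ K * t ^ (β - 2) ∧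
      c * t ^ β ≤ b t ∧ b t ≤ K * t ^ β) :
    ∃ C : ℝ, 0 < C ∧ ∀ᶠ y in atTop, ∀ x, |x| ≤ M →
      0 < b y ∧ y / 2 ≤ b y * x + y ∧ |b (b y * x + y) / b y - 1| ≤ C * y ^ (β - 1) ∧
      |b' (b y * x + y)| ≤ C * y ^ (β - 1) ∧
      |b' (b y * x + y) * (b' y * x + 1) / b y - b (b y * x + y) * b' y / b y ^ 2|
        ≤ C * y ^ (β - 2) := by
  obtain ⟨K1, hK1⟩ : ∃ K1, K1 = K * 2 ^ (2 - β) := ⟨_, rfl⟩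
  have h2p : (0:ℝ) < 2 ^ (2 - β) := by positivity
  have hK1p : 0 < K1 := by rw [hK1]; positivity
  have hlim : Tendsto (fun y : ℝ => y ^ (β - 1)) atTop (𝓝 0) := by
    have := tendsto_rpow_neg_atTop (show 0 < 1 - β by linarith)
    simpa using this
  have hs : ∀ᶠ y : ℝ in atTop, y ^ (β - 1) < 1 / (2 * (M * K)) :=
    hlim.eventually (gt_mem_nhds (by positivity))
  refine ⟨K1 * M + K1 + K1 * M + 2 * (M * K1 * K1 / c), by positivity, ?_⟩
  filter_upwards [hs, eventually_ge_atTop (2 * Y)] with y hy1 hy2 x hx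
  have yp : 0 < y := by linarith
  obtain ⟨-, -, -, hl, hu⟩ := H y (by linarith)
  have q0 : 0 < y ^ β := Real.rpow_pos_of_pos yp _
  have q1 : 0 < y ^ (β - 1) := Real.rpow_pos_of_pos yp _
  have q2 : 0 < y ^ (β - 2) := Real.rpow_pos_of_pos yp _
  have r1 : y ^ β = y ^ (β - 1) * y := by
    rw [← Real.rpow_add_one yp.ne']; congr 1; ring
  have r2 : y ^ (β - 1) = y ^ (β - 2) * y := by
    rw [← Real.rpow_add_one yp.ne']; congr 1; ring
  have byp : 0 < b y := lt_of_lt_of_le (by positivity) hl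
  have hbx : |b y * x| ≤ y / 2 := by
    rw [abs_mul, abs_of_pos byp]
    have : y ^ (β - 1) * (2 * (M * K)) < 1 := by
      rwa [lt_div_iff₀ (by positivity)] at hy1
    calc b y * |x| ≤ (K * y ^ β) * M := by gcongr
      _ = (y ^ (β - 1) * (2 * (M * K))) * (y / 2) := by rw [r1]; ring
      _ ≤ 1 * (y / 2) := by gcongr
      _ = y / 2 := one_mul _
  set z := b y * x + y with hz
  have hzy : y / 2 ≤ z := by have := (abs_le.1 hbx).1; linarith
  have B1 : ∀ t, y / 2 ≤ t → |b' t| ≤ K1 * y ^ (β - 1) := by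
    intro t ht
    refine (H t (by linarith)).2.1.trans ?_
    have : t ^ (β - 1) ≤ (y / 2) ^ (β - 1) :=
      Real.rpow_le_rpow_of_nonpos (by linarith) ht (by linarith)
    have h3 : (y / 2) ^ (β - 1) = y ^ (β - 1) * 2 ^ (1 - β) := by
      rw [Real.div_rpow yp.le (by norm_num), div_eq_mul_inv, ← Real.rpow_neg (by norm_num)]
      congr 2; ring
    have h4 : (2:ℝ) ^ (1 - β) ≤ 2 ^ (2 - β) :=
      Real.rpow_le_rpow_of_exponent_le (by norm_num) (by linarith)
    calc K * t ^ (β - 1) ≤ K * (y ^ (β - 1) * 2 ^ (2 - β)) := by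
          rw [h3] at this
          gcongr
          exact this.trans (by gcongr)
      _ = _ := by rw [hK1]; ring
  have B2 : ∀ t, y / 2 ≤ t → |b'' t| ≤ K1 * y ^ (β - 2) := by
    intro t ht
    refine (H t (by linarith)).2.2.1.trans ?_
    have : t ^ (β - 2) ≤ (y / 2) ^ (β - 2) :=
      Real.rpow_le_rpow_of_nonpos (by linarith) ht (by linarith)
    have h3 : (y / 2) ^ (β - 2) = y ^ (β - 2) * 2 ^ (2 - β) := by
      rw [Real.div_rpow yp.le (by norm_num), div_eq_mul_inv, ← Real.rpow_neg (by norm_num)]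
      congr 2; ring
    calc K * t ^ (β - 2) ≤ K * (y ^ (β - 2) * 2 ^ (2 - β)) := by
          rw [h3] at this
          gcongr
      _ = _ := by rw [hK1]; ring
  have D0 : |b z - b y| ≤ K1 * y ^ (β - 1) * (b y * M) := by
    have := (convex_Ici (y / 2)).norm_image_sub_le_of_norm_hasDerivWithin_le (f := b) (f' := b')
      (C := K1 * y ^ (β - 1)) (x := y) (y := z)
      (fun t ht => (hb' t (by have := Set.mem_Ici.1 ht; linarith)).hasDerivWithinAt)
      (fun t ht => B1 t ht) (Set.mem_Ici.2 (by linarith)) hzy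
    rw [Real.norm_eq_abs, Real.norm_eq_abs, hz, add_sub_cancel_right, abs_mul, abs_of_pos byp,
      ← hz] at this
    exact this.trans (by gcongr)
  have D1 : |b' z - b' y| ≤ K1 * y ^ (β - 2) * (b y * M) := by
    have := (convex_Ici (y / 2)).norm_image_sub_le_of_norm_hasDerivWithin_le (f := b') (f' := b'')
      (C := K1 * y ^ (β - 2)) (x := y) (y := z)
      (fun t ht => (H t (by have := Set.mem_Ici.1 ht; linarith)).1.hasDerivWithinAt)
      (fun t ht => B2 t ht) (Set.mem_Ici.2 (by linarith)) hzy
    rw [Real.norm_eq_abs, Real.norm_eq_abs, hz, add_sub_cancel_right, abs_mul, abs_of_pos byp,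
      ← hz] at this
    exact this.trans (by gcongr)
  have Bz := B1 z hzy
  have By := B1 y (by linarith)
  have s1 : 0 ≤ K1 * M := by positivity
  have s2 : 0 ≤ M * K1 * K1 / c := by positivity
  -- y^(β-1)^2 / b y ≤ y^(β-2) / c
  have key : M * K1 * K1 * (y ^ (β - 1) * y ^ (β - 1)) / b y ≤ M * K1 * K1 / c * y ^ (β - 2) := by
    rw [div_le_iff₀ byp]
    calc M * K1 * K1 * (y ^ (β - 1) * y ^ (β - 1))
        = M * K1 * K1 / c * y ^ (β - 2) * (c * y ^ β) := by
          rw [r1, r2]; field_simp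
      _ ≤ _ := by gcongr
  refine ⟨byp, hzy, ?_, ?_, ?_⟩
  · rw [show b z / b y - 1 = (b z - b y) / b y by field_simp, abs_div, abs_of_pos byp,
      div_le_iff₀ byp]
    refine D0.trans ?_
    have : 0 ≤ (K1 + K1 * M + 2 * (M * K1 * K1 / c)) * y ^ (β - 1) * b y := by positivity
    nlinarith
  · nlinarith
  · have e : b' z * (b' y * x + 1) / b y - b z * b' y / b y ^ 2
      = (b' z - b' y) / b y + x * b' z * b' y / b y - (b z - b y) * b' y / b y ^ 2 := by
      field_simp; ring
    rw [e]
    have t1 : |(b' z - b' y) / b y| ≤ K1 * M * y ^ (β - 2) := by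
      rw [abs_div, abs_of_pos byp, div_le_iff₀ byp]
      linarith
    have t2 : |x * b' z * b' y / b y| ≤ M * K1 * K1 / c * y ^ (β - 2) := by
      refine le_trans ?_ key
      rw [abs_div, abs_of_pos byp, abs_mul, abs_mul]
      refine div_le_div_of_nonneg_right ?_ byp.le
      calc |x| * |b' z| * |b' y| ≤ M * (K1 * y ^ (β - 1)) * (K1 * y ^ (β - 1)) := by gcongr
        _ = _ := by ring
    have t3 : |(b z - b y) * b' y / b y ^ 2| ≤ M * K1 * K1 / c * y ^ (β - 2) := by
      refine le_trans ?_ key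
      rw [abs_div, abs_of_pos (pow_pos byp 2), abs_mul, div_le_div_iff₀ (by positivity) byp]
      calc |b z - b y| * |b' y| * b y
          ≤ (K1 * y ^ (β - 1) * (b y * M)) * (K1 * y ^ (β - 1)) * b y := by gcongr
        _ = _ := by ring
    have t4 := abs_sub ((b' z - b' y) / b y + x * b' z * b' y / b y) ((b z - b y) * b' y / b y ^ 2)
    have t5 := abs_add_le ((b' z - b' y) / b y) (x * b' z * b' y / b y)
    have : 0 ≤ (K1 + K1 * M) * y ^ (β - 2) := by positivity
    nlinarith

/-- uniform bounds in `h`. -/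
lemma aux_h (β γ M : ℝ) (hβ1 : β < 1) (hγ : 2 / (1 - β) ≤ γ) (b b' : ℝ → ℝ)
    (hb' : ∀ x : ℝ, 0 < x → HasDerivAt b (b' x) x) (C : ℝ) (hC : 0 < C)
    (H : ∀ᶠ y in atTop, ∀ x, |x| ≤ M →
      0 < b y ∧ y / 2 ≤ b y * x + y ∧ |b (b y * x + y) / b y - 1| ≤ C * y ^ (β - 1) ∧
      |b' (b y * x + y)| ≤ C * y ^ (β - 1) ∧
      |b' (b y * x + y) * (b' y * x + 1) / b y - b (b y * x + y) * b' y / b y ^ 2|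
        ≤ C * y ^ (β - 2)) :
    ∃ Fh : ℝ → ℝ → ℝ, ∃ C' : ℝ, 0 < C' ∧ ∃ δ > 0, ∀ h, 0 < h → h < δ → ∀ x, |x| ≤ M →
      -(h ^ (-γ)) / b (h ^ (-γ)) < x ∧
      |b (b (h ^ (-γ)) * x + h ^ (-γ)) / b (h ^ (-γ)) - 1| ≤ C' * h ^ 2 ∧
      |b' (b (h ^ (-γ)) * x + h ^ (-γ))| ≤ C' * h ^ 2 ∧ |Fh x h| ≤ C' * h ∧
      HasDerivAt (fun h' : ℝ => b (b (h' ^ (-γ)) * x + h' ^ (-γ)) / b (h' ^ (-γ))) (Fh x h) h ∧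
      HasDerivAt (fun x' : ℝ => b (b (h ^ (-γ)) * x' + h ^ (-γ)) / b (h ^ (-γ)))
        (b' (b (h ^ (-γ)) * x + h ^ (-γ))) x := by
  have hγp : 0 < γ := lt_of_lt_of_le (div_pos (by norm_num) (by linarith)) hγ
  have hγ2 : 2 ≤ γ * (1 - β) := by rwa [div_le_iff₀ (by linarith)] at hγ
  have H1 := (tendsto_rpow_neg_nhdsGT_zero (y := -γ) (by linarith)).eventually
    (H.and (eventually_gt_atTop 0))
  rw [eventually_nhdsWithin_iff, Metric.eventually_nhds_iff] at H1
  obtain ⟨δ, hδ, H2⟩ := H1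
  refine ⟨fun x h => (b' (b (h ^ (-γ)) * x + h ^ (-γ)) * (b' (h ^ (-γ)) * x + 1) / b (h ^ (-γ)) -
    b (b (h ^ (-γ)) * x + h ^ (-γ)) * b' (h ^ (-γ)) / b (h ^ (-γ)) ^ 2) * (-γ * h ^ (-γ - 1)),
    C + C * γ, by positivity, min δ 1, by positivity, ?_⟩
  intro h h0 h1 x hx
  obtain ⟨h3, yp⟩ := H2 (show dist h 0 < δ by
    rw [Real.dist_eq, sub_zero, abs_of_pos h0]; exact h1.trans_le (min_le_left _ _)) h0
  have hlt1 : h ≤ 1 := (h1.trans_le (min_le_right _ _)).le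
  obtain ⟨byp, hz, a1, a2, a3⟩ := h3 x hx
  have k1 : (h ^ (-γ)) ^ (β - 1) ≤ h ^ 2 := by
    rw [← Real.rpow_mul h0.le, ← Real.rpow_natCast]
    exact Real.rpow_le_rpow_of_exponent_ge h0 hlt1 (by push_cast; linarith)
  have k2 : (h ^ (-γ)) ^ (β - 2) * h ^ (-γ - 1) ≤ h := by
    rw [← Real.rpow_mul h0.le, ← Real.rpow_add h0]
    calc h ^ (-γ * (β - 2) + (-γ - 1)) ≤ h ^ (1:ℝ) :=
          Real.rpow_le_rpow_of_exponent_ge h0 hlt1 (by linarith)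
      _ = h := Real.rpow_one h
  have hy : HasDerivAt (fun h' : ℝ => h' ^ (-γ)) (-γ * h ^ (-γ - 1)) h :=
    Real.hasDerivAt_rpow_const (Or.inl h0.ne')
  have hzp : 0 < b (h ^ (-γ)) * x + h ^ (-γ) := by linarith
  refine ⟨?_, ?_, ?_, ?_, ?_, ?_⟩
  · rw [div_lt_iff₀ byp]; linarith
  · refine a1.trans ?_
    have : 0 ≤ C * γ * h ^ 2 := by positivity
    nlinarith
  · refine a2.trans ?_
    have : 0 ≤ C * γ * h ^ 2 := by positivity
    nlinarith
  · have hp : 0 < h ^ (-γ - 1) := Real.rpow_pos_of_pos h0 _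
    rw [abs_mul, abs_mul, abs_neg, abs_of_pos hγp, abs_of_pos hp]
    calc _ ≤ C * (h ^ (-γ)) ^ (β - 2) * (γ * h ^ (-γ - 1)) := by gcongr
      _ = C * γ * ((h ^ (-γ)) ^ (β - 2) * h ^ (-γ - 1)) := by ring
      _ ≤ C * γ * h := by gcongr
      _ ≤ _ := by nlinarith
  · have hby : HasDerivAt (fun h' : ℝ => b (h' ^ (-γ))) _ h := (hb' _ yp).comp h hy
    have hbz : HasDerivAt (fun h' : ℝ => b (b (h' ^ (-γ)) * x + h' ^ (-γ))) _ h :=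
      (hb' _ hzp).comp h ((hby.mul_const x).add hy)
    refine (hbz.div hby byp.ne').congr_deriv ?_
    field_simp
    ring
  · have hbz : HasDerivAt (fun x' : ℝ => b (b (h ^ (-γ)) * x' + h ^ (-γ))) _ x :=
      (hb' _ hzp).comp x (((hasDerivAt_id x).const_mul (b (h ^ (-γ)))).add_const (h ^ (-γ)))
    refine (hbz.div_const (b (h ^ (-γ)))).congr_deriv ?_
    field_simp

/-- `C¹` at the boundary from uniform bounds. -/
lemma aux_zero (F : ℝ × ℝ → ℝ) (Fh Fx : ℝ → ℝ → ℝ) (x0 C δ : ℝ) (hC : 0 < C) (hδ : 0 < δ)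
    (hneg : ∀ p : ℝ × ℝ, p.1 ≤ 0 → F p = 1)
    (hsm : ∀ p : ℝ × ℝ, 0 < p.1 → p.1 < δ → |p.2| ≤ |x0| + 1 → ContDiffAt ℝ 1 F p)
    (hF : ∀ h, 0 < h → h < δ → ∀ x, |x| ≤ |x0| + 1 → |F (h, x) - 1| ≤ C * h ^ 2 ∧
      |Fx x h| ≤ C * h ^ 2 ∧ |Fh x h| ≤ C * h ∧
      HasDerivAt (fun h' => F (h', x)) (Fh x h) h ∧
      HasDerivAt (fun x' => F (h, x')) (Fx x h) x) :
    ContDiffAt ℝ 1 F (0, x0) := by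
  set u : Set (ℝ × ℝ) := {q | q.1 < δ ∧ |q.2| < |x0| + 1} with hu
  have huo : IsOpen u :=
    (isOpen_lt continuous_fst continuous_const).inter
      (isOpen_lt continuous_snd.abs continuous_const)
  have hlt : ∀ p : ℝ × ℝ, p.1 < 0 → ContDiffAt ℝ 1 F p := by
    intro p hp
    refine (contDiffAt_const (c := (1:ℝ))).congr_of_eventuallyEq ?_
    filter_upwards [continuous_fst.continuousAt.eventually (gt_mem_nhds hp)] with q hq
      using hneg q hq.le
  have hB : ∀ q ∈ u, |F q - 1| ≤ C * q.1 ^ 2 := by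
    intro q hq
    rcases le_or_gt q.1 0 with h | h
    · rw [hneg q h]; simp; positivity
    · exact (hF q.1 h hq.1 q.2 hq.2.le).1
  have hz : ∀ q ∈ u, q.1 = 0 → HasFDerivAt F (0 : ℝ × ℝ →L[ℝ] ℝ) q := by
    intro q hq h0
    have : (fun p => F p - 1) =O[𝓝 q] fun p => ‖p - q‖ ^ 2 := by
      refine Asymptotics.IsBigO.of_bound C ?_
      filter_upwards [huo.mem_nhds hq] with p hp
      rw [Real.norm_eq_abs, Real.norm_eq_abs, abs_of_nonneg (by positivity : 0 ≤ ‖p - q‖ ^ 2)]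
      refine (hB p hp).trans ?_
      have h1 : |p.1| ≤ ‖p - q‖ := by
        have := norm_fst_le (p - q)
        rwa [Prod.fst_sub, h0, sub_zero, Real.norm_eq_abs] at this
      rw [← sq_abs]
      gcongr
    have h2 := (this.hasFDerivAt (𝕜 := ℝ) (by norm_num)).add_const (1:ℝ)
    simpa using h2
  have hd : ∀ q ∈ u, q.1 ≠ 0 → ContDiffAt ℝ 1 F q := by
    intro q hq h0
    rcases lt_or_gt_of_ne h0 with h | h
    · exact hlt q h
    · exact hsm q h hq.1 hq.2.le
  have hN : ∀ q ∈ u, ‖fderiv ℝ F q‖ ≤ C * |q.1| + C * q.1 ^ 2 := by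
    intro q hq
    rcases lt_trichotomy q.1 0 with h | h | h
    · have : fderiv ℝ F q = 0 := by
        have : F =ᶠ[𝓝 q] fun _ => 1 := by
          filter_upwards [continuous_fst.continuousAt.eventually (gt_mem_nhds h)] with q hq
            using hneg q hq.le
        rw [this.fderiv_eq]; simp
      rw [this, norm_zero]; positivity
    · rw [(hz q hq h).fderiv, norm_zero]; positivity
    · obtain ⟨-, k1, k2, k3, k4⟩ := hF q.1 h hq.1 q.2 hq.2.le
      have hL : HasFDerivAt F (fderiv ℝ F q) (q.1, q.2) :=
        ((hsm q h hq.1 hq.2.le).differentiableAt (by norm_num)).hasFDerivAt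
      have e1 : fderiv ℝ F q (1, 0) = Fh q.2 q.1 :=
        (hL.comp_hasDerivAt q.1 ((hasDerivAt_id q.1).prodMk (hasDerivAt_const q.1 q.2))).unique k3
      have e2 : fderiv ℝ F q (0, 1) = Fx q.2 q.1 :=
        (hL.comp_hasDerivAt q.2 ((hasDerivAt_const q.2 q.1).prodMk (hasDerivAt_id q.2))).unique k4
      refine ContinuousLinearMap.opNorm_le_bound _ (by positivity) ?_
      intro v
      have ev : v = v.1 • ((1:ℝ), (0:ℝ)) + v.2 • ((0:ℝ), (1:ℝ)) := by
        ext <;> simp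
      have : fderiv ℝ F q v = v.1 * Fh q.2 q.1 + v.2 * Fx q.2 q.1 := by
        conv_lhs => rw [ev]
        rw [map_add, map_smul, map_smul, e1, e2, smul_eq_mul, smul_eq_mul]
      rw [this, Real.norm_eq_abs, abs_of_pos h]
      refine (abs_add_le _ _).trans ?_
      rw [abs_mul, abs_mul]
      have n1 : |v.1| ≤ ‖v‖ := norm_fst_le v
      have n2 : |v.2| ≤ ‖v‖ := norm_snd_le v
      calc |v.1| * |Fh q.2 q.1| + |v.2| * |Fx q.2 q.1|
          ≤ ‖v‖ * (C * q.1) + ‖v‖ * (C * q.1 ^ 2) := by gcongr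
        _ = _ := by ring
  rw [contDiffAt_one_iff]
  refine ⟨fderiv ℝ F, u, huo.mem_nhds ⟨hδ, by simp⟩, ?_, ?_⟩
  · intro q hq
    refine ContinuousAt.continuousWithinAt ?_
    by_cases h0 : q.1 = 0
    · have : Tendsto (fderiv ℝ F) (𝓝 q) (𝓝 0) := by
        refine squeeze_zero_norm' (a := fun q : ℝ × ℝ => C * |q.1| + C * q.1 ^ 2) ?_ ?_
        · filter_upwards [huo.mem_nhds hq] with p hp using hN p hp
        · have hc : Continuous (fun q : ℝ × ℝ => C * |q.1| + C * q.1 ^ 2) := by fun_prop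
          have := hc.tendsto q
          simpa [h0] using this
      rwa [ContinuousAt, (hz q hq h0).fderiv]
    · exact ((hd q hq h0).fderiv_right (m := 0) (by norm_num)).continuousAt
  · intro q hq
    by_cases h0 : q.1 = 0
    · rw [(hz q hq h0).fderiv]; exact hz q hq h0
    · exact ((hd q hq h0).differentiableAt (by norm_num)).hasFDerivAt

/-- Under (D₂⁺), with `γ ≥ 2/(1-β)` and
`F(h,x) := b(b(h^{-γ})·x + h^{-γ})/b(h^{-γ})` for `h > 0` and `x > x_h := -h^{-γ}/b(h^{-γ})`:
for every fixed `x ∈ ℝ`, eventually `x > x_h` as `h → 0⁺`;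
`∂ₓF(h,x) = b′(b(h^{-γ})·x + h^{-γ}) → 0` as `h → 0⁺`;
`∂_h F(h,x) → 0` as `h → 0⁺`; and consequently `F`, extended by `1` for `h ≤ 0`, is `C¹`
on `{(h,x) : h ≤ 0, or h > 0 and x > x_h}`. -/
theorem stmt_17 (β ainf γ : ℝ)
    (hβ : -1 < β) (hβ1 : β < 1) (ha : 0 < ainf) (hγ : 2 / (1 - β) ≤ γ)
    (b b' f f' f'' : ℝ → ℝ)
    (hbpos : ∀ x : ℝ, 0 < x → 0 < b x)
    (hbnonneg : ∀ x : ℝ, 0 ≤ x → 0 ≤ b x)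
    (hbC2 : ContDiffOn ℝ 2 b (Set.Ioi 0))
    (hb' : ∀ x : ℝ, 0 < x → HasDerivAt b (b' x) x)
    (hbf : ∀ x : ℝ, 0 < x → b x = ainf * x ^ β + f x)
    (hf' : ∀ x : ℝ, 0 < x → HasDerivAt f (f' x) x)
    (hf'' : ∀ x : ℝ, 0 < x → HasDerivAt f' (f'' x) x)
    (hfo : Tendsto (fun x : ℝ => f x / x ^ ((3 * β - 1) / 2)) atTop (𝓝 0))
    (hf'o : Tendsto (fun x : ℝ => f' x / x ^ ((3 * β - 3) / 2)) atTop (𝓝 0))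
    (hf''o : Tendsto (fun x : ℝ => f'' x / x ^ ((3 * β - 5) / 2)) atTop (𝓝 0))
    (x : ℝ) :
    -- for all sufficiently small `h > 0`, `x > x_h`
    (∀ᶠ h in 𝓝[>] (0:ℝ), -(h ^ (-γ)) / b (h ^ (-γ)) < x) ∧
    -- (i) `∂ₓF(h,x) = b′(b(h^{-γ})·x + h^{-γ}) → 0` as `h → 0⁺`
    Tendsto (fun h : ℝ => b' (b (h ^ (-γ)) * x + h ^ (-γ))) (𝓝[>] 0) (𝓝 0) ∧
    -- (ii) `∂_h F(h,x) → 0` as `h → 0⁺`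
    (∃ Fh : ℝ → ℝ,
      (∀ᶠ h in 𝓝[>] (0:ℝ),
        HasDerivAt (fun h' : ℝ => b (b (h' ^ (-γ)) * x + h' ^ (-γ)) / b (h' ^ (-γ)))
          (Fh h) h) ∧
      Tendsto Fh (𝓝[>] 0) (𝓝 0)) ∧
    -- consequently the extended `F` is `C¹` on `{h ≤ 0} ∪ {h > 0, x' > x_h}`
    ContDiffOn ℝ 1
      (fun p : ℝ × ℝ =>
        if p.1 ≤ 0 then 1
        else b (b (p.1 ^ (-γ)) * p.2 + p.1 ^ (-γ)) / b (p.1 ^ (-γ)))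
      {p : ℝ × ℝ | p.1 ≤ 0 ∨ (0 < p.1 ∧ -(p.1 ^ (-γ)) / b (p.1 ^ (-γ)) < p.2)} := by
  obtain ⟨b'', Y, K, c, hY, hK, hc, H⟩ := aux_b β ainf hβ1 ha b b' f f' f'' hb' hbf hf' hf''
    hfo hf'o hf''o
  have hally := fun M hM => aux_y β M hβ1 hM b b' b'' Y K c hY hK hc hb' H
  have hall := fun (M : ℝ) (hM : 0 < M) => aux_h β γ M hβ1 hγ b b' hb' (hally M hM).choose
    (hally M hM).choose_spec.1 (hally M hM).choose_spec.2
  clear H hally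
  have hpos : ∀ p : ℝ × ℝ, 0 < p.1 → -(p.1 ^ (-γ)) / b (p.1 ^ (-γ)) < p.2 →
      ContDiffAt ℝ 1 (fun p : ℝ × ℝ =>
        if p.1 ≤ 0 then 1
        else b (b (p.1 ^ (-γ)) * p.2 + p.1 ^ (-γ)) / b (p.1 ^ (-γ))) p := by
    intro p hp hx
    have yp : 0 < p.1 ^ (-γ) := Real.rpow_pos_of_pos hp _
    have byp := hbpos _ yp
    have hbC : ∀ t : ℝ, 0 < t → ContDiffAt ℝ 1 b t := fun t ht =>
      (hbC2.contDiffAt (Ioi_mem_nhds ht)).of_le (by norm_num)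
    have hzp : 0 < b (p.1 ^ (-γ)) * p.2 + p.1 ^ (-γ) := by
      rw [div_lt_iff₀ byp] at hx; linarith
    have c1 : ContDiffAt ℝ 1 (fun p : ℝ × ℝ => p.1 ^ (-γ)) p :=
      contDiffAt_fst.rpow_const_of_ne hp.ne'
    have c2 : ContDiffAt ℝ 1 (fun p : ℝ × ℝ => b (p.1 ^ (-γ))) p := (hbC _ yp).comp p c1
    have c3 : ContDiffAt ℝ 1 (fun p : ℝ × ℝ => b (b (p.1 ^ (-γ)) * p.2 + p.1 ^ (-γ))) p :=
      ContDiffAt.comp p (g := b) (hbC _ hzp) ((c2.mul contDiffAt_snd).add c1)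
    refine (c3.div c2 byp.ne').congr_of_eventuallyEq ?_
    filter_upwards [continuous_fst.continuousAt.eventually (lt_mem_nhds hp)] with q hq
    rw [if_neg (not_le.2 hq)]
    rfl
  obtain ⟨Fh, C, hC, δ, hδ, H⟩ := hall (|x| + 1) (by positivity)
  have hev : ∀ᶠ h in 𝓝[>] (0:ℝ), 0 < h ∧ h < δ := Ioo_mem_nhdsGT hδ
  have hx : |x| ≤ |x| + 1 := by linarith
  have hid : Tendsto (fun h : ℝ => h) (𝓝[>] 0) (𝓝 0) := tendsto_id.mono_left nhdsWithin_le_nhds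
  refine ⟨?_, ?_, ⟨Fh x, ?_, ?_⟩, ?_⟩
  · filter_upwards [hev] with h hh using (H h hh.1 hh.2 x hx).1
  · refine squeeze_zero_norm' (a := fun h => C * h ^ 2) ?_ (by simpa using (hid.pow 2).const_mul C)
    filter_upwards [hev] with h hh using (H h hh.1 hh.2 x hx).2.2.1
  · filter_upwards [hev] with h hh using (H h hh.1 hh.2 x hx).2.2.2.2.1
  · refine squeeze_zero_norm' (a := fun h => C * h) ?_ (by simpa using hid.const_mul C)
    filter_upwards [hev] with h hh using (H h hh.1 hh.2 x hx).2.2.2.1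
  · clear hx hev H hδ hC
    rintro p hp
    refine ContDiffAt.contDiffWithinAt ?_
    rcases lt_trichotomy p.1 0 with h | h | h
    · refine (contDiffAt_const (c := (1:ℝ))).congr_of_eventuallyEq ?_
      filter_upwards [continuous_fst.continuousAt.eventually (gt_mem_nhds h)] with q hq
      rw [if_pos (le_of_lt hq)]
    · obtain ⟨Fh, C, hC, δ, hδ, H⟩ := hall (|p.2| + 1) (by positivity)
      obtain ⟨p1, p2⟩ := p
      simp only at h H
      subst h
      refine aux_zero _ Fh (fun x h => b' (b (h ^ (-γ)) * x + h ^ (-γ))) p2 C δ hC hδ ?_ ?_ ?_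
      · intro q hq
        exact if_pos hq
      · intro q h1 h2 h3
        exact hpos q h1 (H q.1 h1 h2 q.2 h3).1
      · intro h h1 h2 x h3
        obtain ⟨-, a1, a2, a3, a4, a5⟩ := H h h1 h2 x h3
        refine ⟨?_, a2, a3, ?_, ?_⟩
        · simpa only [if_neg (not_le.2 h1)] using a1
        · refine a4.congr_of_eventuallyEq ?_
          filter_upwards [lt_mem_nhds h1] with q hq
          exact if_neg (not_le.2 hq)
        · simpa only [if_neg (not_le.2 h1)] using a5
    · rcases hp with hp | hp
      · exact absurd h (not_lt.2 hp)
      · exact hpos p hp.1 hp.2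
end

section
/- Assume (D₂⁺) and fix γ ≥ 2/(1−β). Let σ : D → ℝ^{(1+d)×(1+d)} be bounded and continuously differentiable, and suppose there exists ε > 0 such that for all indices i, j, k ∈ {0,1,…,d}, sup_{u ∈ 𝔹^d} x^{β+ε}·|∂_i σ_{j,k}(x, b(x)·u)| → 0 as x → ∞ (Assumption (S), where ∂₀ = ∂_x and ∂_i = ∂_{y_i} for i ≥ 1). Then for every fixed x ∈ ℝ and y ∈ ℝ^d with |y| < 1, and all indices i, j, k ∈ {0,1,…,d}, lim_{h→0⁺} b(h^{−γ})·|∂_i σ_{j,k}( b(h^{−γ})·x + h^{−γ}, b(h^{−γ})·y )| = 0. (For each such fixed (x,y) the argument point lies in D for all sufficiently small h > 0.) -/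
open Filter Topology

/-- Under (D₂⁺) and assumption (S) on the partial derivatives of the
diffusion matrix `σ`, for every fixed `x ∈ ℝ` and `y` with `‖y‖ < 1`, the rescaled
partial derivatives vanish in the limit:
`b(h^{-γ})·|∂ᵢσⱼₖ(b(h^{-γ})·x + h^{-γ}, b(h^{-γ})·y)| → 0` as `h → 0⁺`
(and the argument point lies in `D` for all sufficiently small `h > 0`). -/
theorem stmt_18 (d : ℕ) (hd : 1 ≤ d) (β ainf γ ε : ℝ)
    (hβ : -1 < β) (hβ1 : β < 1) (ha : 0 < ainf) (hγ : 2 / (1 - β) ≤ γ) (hε : 0 < ε)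
    (b f f' f'' : ℝ → ℝ)
    (hbpos : ∀ x : ℝ, 0 < x → 0 < b x)
    (hbnonneg : ∀ x : ℝ, 0 ≤ x → 0 ≤ b x)
    (hbC2 : ContDiffOn ℝ 2 b (Set.Ioi 0))
    (hbf : ∀ x : ℝ, 0 < x → b x = ainf * x ^ β + f x)
    (hf' : ∀ x : ℝ, 0 < x → HasDerivAt f (f' x) x)
    (hf'' : ∀ x : ℝ, 0 < x → HasDerivAt f' (f'' x) x)
    (hfo : Tendsto (fun x : ℝ => f x / x ^ ((3 * β - 1) / 2)) atTop (𝓝 0))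
    (hf'o : Tendsto (fun x : ℝ => f' x / x ^ ((3 * β - 3) / 2)) atTop (𝓝 0))
    (hf''o : Tendsto (fun x : ℝ => f'' x / x ^ ((3 * β - 5) / 2)) atTop (𝓝 0))
    -- the diffusion matrix `σ`, bounded and continuously differentiable, and its
    -- partial derivatives `Dσ i = ∂ᵢσ` (`∂₀ = ∂ₓ`, `∂ᵢ = ∂_{yᵢ}` for `i ≥ 1`)
    (σm : ℝ → EuclideanSpace ℝ (Fin d) → Matrix (Fin (d + 1)) (Fin (d + 1)) ℝ)
    (Dσ : Fin (d + 1) → ℝ → EuclideanSpace ℝ (Fin d) →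
      Matrix (Fin (d + 1)) (Fin (d + 1)) ℝ)
    (hσbdd : ∃ K : ℝ, ∀ x : ℝ, ∀ y : EuclideanSpace ℝ (Fin d), ‖y‖ ≤ b x →
      ∀ j k : Fin (d + 1), |σm x y j k| ≤ K)
    (hD0 : ∀ (x : ℝ) (y : EuclideanSpace ℝ (Fin d)) (j k : Fin (d + 1)),
      HasDerivAt (fun x' : ℝ => σm x' y j k) (Dσ 0 x y j k) x)
    (hDi : ∀ (i : Fin d) (x : ℝ) (y : EuclideanSpace ℝ (Fin d)) (j k : Fin (d + 1)),
      HasDerivAt (fun t : ℝ => σm x (y + t • EuclideanSpace.single i (1:ℝ)) j k)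
        (Dσ i.succ x y j k) 0)
    (hDcont : ∀ (i j k : Fin (d + 1)),
      Continuous fun p : ℝ × EuclideanSpace ℝ (Fin d) => Dσ i p.1 p.2 j k)
    -- Assumption (S)
    (hS : ∀ (i j k : Fin (d + 1)), ∀ δ : ℝ, 0 < δ → ∃ X : ℝ, ∀ x ≥ X,
      ∀ u : EuclideanSpace ℝ (Fin d), ‖u‖ ≤ 1 →
        x ^ (β + ε) * |Dσ i x (b x • u) j k| ≤ δ)
    (x : ℝ) (y : EuclideanSpace ℝ (Fin d)) (hy : ‖y‖ < 1) :
    (∀ᶠ h in 𝓝[>] (0:ℝ),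
        0 ≤ b (h ^ (-γ)) * x + h ^ (-γ) ∧
        ‖b (h ^ (-γ)) • y‖ ≤ b (b (h ^ (-γ)) * x + h ^ (-γ))) ∧
    ∀ i j k : Fin (d + 1),
      Tendsto (fun h : ℝ =>
          b (h ^ (-γ)) *
            |Dσ i (b (h ^ (-γ)) * x + h ^ (-γ)) (b (h ^ (-γ)) • y) j k|)
        (𝓝[>] 0) (𝓝 0) := by
  have hb1 : Tendsto (fun s : ℝ => b s / s ^ β) atTop (𝓝 ainf) := by
    have h1 : Tendsto (fun s : ℝ => s ^ (-((1 - β) / 2))) atTop (𝓝 0) :=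
      tendsto_rpow_neg_atTop (by linarith)
    have h2 := (hfo.mul h1).const_add ainf
    simp only [mul_zero, add_zero] at h2
    refine h2.congr' ?_
    filter_upwards [eventually_gt_atTop 0] with s hs
    rw [hbf s hs]
    have e : s ^ ((3 * β - 1) / 2) = s ^ β * s ^ (-((1 - β) / 2)) := by
      rw [← Real.rpow_add hs]; congr 1; ring
    have p1 := Real.rpow_pos_of_pos hs β
    have p2 := Real.rpow_pos_of_pos hs (-((1 - β) / 2))
    rw [e]
    field_simp
  have hb2 : Tendsto (fun s : ℝ => b s / s) atTop (𝓝 0) := by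
    have h1 : Tendsto (fun s : ℝ => s ^ (-(1 - β))) atTop (𝓝 0) :=
      tendsto_rpow_neg_atTop (by linarith)
    have h2 := hb1.mul h1
    simp only [mul_zero] at h2
    refine h2.congr' ?_
    filter_upwards [eventually_gt_atTop 0] with s hs
    have e : s ^ (-(1 - β)) = s ^ β / s := by
      rw [show -(1 - β) = β - 1 by ring, Real.rpow_sub_one hs.ne']
    have p1 := Real.rpow_pos_of_pos hs β
    rw [e]
    field_simp
  have hzs : Tendsto (fun s : ℝ => (b s * x + s) / s) atTop (𝓝 1) := by
    have h2 := (hb2.mul_const x).add_const 1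
    simp only [zero_mul, zero_add] at h2
    refine h2.congr' ?_
    filter_upwards [eventually_gt_atTop 0] with s hs
    field_simp
  have hz : Tendsto (fun s : ℝ => b s * x + s) atTop atTop := by
    refine (hzs.pos_mul_atTop one_pos tendsto_id).congr' ?_
    filter_upwards [eventually_gt_atTop 0] with s hs
    simp only [id]
    field_simp
  have hzβ : Tendsto (fun s : ℝ => ((b s * x + s) / s) ^ β) atTop (𝓝 1) := by
    have := hzs.rpow_const (p := β) (Or.inl one_ne_zero)
    simpa using this
  have hbz : Tendsto (fun s : ℝ => b (b s * x + s) / (b s * x + s) ^ β) atTop (𝓝 ainf) :=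
    hb1.comp hz
  have hr : Tendsto (fun s : ℝ => b s / b (b s * x + s)) atTop (𝓝 1) := by
    have h2 := hb1.div (hbz.mul hzβ) (by simpa using ha.ne')
    rw [mul_one, div_self ha.ne'] at h2
    refine h2.congr' ?_
    filter_upwards [eventually_gt_atTop 0, hz.eventually_gt_atTop 0] with s hs hzp
    have p1 := Real.rpow_pos_of_pos hs β
    have p2 := Real.rpow_pos_of_pos hzp β
    have p3 := hbpos _ hzp
    simp only [Pi.div_apply]
    rw [Real.div_rpow hzp.le hs.le]
    field_simp
  have hq : Tendsto (fun s : ℝ => b s / (b s * x + s) ^ (β + ε)) atTop (𝓝 0) := by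
    have h2 := (hr.mul hbz).mul ((tendsto_rpow_neg_atTop hε).comp hz)
    simp only [mul_zero] at h2
    refine h2.congr' ?_
    filter_upwards [hz.eventually_gt_atTop 0] with s hzp
    have p2 := Real.rpow_pos_of_pos hzp β
    have p4 := Real.rpow_pos_of_pos hzp ε
    have p3 := hbpos _ hzp
    simp only [Function.comp]
    rw [Real.rpow_neg hzp.le, Real.rpow_add hzp]
    field_simp
  have hry : ∀ᶠ s in atTop, b s / b (b s * x + s) * ‖y‖ ≤ 1 := by
    have h2 := hr.mul_const ‖y‖
    rw [one_mul] at h2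
    filter_upwards [h2.eventually_lt_const hy] with s hs using hs.le
  have hγ0 : 0 < γ := lt_of_lt_of_le (div_pos two_pos (by linarith)) hγ
  have hh : Tendsto (fun h : ℝ => h ^ (-γ)) (𝓝[>] 0) atTop :=
    tendsto_rpow_neg_nhdsGT_zero (by linarith)
  refine ⟨?_, fun i j k => ?_⟩
  · refine hh.eventually (p := fun s => 0 ≤ b s * x + s ∧ ‖b s • y‖ ≤ b (b s * x + s)) ?_
    filter_upwards [eventually_gt_atTop 0, hz.eventually_gt_atTop 0, hry] with s hs hzp h3
    refine ⟨hzp.le, ?_⟩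
    have p3 := hbpos _ hzp
    rw [norm_smul, Real.norm_of_nonneg (hbpos s hs).le]
    rw [div_mul_eq_mul_div, div_le_one p3] at h3
    exact h3
  · refine Tendsto.comp (g := fun s : ℝ => b s * |Dσ i (b s * x + s) (b s • y) j k|) ?_ hh
    rw [Metric.tendsto_nhds]
    intro δ hδ
    obtain ⟨X, hX⟩ := hS i j k (δ / 2) (half_pos hδ)
    filter_upwards [eventually_gt_atTop 0, hz.eventually_gt_atTop 0, hry,
      hz.eventually_ge_atTop X, hq.eventually_lt_const one_pos] with s hs hzp h3 h4 h5
    have p0 := hbpos s hs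
    have p3 := hbpos _ hzp
    have p4 := Real.rpow_pos_of_pos hzp (β + ε)
    have key := hX _ h4 ((b s / b (b s * x + s)) • y) (by
      rw [norm_smul, Real.norm_of_nonneg (div_pos p0 p3).le]; exact h3)
    rw [smul_smul, mul_div_cancel₀ _ p3.ne'] at key
    rw [div_lt_one p4] at h5
    rw [Real.dist_eq, sub_zero, abs_of_nonneg (mul_nonneg p0.le (abs_nonneg _))]
    have := mul_le_mul_of_nonneg_right h5.le (abs_nonneg (Dσ i (b s * x + s) (b s • y) j k))
    linarith
end

section
/- Fix β ∈ (−1,1) and c₁ > 0, and let x : (0,∞) → ℝ satisfy x(t)/t^{1/(1+β)} → c₁ as t → ∞. Then t^{β/(1+β)}·( x(t) − c₁·t^{1/(1+β)} ) − (t+1)^{β/(1+β)}·( x(t) − c₁·(t+1)^{1/(1+β)} ) → c₁/(1+β) as t → ∞. In particular, since c₁/(1+β) ≠ 0, it is impossible that both t^{β/(1+β)}·( x(t) − c₁·t^{1/(1+β)} ) → 0 and (t+1)^{β/(1+β)}·( x(t) − c₁·(t+1)^{1/(1+β)} ) → 0 as t → ∞. -/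
open Filter Topology

/-- If `x(t)/t^{1/(1+β)} → c₁ > 0` with `β ∈ (-1,1)`, then
`t^{β/(1+β)}(x(t) - c₁ t^{1/(1+β)}) - (t+1)^{β/(1+β)}(x(t) - c₁ (t+1)^{1/(1+β)})
  → c₁/(1+β) ≠ 0`;
in particular the two recentred quantities cannot both tend to `0`. -/
theorem stmt_19 (β c₁ : ℝ) (hβ : -1 < β) (hβ1 : β < 1) (hc₁ : 0 < c₁)
    (x : ℝ → ℝ)
    (hx : Tendsto (fun t : ℝ => x t / t ^ (1 / (1 + β))) atTop (𝓝 c₁)) :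
    Tendsto (fun t : ℝ =>
        t ^ (β / (1 + β)) * (x t - c₁ * t ^ (1 / (1 + β)))
          - (t + 1) ^ (β / (1 + β)) * (x t - c₁ * (t + 1) ^ (1 / (1 + β))))
      atTop (𝓝 (c₁ / (1 + β))) ∧
    c₁ / (1 + β) ≠ 0 ∧
    ¬ (Tendsto (fun t : ℝ => t ^ (β / (1 + β)) * (x t - c₁ * t ^ (1 / (1 + β))))
          atTop (𝓝 0) ∧
        Tendsto (fun t : ℝ =>
            (t + 1) ^ (β / (1 + β)) * (x t - c₁ * (t + 1) ^ (1 / (1 + β))))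
          atTop (𝓝 0)) := by
  have h1 : (1 + β) ≠ 0 := by linarith
  have hpos : 0 < 1 + β := by linarith
  have key : Tendsto (fun t : ℝ =>
        t ^ (β / (1 + β)) * (x t - c₁ * t ^ (1 / (1 + β)))
          - (t + 1) ^ (β / (1 + β)) * (x t - c₁ * (t + 1) ^ (1 / (1 + β))))
      atTop (𝓝 (c₁ / (1 + β))) := by
    have hab : β / (1 + β) + 1 / (1 + β) = 1 := by field_simp; ring
    have hlim : c₁ / (1 + β) = c₁ - c₁ * (β / (1 + β)) := by field_simp; ring
    rw [hlim]
    generalize β / (1 + β) = b at *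
    generalize 1 / (1 + β) = a at *
    have hd : HasDerivAt (fun s : ℝ => s ^ b) b 1 := by
      have := Real.hasDerivAt_rpow_const (x := 1) (p := b) (Or.inl one_ne_zero)
      simpa using this
    have hs := hd.tendsto_slope_zero_right.comp tendsto_inv_atTop_nhdsGT_zero
    have hm := (tendsto_const_nhds (x := c₁)).sub (hx.mul hs)
    refine hm.congr' ?_
    filter_upwards [eventually_gt_atTop (0 : ℝ)] with t ht
    have ht1 : 0 < t + 1 := by linarith
    have e1 : t ^ b * t ^ a = t := by rw [← Real.rpow_add ht, hab, Real.rpow_one]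
    have e2 : (t + 1) ^ b * (t + 1) ^ a = t + 1 := by
      rw [← Real.rpow_add ht1, hab, Real.rpow_one]
    have e3 : (1 + t⁻¹) ^ b = (t + 1) ^ b / t ^ b := by
      rw [← Real.div_rpow ht1.le ht.le]
      congr 1
      field_simp
    have pa : 0 < t ^ a := Real.rpow_pos_of_pos ht a
    have pb : 0 < t ^ b := Real.rpow_pos_of_pos ht b
    simp only [Function.comp_apply, smul_eq_mul, inv_inv, Real.one_rpow, e3]
    have e4 : x t / t ^ a * (t * ((t + 1) ^ b / t ^ b - 1)) = x t * ((t + 1) ^ b - t ^ b) := by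
      calc _ = x t / t ^ a * ((t ^ b * t ^ a) * ((t + 1) ^ b / t ^ b - 1)) := by rw [e1]
        _ = _ := by field_simp
    rw [e4]
    linear_combination c₁ * e1 - c₁ * e2
  have hne : c₁ / (1 + β) ≠ 0 := (div_pos hc₁ hpos).ne'
  refine ⟨key, hne, ?_⟩
  rintro ⟨hA, hB⟩
  have h0 := hA.sub hB
  rw [sub_zero] at h0
  exact hne (tendsto_nhds_unique key h0)
end
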